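/- arXiv:1509.05905 — 5 statements merged into one kernel-verified Lean document; each statement's English description precedes it below -/
import Mathlib

section
/- Let n ≥ 2, let U ⊆ ℝ^n be an open set, and let f : U → ℝ be a function. Assume that for all vectors a, v, w ∈ ℝ^n with v and w linearly independent, the function (s,t) ↦ f(a + s·v + t·w) is real-analytic on the open set {(s,t) ∈ ℝ² : a + s·v + t·w ∈ U}. Then f is real-analytic on U. (Theorem 8.3, Bochnak–Siciak.) -/
open Polynomial in
theorem bs_multilin_line {E : Type*} [AddCommGroup E] [Module ℝ E] {k : ℕ}
    (M : MultilinearMap ℝ (fun _ : Fin k => E) ℝ) (x y : E) :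
    ∃ q : ℝ[X], q.natDegree ≤ k ∧ q.coeff k = M (fun _ => y) ∧
      ∀ t : ℝ, q.eval t = M (fun _ => x + t • y) := by
  classical
  refine ⟨∑ s : Finset (Fin k), C (M (s.piecewise (fun _ => x) (fun _ => y))) * X ^ (k - s.card),
    ?_, ?_, ?_⟩
  · apply natDegree_sum_le_of_forall_le
    intro s _
    exact (natDegree_C_mul_X_pow_le _ _).trans (Nat.sub_le _ _)
  · rw [finsetSum_coeff, Finset.sum_eq_single ∅]
    · simp
    · intro s _ hs
      have h1 : 0 < s.card := Finset.card_pos.mpr (Finset.nonempty_iff_ne_empty.mpr hs)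
      have h2 : s.card ≤ k := by simpa using Finset.card_le_univ s
      rw [coeff_C_mul_X_pow, if_neg (by omega)]
    · simp
  · intro t
    have : (fun _ : Fin k => x + t • y) = (fun _ => x) + (fun _ => t • y) := rfl
    rw [this, M.map_add_univ, eval_finsetSum]
    refine Finset.sum_congr rfl fun s _ => ?_
    have h3 : s.piecewise (fun _ => x) (fun _ : Fin k => t • y) =
        fun i => (if i ∈ s then (1:ℝ) else t) • (s.piecewise (fun _ => x) (fun _ => y)) i := by
      funext i
      by_cases hi : i ∈ s <;> simp [hi]
    rw [h3, M.map_smul_univ]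
    have h4 : ∏ i : Fin k, (if i ∈ s then (1:ℝ) else t) = t ^ (k - s.card) := by
      rw [Finset.prod_ite]
      simp only [Finset.prod_const_one, one_mul, Finset.prod_const]
      congr 1
      have : (Finset.univ.filter (fun i => i ∉ s)) = sᶜ := by ext; simp
      rw [this, Finset.card_compl]; simp
    rw [h4, eval_mul, eval_C, eval_pow, eval_X, smul_eq_mul, mul_comm]

theorem bs_polarization {E : Type*} [AddCommGroup E] [Module ℝ E] {k : ℕ}
    (M : MultilinearMap ℝ (fun _ : Fin k => E) ℝ)
    (hM : ∀ (v : Fin k → E) (σ : Equiv.Perm (Fin k)), M (v ∘ σ) = M v) (x : Fin k → E) :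
    (k.factorial : ℝ) * M x =
      ∑ S : Finset (Fin k), (-1 : ℝ) ^ (Sᶜ).card * M (fun _ => ∑ i ∈ S, x i) := by
  classical
  have h1 : ∀ S : Finset (Fin k), M (fun _ => ∑ i ∈ S, x i) =
      ∑ r : Fin k → Fin k, if (∀ i, r i ∈ S) then M (fun i => x (r i)) else 0 := by
    intro S
    rw [M.map_sum_finset (fun _ j => x j) (fun _ => S), ← Finset.sum_filter]
    congr 1
    ext r; simp [Fintype.mem_piFinset]
  simp_rw [h1, Finset.mul_sum]
  rw [Finset.sum_comm]
  have h2 : ∀ r : Fin k → Fin k,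
      (∑ S : Finset (Fin k), (-1 : ℝ) ^ (Sᶜ).card *
        (if (∀ i, r i ∈ S) then M (fun i => x (r i)) else 0)) =
      if Function.Bijective r then M x else 0 := by
    intro r
    have e1 : (∑ S : Finset (Fin k), (-1 : ℝ) ^ (Sᶜ).card *
        (if (∀ i, r i ∈ S) then M (fun i => x (r i)) else 0)) =
        (∑ T ∈ ((Finset.univ.image r)ᶜ).powerset, (-1 : ℝ) ^ T.card) * M (fun i => x (r i)) := by
      rw [Finset.sum_mul]
      simp only [mul_ite, mul_zero]
      rw [← Finset.sum_filter]
      refine Finset.sum_bij' (fun S _ => Sᶜ) (fun S _ => Sᶜ) ?_ ?_ (by simp) (by simp) (by simp)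
      all_goals
        intro T
        simp only [Finset.mem_filter, Finset.mem_univ, true_and, Finset.mem_compl,
          Finset.mem_powerset, Finset.subset_iff, Finset.mem_image, not_exists]
      · intro h j hj i hi
        exact hj (hi ▸ h i)
      · intro h i hi
        exact h hi i rfl
    rw [e1]
    have e2 : (∑ T ∈ ((Finset.univ.image r)ᶜ).powerset, (-1 : ℝ) ^ T.card) =
        if (Finset.univ.image r)ᶜ = ∅ then 1 else 0 := by
      have := @Finset.sum_powerset_neg_one_pow_card _ _ ((Finset.univ.image r)ᶜ)
      exact_mod_cast congrArg (Int.cast : ℤ → ℝ) this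
    rw [e2]
    have e3 : (Finset.univ.image r)ᶜ = ∅ ↔ Function.Bijective r := by
      rw [← Finite.surjective_iff_bijective, Finset.compl_eq_empty_iff,
        Finset.eq_univ_iff_forall]
      simp [Function.Surjective]
    by_cases hb : Function.Bijective r
    · rw [if_pos (e3.mpr hb), if_pos hb, one_mul]
      exact hM x (Equiv.ofBijective r hb)
    · rw [if_neg (fun h => hb (e3.mp h)), if_neg hb, zero_mul]
  have h2' := Finset.sum_congr (rfl : (Finset.univ : Finset (Fin k → Fin k)) = Finset.univ)
    (fun r _ => h2 r)
  rw [h2']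
  rw [← Finset.sum_filter, Finset.sum_const, nsmul_eq_mul]
  congr 2
  rw [← Fintype.card_subtype]
  let e : {r : Fin k → Fin k // Function.Bijective r} ≃ Equiv.Perm (Fin k) :=
    { toFun := fun r => Equiv.ofBijective r.1 r.2
      invFun := fun σ => ⟨σ, σ.bijective⟩
      left_inv := fun r => rfl
      right_inv := fun σ => by ext; rfl }
  rw [Fintype.card_congr e, Fintype.card_perm, Fintype.card_fin]

open Polynomial in
theorem bs_leading {k : ℕ} (q : ℝ[X]) (hq : q.natDegree ≤ k) (A r : ℝ) (hr : 0 < r)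
    (hA : ∀ t : ℝ, |t| ≤ r → |q.eval t| ≤ A) :
    |q.coeff k| ≤ A * Real.exp 1 * (2 * Real.exp 1 / r) ^ k := by
  have hA0 : 0 ≤ A := (abs_nonneg _).trans (hA 0 (by simpa using hr.le))
  set h : ℝ := r / (k + 1) with hh
  have hk : (0:ℝ) < k + 1 := by positivity
  have hh0 : 0 < h := by positivity
  set p := q.comp (C h * X) with hp
  have hpk : p.coeff k = q.coeff k * h ^ k := comp_C_mul_X_coeff
  have hpd : p.natDegree ≤ k := by
    refine natDegree_le_iff_coeff_eq_zero.mpr fun j hj => ?_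
    rw [hp, comp_C_mul_X_coeff, coeff_eq_zero_of_natDegree_lt (by omega), zero_mul]
  have key : (fwdDiff (1:ℝ))^[k] p.eval 0 = p.coeff k * k.factorial := by
    rcases hpd.lt_or_eq with hlt | heq
    · rw [Polynomial.fwdDiff_iter_eq_zero_of_degree_lt hlt, coeff_eq_zero_of_natDegree_lt hlt]
      simp
    · have := congrFun (Polynomial.fwdDiff_iter_degree_eq_factorial p) 0
      rw [heq] at this
      rw [this, leadingCoeff, heq]
      simp
  rw [fwdDiff_iter_eq_sum_shift] at key
  have hb : |p.coeff k * k.factorial| ≤ 2 ^ k * A := by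
    rw [← key]
    refine (Finset.abs_sum_le_sum_abs _ _).trans ?_
    have : ∀ j ∈ Finset.range (k+1), |((-1 : ℤ) ^ (k - j) * (k.choose j : ℤ)) • p.eval (0 + j • (1:ℝ))|
        ≤ (k.choose j : ℝ) * A := by
      intro j hj
      rw [zsmul_eq_mul, abs_mul]
      push_cast
      rw [abs_mul, abs_pow, abs_neg, abs_one, one_pow, one_mul, Nat.abs_cast]
      gcongr
      rw [hp, eval_comp]
      apply hA
      simp only [zero_add, nsmul_eq_mul, mul_one, eval_mul, eval_C, eval_X]
      rw [abs_of_nonneg (by positivity), hh, div_mul_eq_mul_div, div_le_iff₀ hk]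
      gcongr
      have : j < k + 1 := Finset.mem_range.mp hj
      exact_mod_cast this.le
    refine (Finset.sum_le_sum this).trans ?_
    rw [← Finset.sum_mul]
    have := Nat.sum_range_choose k
    rw [← Nat.cast_sum, this]; simp
  rw [hpk, abs_mul, abs_mul, abs_of_pos (pow_pos hh0 k), Nat.abs_cast] at hb
  have hexp := Real.pow_div_factorial_le_exp ((k:ℝ)+1) hk.le k
  have hf : (0:ℝ) < k.factorial := by exact_mod_cast k.factorial_pos
  have : |q.coeff k| ≤ 2 ^ k * A / r ^ k * (((k:ℝ)+1)^k / k.factorial) := by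
    rw [hh, div_pow] at hb
    rw [div_mul_div_comm, le_div_iff₀ (by positivity)]
    have h5 : |q.coeff k| * (r ^ k / ((k:ℝ)+1)^k) * k.factorial * ((k:ℝ)+1)^k =
       |q.coeff k| * (r ^ k * k.factorial) := by field_simp
    rw [← h5]
    gcongr
  refine this.trans ?_
  calc _ ≤ 2 ^ k * A / r ^ k * Real.exp ((k:ℝ)+1) := by gcongr
    _ = _ := by
      rw [Real.exp_add, div_pow, mul_pow, ← Real.exp_nat_mul, mul_one]; ring

open Polynomial in
theorem bs_sep_poly {n k : ℕ} (s : Finset (Fin n)) : ∀ (P : (Fin n → ℝ) → ℝ),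
    (∀ x i, ∃ q : ℝ[X], q.natDegree ≤ k ∧ ∀ t : ℝ, q.eval t = P (Function.update x i t)) →
    (∀ x y, (∀ i ∈ s, x i = y i) → P x = P y) → ContDiff ℝ ⊤ P := by
  classical
  induction s using Finset.induction_on with
  | empty =>
    intro P _ h2
    have : P = fun _ => P 0 := funext fun x => h2 x 0 (by simp)
    rw [this]; exact contDiff_const
  | insert i s hi ih =>
    intro P h1 h2
    have inj : Set.InjOn (fun j : ℕ => (j:ℝ)) (Finset.range (k+1)) :=
      fun a _ b _ h => Nat.cast_injective h
    have hP : P = fun x => ∑ j ∈ Finset.range (k+1), P (Function.update x i (j:ℝ)) *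
        (Lagrange.basis (Finset.range (k+1)) (fun j : ℕ => (j:ℝ)) j).eval (x i) := by
      funext x
      obtain ⟨q, hq, hq'⟩ := h1 x i
      have := Lagrange.eq_interpolate_of_eval_eq (s := Finset.range (k+1))
        (v := fun j : ℕ => (j:ℝ)) (fun j => P (Function.update x i (j:ℝ))) (f := q) inj
        (by
          rw [Finset.card_range]
          exact lt_of_le_of_lt degree_le_natDegree (by exact_mod_cast Nat.lt_succ_of_le hq))
        (fun j _ => hq' _)
      have h3 := hq' (x i)
      rw [Function.update_eq_self] at h3
      rw [← h3, this, Lagrange.interpolate_apply, eval_finsetSum]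
      simp
    rw [hP]
    refine ContDiff.sum fun j _ => ContDiff.mul ?_ ?_
    · apply ih
      · intro x i'
        by_cases hii : i' = i
        · subst hii
          exact ⟨C (P (Function.update x i' (j:ℝ))), by simp, fun t => by simp⟩
        · obtain ⟨q, hq, hq'⟩ := h1 (Function.update x i (j:ℝ)) i'
          refine ⟨q, hq, fun t => ?_⟩
          rw [hq', Function.update_comm hii]
      · intro x y hxy
        apply h2
        intro i' hi'
        by_cases hii : i' = i
        · subst hii; simp
        · simp only [Function.update_of_ne hii]
          exact hxy i' ((Finset.mem_insert.mp hi').resolve_left hii)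
    · have hb := Polynomial.contDiff_aeval (𝕜 := ℝ)
        (Lagrange.basis (Finset.range (k+1)) (fun j : ℕ => (j:ℝ)) j) ⊤
      simp only [Polynomial.coe_aeval_eq_eval] at hb
      exact hb.comp (contDiff_apply ℝ ℝ i)

theorem bs_pair {E : Type*} [AddCommGroup E] [Module ℝ E] [Module.Finite ℝ E]
    (h : 1 < Module.finrank ℝ E) (v w : E) :
    ∃ v' w' : E, LinearIndependent ℝ ![v', w'] ∧
      ∃ a b c d : ℝ, v = a • v' + b • w' ∧ w = c • v' + d • w' := by
  by_cases hv : v = 0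
  · by_cases hw : w = 0
    · have : Nontrivial E := Module.nontrivial_of_finrank_pos (R := ℝ) (by omega)
      obtain ⟨u, hu⟩ := exists_ne (0:E)
      obtain ⟨y, hy⟩ := exists_linearIndependent_pair_of_one_lt_finrank h hu
      exact ⟨u, y, hy, 0, 0, 0, 0, by simp [hv], by simp [hw]⟩
    · obtain ⟨y, hy⟩ := exists_linearIndependent_pair_of_one_lt_finrank h hw
      exact ⟨w, y, hy, 0, 0, 1, 0, by simp [hv], by simp⟩
  · by_cases hl : LinearIndependent ℝ ![v, w]
    · exact ⟨v, w, hl, 1, 0, 0, 1, by simp, by simp⟩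
    · rw [LinearIndependent.pair_iff' hv] at hl
      push Not at hl
      obtain ⟨c, hc⟩ := hl
      obtain ⟨y, hy⟩ := exists_linearIndependent_pair_of_one_lt_finrank h hv
      exact ⟨v, y, hy, 1, 0, c, 0, by simp, by simp [hc]⟩

/-- homogeneous components of the Taylor expansion at `a` along lines. -/
noncomputable def bsComp {E : Type*} [AddCommGroup E] [Module ℝ E] (f : E → ℝ) (a : E) (k : ℕ)
    (x : E) : ℝ :=
  iteratedDeriv k (fun t : ℝ => f (a + t • x)) 0 / k.factorial

theorem bs_coeff {g : ℝ → ℝ} {p : FormalMultilinearSeries ℝ ℝ ℝ} (hp : HasFPowerSeriesAt g p 0)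
    (k : ℕ) : iteratedDeriv k g 0 / k.factorial = p k (fun _ => 1) := by
  have h := hp.analyticAt.hasFPowerSeriesAt.eq_formalMultilinearSeries hp
  rw [← h]
  simp [FormalMultilinearSeries.ofScalars]

theorem bs_comp_multilin {E : Type*} [AddCommGroup E] [Module ℝ E] (f : E → ℝ) (a v w : E)
    (h : AnalyticAt ℝ (fun st : ℝ × ℝ => f (a + st.1 • v + st.2 • w)) 0) (k : ℕ) :
    ∃ M : MultilinearMap ℝ (fun _ : Fin k => ℝ × ℝ) ℝ, ∀ st : ℝ × ℝ,
      bsComp f a k (st.1 • v + st.2 • w) = M (fun _ => st) := by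
  obtain ⟨p, hp⟩ := h
  refine ⟨(p k).toMultilinearMap, fun st => ?_⟩
  let u : ℝ →L[ℝ] ℝ × ℝ := ContinuousLinearMap.toSpanSingleton ℝ st
  have h1 := HasFPowerSeriesAt.compContinuousLinearMap (u := u) (x := 0) (by simpa using hp)
  have h2 : ((fun st : ℝ × ℝ => f (a + st.1 • v + st.2 • w)) ∘ u) =
      fun t : ℝ => f (a + t • (st.1 • v + st.2 • w)) := by
    funext t
    simp [u, smul_add, mul_smul, add_assoc]
  rw [h2] at h1
  rw [bsComp, bs_coeff h1 k]
  simp [FormalMultilinearSeries.compContinuousLinearMap, u]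

theorem bs_diag {E : Type*} [NormedAddCommGroup E] [NormedSpace ℝ E] {P : E → ℝ} {k : ℕ}
    (hP : ContDiff ℝ ⊤ P) (hh : ∀ (t : ℝ) x, P (t • x) = t ^ k * P x) (x : E) :
    iteratedFDeriv ℝ k P 0 (fun _ => x) = k.factorial * P x := by
  let u : ℝ →L[ℝ] E := ContinuousLinearMap.toSpanSingleton ℝ x
  have h1 := u.iteratedFDeriv_comp_right hP 0 (i := k) le_top
  have h2 : P ∘ u = fun t => t ^ k * P x := by
    funext t; simp [u, hh]
  have h3 : iteratedDeriv k (P ∘ u) 0 = iteratedFDeriv ℝ k P 0 (fun _ => x) := by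
    rw [iteratedDeriv_eq_iteratedFDeriv, h1]
    simp [u]
  rw [← h3, h2]
  simp [Nat.descFactorial_self]

theorem bs_norm_bound {E : Type*} [NormedAddCommGroup E] [NormedSpace ℝ E] {k : ℕ}
    (M : ContinuousMultilinearMap ℝ (fun _ : Fin k => E) ℝ)
    (hM : ∀ (v : Fin k → E) (σ : Equiv.Perm (Fin k)), M (v ∘ σ) = M v) (A : ℝ) (hA0 : 0 ≤ A)
    (hA : ∀ x : E, ‖x‖ ≤ 1 → |M (fun _ => x)| ≤ A) :
    ‖M‖ ≤ A * (2 * Real.exp 1) ^ k := by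
  have hhom : ∀ x : E, |M (fun _ => x)| ≤ A * ‖x‖ ^ k := by
    intro x
    have e : (fun _ : Fin k => x) = fun _ => ‖x‖ • (‖x‖⁻¹ • x) := by
      funext _
      by_cases hx : x = 0
      · simp [hx]
      · rw [smul_smul, mul_inv_cancel₀ (norm_ne_zero_iff.mpr hx), one_smul]
    rw [e, M.map_smul_univ (fun _ => ‖x‖)]
    simp only [Finset.prod_const, Finset.card_univ, Fintype.card_fin, smul_eq_mul]
    rw [abs_mul, abs_of_nonneg (by positivity), mul_comm]
    gcongr
    apply hA
    rw [norm_smul, norm_inv, norm_norm]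
    exact inv_mul_le_one
  have hone : ∀ x : Fin k → E, (∀ i, ‖x i‖ ≤ 1) → |M x| ≤ A * (2 * Real.exp 1) ^ k := by
    intro x hx
    have hp := bs_polarization M.toMultilinearMap hM x
    have hf : (0:ℝ) < k.factorial := by exact_mod_cast k.factorial_pos
    have hb : |(k.factorial : ℝ) * M x| ≤ 2 ^ k * (A * (k:ℝ) ^ k) := by
      have hp' : (k.factorial : ℝ) * M x = _ := hp
      rw [hp']
      refine (Finset.abs_sum_le_sum_abs _ _).trans ?_
      have : ∀ S ∈ (Finset.univ : Finset (Finset (Fin k))),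
          |(-1 : ℝ) ^ (Sᶜ).card * M.toMultilinearMap (fun _ => ∑ i ∈ S, x i)| ≤ A * (k:ℝ) ^ k := by
        intro S _
        rw [abs_mul, abs_pow, abs_neg, abs_one, one_pow, one_mul]
        refine (hhom _).trans ?_
        gcongr
        refine (norm_sum_le _ _).trans ((Finset.sum_le_sum fun i _ => hx i).trans ?_)
        simp only [Finset.sum_const, nsmul_eq_mul, mul_one]
        have := Finset.card_le_univ S
        rw [Fintype.card_fin] at this
        exact_mod_cast this
      refine (Finset.sum_le_sum this).trans ?_
      simp
    rw [abs_mul, Nat.abs_cast] at hb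
    have hexp := Real.pow_div_factorial_le_exp (k:ℝ) (Nat.cast_nonneg k) k
    have h1 : |M x| ≤ 2 ^ k * A * ((k:ℝ) ^ k / k.factorial) := by
      rw [← mul_div_assoc, le_div_iff₀ hf]
      linarith
    refine h1.trans ?_
    calc _ ≤ 2 ^ k * A * Real.exp k := by gcongr
      _ = _ := by rw [mul_pow, ← Real.exp_nat_mul, mul_one]; ring
  refine ContinuousMultilinearMap.opNorm_le_bound (by positivity) fun x => ?_
  by_cases h0 : ∃ i, x i = 0
  · obtain ⟨i, hi⟩ := h0
    rw [M.map_coord_zero i hi, norm_zero]; positivity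
  · push Not at h0
    have e : x = fun i => ‖x i‖ • (‖x i‖⁻¹ • x i) := by
      funext i
      rw [smul_smul, mul_inv_cancel₀ (norm_ne_zero_iff.mpr (h0 i)), one_smul]
    conv_lhs => rw [e]
    rw [M.map_smul_univ (fun i => ‖x i‖), smul_eq_mul, norm_mul, Real.norm_eq_abs,
      abs_of_nonneg (by positivity), mul_comm]
    gcongr
    apply hone
    intro i
    rw [norm_smul, norm_inv, norm_norm]
    exact inv_mul_le_one

theorem bs_main
    (n : ℕ) (hn : 2 ≤ n) (U : Set (Fin n → ℝ)) (hU : IsOpen U)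
    (f : (Fin n → ℝ) → ℝ)
    (hplanes : ∀ a v w : Fin n → ℝ, LinearIndependent ℝ ![v, w] →
      AnalyticOn ℝ (fun st : ℝ × ℝ => f (a + st.1 • v + st.2 • w))
        {st : ℝ × ℝ | a + st.1 • v + st.2 • w ∈ U}) (a : Fin n → ℝ) (ha : a ∈ U) :
    AnalyticAt ℝ f a := by
  have hfr : 1 < Module.finrank ℝ (Fin n → ℝ) := by simp; omega
  have hpl : ∀ v w : Fin n → ℝ, LinearIndependent ℝ ![v, w] → ∀ st : ℝ × ℝ,
      a + st.1 • v + st.2 • w ∈ U →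
      AnalyticAt ℝ (fun st : ℝ × ℝ => f (a + st.1 • v + st.2 • w)) st := by
    intro v w hvw st hst
    have ho : IsOpen {st : ℝ × ℝ | a + st.1 • v + st.2 • w ∈ U} :=
      hU.preimage (by fun_prop)
    exact (ho.analyticOn_iff_analyticOnNhd.mp (hplanes a v w hvw)) st hst
  -- analyticity along lines
  have H3 : ∀ (x : Fin n → ℝ) (t : ℝ), a + t • x ∈ U →
      AnalyticAt ℝ (fun t : ℝ => f (a + t • x)) t := by
    intro x t ht
    obtain ⟨v, w, hvw, c, d, _, _, hx, _⟩ := bs_pair hfr x 0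
    have e : ∀ t : ℝ, a + t • x = a + (t * c) • v + (t * d) • w := by
      intro t; rw [hx, smul_add, smul_smul, smul_smul, add_assoc]
    have h1 := hpl v w hvw (t * c, t * d) (by rw [← e]; exact ht)
    have h2 : AnalyticAt ℝ (fun t : ℝ => ((t * c, t * d) : ℝ × ℝ)) t := by fun_prop
    have h3 := AnalyticAt.fun_comp (f := fun t : ℝ => ((t * c, t * d) : ℝ × ℝ)) h1 h2
    have : (fun t : ℝ => f (a + t • x)) = (fun t : ℝ => f (a + (t * c) • v + (t * d) • w)) :=
      funext fun t => by rw [e]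
    rw [this]; exact h3
  -- structure on planes
  have H0 : ∀ (k : ℕ) (v w : Fin n → ℝ), ∃ (M : MultilinearMap ℝ (fun _ : Fin k => ℝ × ℝ) ℝ)
      (p q : ℝ × ℝ), ∀ s t : ℝ, bsComp f a k (s • v + t • w) = M (fun _ => s • p + t • q) := by
    intro k v w
    obtain ⟨v', w', hvw, b, c, d, e, hv, hw⟩ := bs_pair hfr v w
    obtain ⟨M, hM⟩ := bs_comp_multilin f a v' w' (hpl v' w' hvw 0 (by simpa using ha)) k
    refine ⟨M, (b, c), (d, e), fun s t => ?_⟩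
    rw [← hM]
    congr 1
    rw [hv, hw]
    simp only [Prod.smul_mk, Prod.mk_add_mk, smul_eq_mul]
    module
  have H1 : ∀ (k : ℕ) (v w : Fin n → ℝ), ∃ q : Polynomial ℝ, q.natDegree ≤ k ∧
      q.coeff k = bsComp f a k w ∧ ∀ t : ℝ, q.eval t = bsComp f a k (v + t • w) := by
    intro k v w
    obtain ⟨M, p, q, hM⟩ := H0 k v w
    obtain ⟨Q, h1, h2, h3⟩ := bs_multilin_line M p q
    refine ⟨Q, h1, ?_, fun t => ?_⟩
    · rw [h2]; have := hM 0 1; simpa using this.symm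
    · rw [h3]; have := hM 1 t; simpa using this.symm
  have H2 : ∀ (k : ℕ) (t : ℝ) (x : Fin n → ℝ), bsComp f a k (t • x) = t ^ k * bsComp f a k x := by
    intro k t x
    obtain ⟨M, p, q, hM⟩ := H0 k x 0
    have h1 := hM t 0
    have h2 := hM 1 0
    simp only [zero_smul, add_zero, one_smul] at h1 h2
    rw [h1, h2, M.map_smul_univ (fun _ => t)]
    simp
  have HC : ∀ k, ContDiff ℝ ⊤ (bsComp f a k) := by
    intro k
    refine bs_sep_poly (k := k) Finset.univ _ (fun x i => ?_)
      (fun x y h => by rw [funext fun i => h i (Finset.mem_univ i)])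
    obtain ⟨q, h1, _, h3⟩ := H1 k (Function.update x i 0) (Pi.single i 1)
    refine ⟨q, h1, fun t => ?_⟩
    rw [h3]
    congr 1
    funext j
    by_cases hj : j = i
    · subst hj; simp
    · simp [hj]
  -- pointwise expansion
  have HS : ∀ x : Fin n → ℝ, ∀ᶠ t : ℝ in nhds 0,
      HasSum (fun k => t ^ k * bsComp f a k x) (f (a + t • x)) := by
    intro x
    have h := (H3 x 0 (by simpa using ha)).hasFPowerSeriesAt.eventually_hasSum
    filter_upwards [h] with t ht
    simpa [FormalMultilinearSeries.ofScalars, bsComp, mul_comm] using ht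
  have HB : ∀ x : Fin n → ℝ, ∃ m : ℕ, ∀ k, |bsComp f a k x| ≤ (m:ℝ) ^ (k + 1) := by
    intro x
    obtain ⟨ε, hε, hb⟩ := Metric.eventually_nhds_iff.mp (HS x)
    have hs := hb (y := ε / 2) (by simp [abs_of_pos hε]; linarith)
    have hr : 0 < ε / 2 := by positivity
    obtain ⟨B, hB⟩ := (hs.summable.tendsto_atTop_zero.abs).bddAbove_range
    obtain ⟨m, hm⟩ := exists_nat_ge (max B (ε / 2)⁻¹)
    refine ⟨m, fun k => ?_⟩
    have h1 : |(ε / 2) ^ k * bsComp f a k x| ≤ B := hB ⟨k, rfl⟩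
    rw [abs_mul, abs_of_pos (pow_pos hr k)] at h1
    have h2 : |bsComp f a k x| ≤ (ε / 2)⁻¹ ^ k * B := by
      rw [inv_pow, ← div_eq_inv_mul, le_div_iff₀ (pow_pos hr k), mul_comm]
      exact h1
    rw [pow_succ]
    refine h2.trans ?_
    have hB0 : 0 ≤ B := le_trans (by positivity) h1
    gcongr
    · exact (le_max_right _ _).trans hm
    · exact (le_max_left _ _).trans hm
  -- Baire
  obtain ⟨m, v0, hv0⟩ := nonempty_interior_of_iUnion_of_closed
    (f := fun m : ℕ => {x : Fin n → ℝ | ∀ k, |bsComp f a k x| ≤ (m:ℝ) ^ (k + 1)})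
    (fun m => by
      simp only [Set.ofPred_forall]
      exact isClosed_iInter fun k => isClosed_le (HC k).continuous.abs continuous_const)
    (Set.eq_univ_of_forall fun x => Set.mem_iUnion.mpr (HB x))
  obtain ⟨r, hr, hball⟩ := Metric.nhds_basis_closedBall.mem_iff.mp (mem_interior_iff_mem_nhds.mp hv0)
  have Hb : ∀ k (x : Fin n → ℝ), ‖x‖ ≤ 1 → |bsComp f a k x| ≤
      (m:ℝ) ^ (k + 1) * Real.exp 1 * (2 * Real.exp 1 / r) ^ k := by
    intro k x hx
    obtain ⟨q, h1, h2, h3⟩ := H1 k v0 x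
    rw [← h2]
    refine bs_leading q h1 _ r hr fun t ht => ?_
    rw [h3]
    refine hball ?_ k
    rw [mem_closedBall_iff_norm, add_sub_cancel_left, norm_smul, Real.norm_eq_abs]
    nlinarith [norm_nonneg x, abs_nonneg t]
  -- the power series
  let p : FormalMultilinearSeries ℝ (Fin n → ℝ) ℝ := fun k =>
    (k.factorial : ℝ)⁻¹ • iteratedFDeriv ℝ k (bsComp f a k) 0
  have hpd : ∀ k x, p k (fun _ => x) = bsComp f a k x := by
    intro k x
    have hf : (k.factorial : ℝ) ≠ 0 := by exact_mod_cast k.factorial_ne_zero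
    simp only [p, smul_apply, smul_eq_mul]
    rw [bs_diag (HC k) (H2 k), inv_mul_cancel_left₀ hf]
  set K : ℝ := m * (2 * Real.exp 1 / r) * (2 * Real.exp 1) + 1 with hK
  have hK0 : 0 < K := by positivity
  have hpn : ∀ k, ‖p k‖ ≤ m * Real.exp 1 * K ^ k := by
    intro k
    have := bs_norm_bound (p k) (fun v σ => by
        simp only [p, smul_apply]
        rw [(HC k).contDiffAt.iteratedFDeriv_comp_perm])
        ((m:ℝ) ^ (k + 1) * Real.exp 1 * (2 * Real.exp 1 / r) ^ k) (by positivity)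
        (fun x hx => by rw [hpd]; exact Hb k x hx)
    refine this.trans ?_
    have e : (m:ℝ) ^ (k + 1) * Real.exp 1 * (2 * Real.exp 1 / r) ^ k * (2 * Real.exp 1) ^ k =
        m * Real.exp 1 * (m * (2 * Real.exp 1 / r) * (2 * Real.exp 1)) ^ k := by
      rw [mul_pow, mul_pow]; ring
    rw [e]
    gcongr
    rw [hK]; linarith
  let R : NNReal := ⟨K⁻¹, by positivity⟩
  have hrad : (R : ENNReal) ≤ p.radius := by
    refine p.le_radius_of_bound (m * Real.exp 1) fun k => ?_
    have : (R : ℝ) = K⁻¹ := rfl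
    rw [this]
    calc _ ≤ m * Real.exp 1 * K ^ k * K⁻¹ ^ k := by gcongr; exact hpn k
      _ = _ := by rw [mul_assoc, ← mul_pow, mul_inv_cancel₀ hK0.ne', one_pow, mul_one]
  have hR0 : 0 < (R : ENNReal) := by
    rw [ENNReal.coe_pos]; exact (inv_pos.mpr hK0 : (0:ℝ) < K⁻¹)
  have hps := p.hasFPowerSeriesOnBall (hR0.trans_le hrad)
  have hgan : ∀ y : Fin n → ℝ, ‖y‖ < K⁻¹ → AnalyticAt ℝ p.sum y := by
    intro y hy
    apply hps.analyticAt_of_mem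
    refine Metric.eball_subset_eball hrad ?_
    rw [Metric.eball_coe, mem_ball_zero_iff]
    exact hy
  -- equality
  obtain ⟨ρ, hρ, hρU⟩ := Metric.isOpen_iff.mp hU a ha
  have heq : ∀ y : Fin n → ℝ, ‖y‖ < min ρ K⁻¹ → f (a + y) = p.sum y := by
    intro y hy
    let V : Set ℝ := (fun t : ℝ => t • y) ⁻¹' Metric.ball 0 (min ρ K⁻¹)
    have hV : Convex ℝ V :=
      (convex_ball _ _).is_linear_preimage (IsLinearMap.mk (fun _ _ => add_smul _ _ _)
        (fun _ _ => by simp [mul_smul]))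
    have hVn : ∀ t ∈ V, ‖t • y‖ < min ρ K⁻¹ := fun t ht => by simpa [V] using ht
    have h1 : AnalyticOnNhd ℝ (fun t : ℝ => f (a + t • y)) V := by
      intro t ht
      apply H3
      apply hρU
      rw [mem_ball_iff_norm, add_sub_cancel_left]
      exact (hVn t ht).trans_le (min_le_left _ _)
    have h2 : AnalyticOnNhd ℝ (fun t : ℝ => p.sum (t • y)) V := by
      intro t ht
      refine AnalyticAt.fun_comp (g := p.sum) (f := fun t : ℝ => t • y)
        (hgan _ ((hVn t ht).trans_le (min_le_right _ _))) (by fun_prop)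
    have h0 : (0:ℝ) ∈ V := by simp [V, hρ, hK0]
    have h3 : (fun t : ℝ => f (a + t • y)) =ᶠ[nhds 0] (fun t : ℝ => p.sum (t • y)) := by
      filter_upwards [HS y] with t ht
      rw [← ht.tsum_eq, FormalMultilinearSeries.sum]
      congr 1
      funext k
      rw [hpd, H2]
    have := AnalyticOnNhd.eqOn_of_preconnected_of_eventuallyEq h1 h2 hV.isPreconnected h0 h3
      (show (1:ℝ) ∈ V by simpa [V] using hy)
    simpa using this
  have hfin : AnalyticAt ℝ (fun x => p.sum (x - a)) a := by
    refine AnalyticAt.fun_comp (g := p.sum) (f := fun x => x - a) ?_ (by fun_prop)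
    apply hgan; simpa using hK0
  refine hfin.congr ?_
  have hmin : 0 < min ρ K⁻¹ := lt_min hρ (inv_pos.mpr hK0)
  filter_upwards [Metric.ball_mem_nhds a hmin] with x hx
  rw [mem_ball_iff_norm] at hx
  rw [← heq _ hx]; simp

/-- **Bochnak–Siciak theorem (Theorem 8.3).** If `f : U → ℝ`, defined on an open set
`U ⊆ ℝⁿ` with `n ≥ 2`, is real-analytic on the intersection of `U` with every
2-dimensional affine plane, then `f` is real-analytic on `U`. -/
theorem bochnak_siciak_analytic_on_planes_implies_analytic
    (n : ℕ) (hn : 2 ≤ n) (U : Set (Fin n → ℝ)) (hU : IsOpen U)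
    (f : (Fin n → ℝ) → ℝ)
    (hplanes : ∀ a v w : Fin n → ℝ, LinearIndependent ℝ ![v, w] →
      AnalyticOn ℝ (fun st : ℝ × ℝ => f (a + st.1 • v + st.2 • w))
        {st : ℝ × ℝ | a + st.1 • v + st.2 • w ∈ U}) :
    AnalyticOn ℝ f U := by
  exact fun a ha => (bs_main n hn U hU f hplanes a ha).analyticWithinAt
end

section
/- Let U ⊆ ℝ^n be a nonempty open set and f : U → ℝ a function. Assume that for every point x ∈ U and every index i ∈ {1,…,n}, the one-variable function t ↦ f(x + t·e_i) is real-analytic on the open set {t ∈ ℝ : x + t·e_i ∈ U}, where e_i is the i-th standard basis vector. Then there exists a nonempty open subset U₀ ⊆ U such that the restriction f|_{U₀} is real-analytic. (Theorem 3.1, Siciak–Błocki.) -/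
open Set Filter Topology

/-- `h` is on the unit ball the sum of a power series with total weight at most `B`. -/
def SBWt {n : ℕ} (h : (Fin n → ℝ) → ℝ) (B : ℝ) : Prop :=
  ∃ p : FormalMultilinearSeries ℝ (Fin n → ℝ) ℝ, Summable (fun m => ‖p m‖) ∧
    ∑' m, ‖p m‖ ≤ B ∧
    ∀ x ∈ Metric.ball (0 : Fin n → ℝ) 1, HasSum (fun m => p m (fun _ => x)) (h x)

lemma SBWt.zero {n : ℕ} : SBWt (fun _ : Fin n → ℝ => (0:ℝ)) 0 := by
  refine ⟨0, ?_, ?_, ?_⟩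
  · simp
  · simp
  · intro x _
    simp [hasSum_zero]

lemma SBWt.one {n : ℕ} : SBWt (fun _ : Fin n → ℝ => (1:ℝ)) 1 := by
  have h0 : ∀ m, m ≠ 0 → (constFormalMultilinearSeries ℝ (Fin n → ℝ) (1:ℝ)) m = 0 :=
    fun m hm => constFormalMultilinearSeries_apply_of_nonzero hm
  have hs : HasSum (fun m => ‖(constFormalMultilinearSeries ℝ (Fin n → ℝ) (1:ℝ)) m‖) 1 := by
    have := hasSum_single (f := fun m => ‖(constFormalMultilinearSeries ℝ (Fin n → ℝ) (1:ℝ)) m‖) 0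
      (fun m hm => by simp [h0 m hm])
    simpa using this
  refine ⟨constFormalMultilinearSeries ℝ _ 1, hs.summable, hs.tsum_eq.le, ?_⟩
  intro x _
  have := hasSum_single (f := fun m => (constFormalMultilinearSeries ℝ (Fin n → ℝ) (1:ℝ)) m
    (fun _ => x)) 0 (fun m hm => by simp [h0 m hm])
  simpa using this

lemma SBWt.add {n : ℕ} {h k : (Fin n → ℝ) → ℝ} {A B : ℝ} (hh : SBWt h A) (hk : SBWt k B) :
    SBWt (fun x => h x + k x) (A + B) := by
  obtain ⟨p, hp, hpA, hpx⟩ := hh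
  obtain ⟨q, hq, hqA, hqx⟩ := hk
  have hle : ∀ m, ‖(p + q) m‖ ≤ ‖p m‖ + ‖q m‖ := fun m => norm_add_le _ _
  have hs : Summable fun m => ‖(p + q) m‖ :=
    Summable.of_nonneg_of_le (fun _ => norm_nonneg _) hle (hp.add hq)
  refine ⟨p + q, hs, ?_, ?_⟩
  · calc ∑' m, ‖(p + q) m‖ ≤ ∑' m, (‖p m‖ + ‖q m‖) := hs.tsum_le_tsum hle (hp.add hq)
      _ = _ := hp.tsum_add hq
      _ ≤ _ := by linarith
  · intro x hx
    simpa using (hpx x hx).add (hqx x hx)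

lemma SBWt.smul {n : ℕ} {h : (Fin n → ℝ) → ℝ} {A : ℝ} (hh : SBWt h A) (c : ℝ) :
    SBWt (fun x => c * h x) (|c| * A) := by
  obtain ⟨p, hp, hpA, hpx⟩ := hh
  have he : ∀ m, ‖(c • p) m‖ = |c| * ‖p m‖ := fun m => by
    simp [norm_smul]
  refine ⟨c • p, ?_, ?_, ?_⟩
  · simp_rw [he]; exact hp.mul_left _
  · simp_rw [he]; rw [tsum_mul_left]; gcongr
  · intro x hx
    simpa using (hpx x hx).mul_left c

lemma SBWt.mono {n : ℕ} {h : (Fin n → ℝ) → ℝ} {A B : ℝ} (hh : SBWt h A) (hAB : A ≤ B) :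
    SBWt h B := by
  obtain ⟨p, hp, hpA, hpx⟩ := hh
  exact ⟨p, hp, hpA.trans hAB, hpx⟩

lemma SBWt.mul_coord {n : ℕ} {h : (Fin n → ℝ) → ℝ} {A : ℝ} (hh : SBWt h A) (i : Fin n) :
    SBWt (fun x => x i * h x) A := by
  obtain ⟨p, hp, hpA, hpx⟩ := hh
  let e : (Fin n → ℝ) →L[ℝ] ℝ := ContinuousLinearMap.proj i
  have hen : ‖e‖ ≤ 1 := by
    refine ContinuousLinearMap.opNorm_le_bound _ zero_le_one fun x => ?_
    simpa [e] using norm_le_pi_norm x i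
  let q : FormalMultilinearSeries ℝ (Fin n → ℝ) ℝ := fun m =>
    match m with
    | 0 => 0
    | (m+1) => (e.smulRight (p m)).uncurryLeft
  have hq0 : q 0 = 0 := rfl
  have hq1 : ∀ m, q (m+1) = (e.smulRight (p m)).uncurryLeft := fun m => rfl
  have hle : ∀ m, ‖q (m+1)‖ ≤ ‖p m‖ := fun m => by
    rw [hq1, ContinuousLinearMap.uncurryLeft_norm, ContinuousLinearMap.norm_smulRight_apply]
    exact mul_le_of_le_one_left (norm_nonneg _) hen
  have hs1 : Summable fun m => ‖q (m+1)‖ :=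
    Summable.of_nonneg_of_le (fun _ => norm_nonneg _) hle hp
  have hs : Summable fun m => ‖q m‖ := (summable_nat_add_iff 1).1 hs1
  refine ⟨q, hs, ?_, ?_⟩
  · rw [hs.tsum_eq_zero_add, hq0, norm_zero, zero_add]
    exact (hs1.tsum_le_tsum hle hp).trans hpA
  · intro x hx
    rw [← hasSum_nat_add_iff' 1]
    have := (hpx x hx).mul_left (x i)
    simp only [Finset.range_one, Finset.sum_singleton, hq0]
    simp only [hq1]
    simpa [ContinuousLinearMap.uncurryLeft_apply, e, Fin.tail_def] using this

lemma SBWt.mul_affine {n : ℕ} {h : (Fin n → ℝ) → ℝ} {A : ℝ} (hh : SBWt h A) (i : Fin n) (a b : ℝ) :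
    SBWt (fun x => (b * (x i - a)) * h x) (|b| * (1 + |a|) * A) := by
  have := ((hh.mul_coord i).add (hh.smul (-a))).smul b
  convert! this using 1
  · funext x; ring
  · rw [abs_neg]; ring

lemma SBWt.nonneg {n : ℕ} {h : (Fin n → ℝ) → ℝ} {A : ℝ} (hh : SBWt h A) : 0 ≤ A := by
  obtain ⟨p, hp, hpA, hpx⟩ := hh
  exact (tsum_nonneg fun _ => norm_nonneg _).trans hpA

lemma SBWt.sum {n : ℕ} {ι : Type*} (s : Finset ι) {h : ι → (Fin n → ℝ) → ℝ} {A : ι → ℝ}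
    (hh : ∀ k ∈ s, SBWt (h k) (A k)) : SBWt (fun x => ∑ k ∈ s, h k x) (∑ k ∈ s, A k) := by
  classical
  induction s using Finset.induction_on with
  | empty => simpa using SBWt.zero
  | insert a s ha ih =>
    simp only [Finset.sum_insert ha]
    exact (hh a (by simp)).add (ih fun k hk => hh k (by simp [hk]))

lemma SBWt.prod_affine {n : ℕ} {ι : Type*} (s : Finset ι) (i : Fin n) (a b : ι → ℝ)
    {h : (Fin n → ℝ) → ℝ} {A : ℝ} (hh : SBWt h A) :
    SBWt (fun x => (∏ k ∈ s, (b k * (x i - a k))) * h x) ((∏ k ∈ s, (|b k| * (1 + |a k|))) * A) := by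
  classical
  induction s using Finset.induction_on with
  | empty => simpa using hh
  | insert c s ha ih =>
    have := ih.mul_affine i (a c) (b c)
    simp only [Finset.prod_insert ha]
    convert! this using 1
    · funext x; ring
    · ring

set_option maxHeartbeats 2000000 in
lemma SBWt.analytic_tsum {n : ℕ} {h : ℕ → (Fin n → ℝ) → ℝ} {A : ℕ → ℝ}
    (hh : ∀ k, SBWt (h k) (A k)) (hA : Summable A) (g : (Fin n → ℝ) → ℝ)
    (hg : ∀ x ∈ Metric.ball (0 : Fin n → ℝ) 1, HasSum (fun k => h k x) (g x)) :
    AnalyticOnNhd ℝ g (Metric.ball 0 1) := by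
  choose p hp hpA hpx using hh
  have hsum : Summable (fun q : ℕ × ℕ => ‖p q.1 q.2‖) := by
    rw [summable_prod_of_nonneg (fun _ => norm_nonneg _)]
    exact ⟨hp, Summable.of_nonneg_of_le (fun k => tsum_nonneg fun _ => norm_nonneg _) hpA hA⟩
  have hsw : Summable (fun q : ℕ × ℕ => ‖p q.2 q.1‖) := hsum.prod_symm
  have hsw' := (summable_prod_of_nonneg (fun q : ℕ × ℕ => norm_nonneg (p q.2 q.1))).1 hsw
  have hex : ∀ m, ∃ P : ContinuousMultilinearMap ℝ (fun _ : Fin m => (Fin n → ℝ)) ℝ,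
      HasSum (fun k => p k m) P ∧ ‖P‖ ≤ ∑' k, ‖p k m‖ := fun m =>
    ⟨_, (Summable.of_norm (hsw'.1 m)).hasSum, norm_tsum_le_tsum_norm (hsw'.1 m)⟩
  obtain ⟨P, hPs, hPle⟩ : ∃ P : FormalMultilinearSeries ℝ (Fin n → ℝ) ℝ,
      (∀ m, HasSum (fun k => p k m) (P m)) ∧ ∀ m, ‖P m‖ ≤ ∑' k, ‖p k m‖ :=
    ⟨fun m => (hex m).choose, fun m => (hex m).choose_spec.1, fun m => (hex m).choose_spec.2⟩
  have hPn : Summable fun m => ‖P m‖ :=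
    Summable.of_nonneg_of_le (fun _ => norm_nonneg _) hPle hsw'.2
  have hF : HasFPowerSeriesOnBall g P 0 1 := by
    refine ⟨?_, one_pos, ?_⟩
    · have := P.le_radius_of_summable (r := 1) (by simpa using hPn)
      simpa using this
    · intro y hy
      have hy' : y ∈ Metric.ball (0 : Fin n → ℝ) 1 := by
        have h1 : (1 : ENNReal) = ENNReal.ofReal 1 := by simp
        rw [h1, Metric.eball_ofReal] at hy
        exact hy
      have hyn : ‖y‖ ≤ 1 := by simpa using (mem_ball_zero_iff.1 hy').le
      have hb : ∀ k m, ‖p k m (fun _ => y)‖ ≤ ‖p k m‖ := fun k m => by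
        refine (ContinuousMultilinearMap.le_opNorm _ _).trans ?_
        refine mul_le_of_le_one_right (norm_nonneg _) ?_
        simpa using pow_le_one₀ (norm_nonneg y) hyn
      have hS : Summable (fun q : ℕ × ℕ => p q.1 q.2 (fun _ => y)) :=
        Summable.of_norm_bounded hsum (fun q => hb q.1 q.2)
      have h1 : HasSum (fun q : ℕ × ℕ => p q.1 q.2 (fun _ => y)) (g y) := by
        have h2 := hS.hasSum.prod_fiberwise (fun k => hpx k y hy')
        rw [← h2.unique (hg y hy')]
        exact hS.hasSum
      have h3 : HasSum (fun q : ℕ × ℕ => p q.2 q.1 (fun _ => y)) (g y) :=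
        (Equiv.prodComm ℕ ℕ).hasSum_iff.2 h1
      rw [zero_add]
      refine h3.prod_fiberwise fun m => ?_
      exact (hPs m).mapL (ContinuousMultilinearMap.apply ℝ (fun _ : Fin m => (Fin n → ℝ)) ℝ (fun _ => y))
  have := hF.analyticOnNhd
  have h1 : (1 : ENNReal) = ENNReal.ofReal 1 := by simp
  rw [h1, Metric.eball_ofReal] at this
  exact this


lemma sb_fact (k N : ℕ) (h : k ≤ N) :
    ∏ j ∈ Finset.range (N+1), (if j = k then (1:ℝ) else |(k:ℝ) - j|) =
      (k.factorial : ℝ) * ((N-k).factorial : ℝ) := by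
  induction N, h using Nat.le_induction with
  | base =>
    rw [Finset.prod_range_succ]
    simp only [if_true, mul_one, Nat.sub_self, Nat.factorial_zero, Nat.cast_one]
    rw [← Finset.prod_range_add_one_eq_factorial, ← Finset.prod_range_reflect]
    push_cast
    refine Finset.prod_congr rfl fun j hj => ?_
    have hj' := Finset.mem_range.1 hj
    rw [if_neg (by omega)]
    have h1 : ((k - 1 - j : ℕ) : ℝ) + 1 = (k:ℝ) - j := by
      rw [Nat.sub_sub, Nat.cast_sub (by omega)]; push_cast; ring
    have h2 : (k:ℝ) - ((k - 1 - j : ℕ) : ℝ) = (j:ℝ) + 1 := by linarith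
    rw [h2, abs_of_nonneg (by positivity)]
  | succ N hN ih =>
    rw [Finset.prod_range_succ, ih, if_neg (by omega)]
    have h1 : N + 1 - k = (N - k) + 1 := by omega
    have h2 : |(k:ℝ) - ((N+1 : ℕ) : ℝ)| = ((N - k : ℕ) : ℝ) + 1 := by
      rw [abs_sub_comm, Nat.cast_sub hN]; push_cast
      rw [abs_of_nonneg]; · ring
      have : (k:ℝ) ≤ N := by exact_mod_cast hN
      linarith
    rw [h1, Nat.factorial_succ, h2]; push_cast; ring

/-- equispaced nodes -/
noncomputable def sbNode (N : ℕ) (k : Fin (N+1)) : ℝ := (k : ℝ) / (N+1)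

/-- Lagrange basis functions -/
noncomputable def sbL (N : ℕ) (k : Fin (N+1)) : Polynomial ℝ :=
  Lagrange.basis Finset.univ (sbNode N) k

/-- weights of the Lagrange basis functions -/
noncomputable def sbW (N : ℕ) (k : Fin (N+1)) : ℝ :=
  ∏ j ∈ Finset.univ.erase k, (|(sbNode N k - sbNode N j)⁻¹| * (1 + |sbNode N j|))

lemma sbNode_inj (N : ℕ) : Function.Injective (sbNode N) := by
  intro a b h
  unfold sbNode at h
  have : ((N:ℝ)+1) ≠ 0 := by positivity
  field_simp at h
  exact Fin.ext (by exact_mod_cast h)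

lemma sbNode_abs (N : ℕ) (k : Fin (N+1)) : |sbNode N k| ≤ 1 := by
  unfold sbNode
  rw [abs_of_nonneg (by positivity), div_le_one (by positivity)]
  have := k.2.le
  exact_mod_cast this

lemma sbL_eval (N : ℕ) (k : Fin (N+1)) (t : ℝ) : (sbL N k).eval t =
    ∏ j ∈ Finset.univ.erase k, ((sbNode N k - sbNode N j)⁻¹ * (t - sbNode N j)) := by
  simp [sbL, Lagrange.basis, Lagrange.basisDivisor, Polynomial.eval_prod]

lemma sbW_nonneg (N : ℕ) (k : Fin (N+1)) : 0 ≤ sbW N k :=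
  Finset.prod_nonneg fun j _ => by positivity

lemma sbL_le (N : ℕ) (k : Fin (N+1)) (t : ℝ) (ht : |t| ≤ 1) : |(sbL N k).eval t| ≤ sbW N k := by
  rw [sbL_eval, Finset.abs_prod]
  refine Finset.prod_le_prod (fun _ _ => abs_nonneg _) fun j _ => ?_
  rw [abs_mul]
  gcongr
  exact (abs_sub _ _).trans (by gcongr)

lemma sbW_le (N : ℕ) (k : Fin (N+1)) : sbW N k ≤ 4 ^ N * 4 ^ (N+1) := by
  have hk : (k : ℕ) ≤ N := by omega
  have h1 : sbW N k ≤ ∏ j ∈ Finset.univ.erase k, ((2 * ((N:ℝ)+1)) * |(k:ℝ) - (j:ℝ)|⁻¹) := by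
    refine Finset.prod_le_prod (fun j _ => by positivity) fun j _ => ?_
    have e : sbNode N k - sbNode N j = ((k:ℝ) - j) / (N+1) := by unfold sbNode; ring
    have hb := sbNode_abs N j
    rw [e, abs_inv, abs_div, inv_div, abs_of_nonneg (show (0:ℝ) ≤ (N:ℝ)+1 by positivity), div_eq_mul_inv]
    have : 0 ≤ ((N:ℝ)+1) * |(k:ℝ) - j|⁻¹ := by positivity
    nlinarith
  have h2 : ∏ j ∈ Finset.univ.erase k, |(k:ℝ) - (j:ℝ)| =
      ((k:ℕ).factorial : ℝ) * ((N-k).factorial : ℝ) := by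
    rw [← sb_fact k N hk, Finset.prod_range, ← Finset.mul_prod_erase Finset.univ _ (Finset.mem_univ k)]
    simp only [if_true, one_mul]
    refine Finset.prod_congr rfl fun j hj => ?_
    rw [if_neg]
    intro h
    exact (Finset.ne_of_mem_erase hj) (Fin.ext h)
  rw [Finset.prod_mul_distrib, Finset.prod_const, Finset.prod_inv_distrib, h2,
    Finset.card_erase_of_mem (Finset.mem_univ _), Finset.card_univ, Fintype.card_fin,
    Nat.add_sub_cancel] at h1
  refine h1.trans ?_
  have h3 : ((k:ℕ).factorial : ℝ) * ((N-k).factorial : ℝ) * (N.choose k : ℝ) = N.factorial := by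
    have := Nat.choose_mul_factorial_mul_factorial hk
    have h : ((N.choose k * (k:ℕ).factorial * (N-k).factorial : ℕ) : ℝ) = N.factorial := by rw [this]
    push_cast at h
    linarith
  have h4 : (N.choose k : ℝ) ≤ 2 ^ N := by exact_mod_cast Nat.choose_le_two_pow N k
  have h5 := Real.pow_div_factorial_le_exp ((N:ℝ)+1) (by positivity) N
  have h6 : Real.exp ((N:ℝ)+1) ≤ 4 ^ (N+1) := by
    have : ((N:ℝ)+1) = ((N+1:ℕ):ℝ) * 1 := by push_cast; ring
    rw [this, Real.exp_nat_mul]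
    gcongr
    have := Real.exp_one_lt_d9
    linarith
  have hc : (0:ℝ) < N.choose k := by exact_mod_cast Nat.choose_pos hk
  have e : (((k:ℕ).factorial : ℝ) * ((N-k).factorial : ℝ))⁻¹ = (N.choose k : ℝ) / N.factorial := by
    rw [← h3]; field_simp
  rw [e, mul_pow]
  calc 2 ^ N * ((N:ℝ)+1) ^ N * ((N.choose k : ℝ) / N.factorial)
      = 2 ^ N * (N.choose k : ℝ) * (((N:ℝ)+1) ^ N / N.factorial) := by ring
    _ ≤ 2 ^ N * 2 ^ N * 4 ^ (N+1) := by
        gcongr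
        exact h5.trans h6
    _ = 4 ^ N * 4 ^ (N+1) := by rw [← mul_pow]; norm_num

lemma sbW_sum (N : ℕ) : ∑ k, sbW N k ≤ 32 ^ (N+1) := by
  have h1 : ∑ k, sbW N k ≤ ∑ k : Fin (N+1), (4:ℝ) ^ N * 4 ^ (N+1) :=
    Finset.sum_le_sum fun k _ => sbW_le N k
  refine h1.trans ?_
  rw [Finset.sum_const, Finset.card_univ, Fintype.card_fin, nsmul_eq_mul]
  have h2 : ((N+1 : ℕ) : ℝ) ≤ 2 ^ (N+1) := by exact_mod_cast (Nat.lt_two_pow_self (n := N+1)).le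
  calc ((N+1 : ℕ) : ℝ) * (4 ^ N * 4 ^ (N+1)) ≤ 2 ^ (N+1) * (4 ^ (N+1) * 4 ^ (N+1)) := by
        gcongr <;> norm_num
    _ = 32 ^ (N+1) := by rw [← mul_pow, ← mul_pow]; norm_num

lemma sb_repro (N : ℕ) (p : Polynomial ℝ) (hp : p.natDegree ≤ N) (t : ℝ) :
    ∑ k, p.eval (sbNode N k) * (sbL N k).eval t = p.eval t := by
  have hd : p.degree < (Finset.univ : Finset (Fin (N+1))).card := by
    rw [Finset.card_univ, Fintype.card_fin]
    exact lt_of_le_of_lt (Polynomial.degree_le_of_natDegree_le hp) (by exact_mod_cast Nat.lt_succ_self N)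
  conv_rhs => rw [Lagrange.eq_interpolate (s := Finset.univ) (sbNode_inj N).injOn hd]
  simp [Lagrange.interpolate_apply, Polynomial.eval_finsetSum, sbL]

lemma sbL_deg (N : ℕ) (k : Fin (N+1)) : (sbL N k).natDegree ≤ N := by
  rw [sbL, Lagrange.natDegree_basis (sbNode_inj N).injOn (Finset.mem_univ k)]
  simp

/-- the tensor product interpolation operator -/
noncomputable def sbP (n N : ℕ) (g : (Fin n → ℝ) → ℝ) (x : Fin n → ℝ) : ℝ :=
  ∑ β : Fin n → Fin (N+1), g (fun i => sbNode N (β i)) * ∏ i, (sbL N (β i)).eval (x i)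

lemma sbP_succ (n N : ℕ) (g : (Fin (n+1) → ℝ) → ℝ) (t : ℝ) (y : Fin n → ℝ) :
    sbP (n+1) N g (Fin.cons t y) =
      ∑ k, (sbL N k).eval t * sbP n N (fun z => g (Fin.cons (sbNode N k) z)) y := by
  unfold sbP
  rw [← (Fin.consEquiv (fun _ : Fin (n+1) => Fin (N+1))).sum_comp, Fintype.sum_prod_type]
  refine Finset.sum_congr rfl fun k _ => ?_
  rw [Finset.mul_sum]
  refine Finset.sum_congr rfl fun β _ => ?_
  have : (fun i => sbNode N ((Fin.consEquiv (fun _ : Fin (n+1) => Fin (N+1))) (k, β) i)) =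
      (Fin.cons (sbNode N k) (fun i => sbNode N (β i)) : Fin (n+1) → ℝ) := by
    funext i
    refine Fin.cases ?_ (fun i => ?_) i <;> simp [Fin.consEquiv]
  rw [this, Fin.prod_univ_succ]
  simp [Fin.consEquiv]
  ring

/-- the one variable approximation property -/
def SBAp {n : ℕ} (f : (Fin n → ℝ) → ℝ) (W : Set (Fin n → ℝ)) (i : Fin n) (ρ M : ℝ) : Prop :=
  ∀ x ∈ W, ∀ N : ℕ, ∃ p : Polynomial ℝ, p.natDegree ≤ N ∧
    ∀ t, Function.update x i t ∈ W → |f (Function.update x i t) - p.eval t| ≤ M * ρ ^ N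

lemma sb_one_var (N : ℕ) (g : ℝ → ℝ) (p : Polynomial ℝ) (hp : p.natDegree ≤ N) (ε : ℝ)
    (h : ∀ t, |t| ≤ 1 → |g t - p.eval t| ≤ ε) (t : ℝ) (ht : |t| ≤ 1) :
    |g t - ∑ k, g (sbNode N k) * (sbL N k).eval t| ≤ (1 + ∑ k, sbW N k) * ε := by
  have e : g t - ∑ k, g (sbNode N k) * (sbL N k).eval t =
      (g t - p.eval t) - ∑ k, (g (sbNode N k) - p.eval (sbNode N k)) * (sbL N k).eval t := by
    simp only [sub_mul, Finset.sum_sub_distrib, sb_repro N p hp t]; ring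
  rw [e]
  refine (abs_sub _ _).trans ?_
  have h1 : |∑ k, (g (sbNode N k) - p.eval (sbNode N k)) * (sbL N k).eval t| ≤ ∑ k, ε * sbW N k := by
    refine (Finset.abs_sum_le_sum_abs _ _).trans (Finset.sum_le_sum fun k _ => ?_)
    rw [abs_mul]
    have := h _ (sbNode_abs N k)
    have h0 := (abs_nonneg _).trans this
    exact mul_le_mul this (sbL_le N k t ht) (abs_nonneg _) h0
  rw [← Finset.mul_sum] at h1
  linarith [h t ht]

lemma sb_cons_mem {n : ℕ} (t : ℝ) (y : Fin n → ℝ) :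
    (Fin.cons t y : Fin (n+1) → ℝ) ∈ Metric.closedBall (0 : Fin (n+1) → ℝ) 1 ↔
      |t| ≤ 1 ∧ y ∈ Metric.closedBall (0 : Fin n → ℝ) 1 := by
  simp only [mem_closedBall_zero_iff, pi_norm_le_iff_of_nonneg zero_le_one, Fin.forall_fin_succ,
    Fin.cons_zero, Fin.cons_succ, Real.norm_eq_abs]

lemma sb_error (N : ℕ) (ρ M : ℝ) (hρ : 0 ≤ ρ) (hM : 0 ≤ M) (n : ℕ) (g : (Fin n → ℝ) → ℝ)
    (h : ∀ i, SBAp g (Metric.closedBall 0 1) i ρ M) (x : Fin n → ℝ)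
    (hx : x ∈ Metric.closedBall 0 1) :
    |g x - sbP n N g x| ≤ (2 * (1 + ∑ k, sbW N k)) ^ n * (M * ρ ^ N) := by
  have hΛ : 0 ≤ ∑ k, sbW N k := Finset.sum_nonneg fun k _ => sbW_nonneg N k
  have hε : 0 ≤ M * ρ ^ N := by positivity
  induction n with
  | zero =>
    have : g x - sbP 0 N g x = 0 := by
      simp [sbP]
      rw [Subsingleton.elim x, sub_self]
    rw [this]; simpa using hε
  | succ n ih =>
    obtain ⟨t, y, rfl⟩ : ∃ (t : ℝ) (y : Fin n → ℝ), x = Fin.cons t y :=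
      ⟨x 0, Fin.tail x, (Fin.cons_self_tail x).symm⟩
    rw [sb_cons_mem] at hx
    obtain ⟨ht, hy⟩ := hx
    set B := 1 + ∑ k, sbW N k with hB
    set ε := M * ρ ^ N with hεd
    have h1 : |g (Fin.cons t y) - ∑ k, g (Fin.cons (sbNode N k) y) * (sbL N k).eval t| ≤ B * ε := by
      obtain ⟨p, hp, hpt⟩ := h 0 (Fin.cons 0 y) ((sb_cons_mem _ _).2 ⟨by simp, hy⟩) N
      refine sb_one_var N (fun t => g (Fin.cons t y)) p hp ε (fun s hs => ?_) t ht
      have := hpt s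
      rw [Fin.update_cons_zero, sb_cons_mem] at this
      exact this ⟨hs, hy⟩
    have h2 : ∀ k, |g (Fin.cons (sbNode N k) y) - sbP n N (fun z => g (Fin.cons (sbNode N k) z)) y| ≤
        (2 * B) ^ n * ε := by
      intro k
      refine ih (fun z => g (Fin.cons (sbNode N k) z)) (fun i z hz N' => ?_) y hy
      obtain ⟨p, hp, hpt⟩ := h i.succ (Fin.cons (sbNode N k) z)
        ((sb_cons_mem _ _).2 ⟨sbNode_abs N k, hz⟩) N'
      refine ⟨p, hp, fun s hs => ?_⟩
      have := hpt s
      rw [← Fin.cons_update, sb_cons_mem] at this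
      exact this ⟨sbNode_abs N k, hs⟩
    rw [sbP_succ]
    have e : g (Fin.cons t y) - ∑ k, (sbL N k).eval t * sbP n N (fun z => g (Fin.cons (sbNode N k) z)) y
      = (g (Fin.cons t y) - ∑ k, g (Fin.cons (sbNode N k) y) * (sbL N k).eval t) +
        ∑ k, (sbL N k).eval t * (g (Fin.cons (sbNode N k) y) -
          sbP n N (fun z => g (Fin.cons (sbNode N k) z)) y) := by
      simp only [mul_sub, Finset.sum_sub_distrib]
      simp only [mul_comm ((sbL N _).eval t) (g _)]
      ring
    rw [e]
    refine (abs_add_le _ _).trans ?_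
    have h3 : |∑ k, (sbL N k).eval t * (g (Fin.cons (sbNode N k) y) -
          sbP n N (fun z => g (Fin.cons (sbNode N k) z)) y)| ≤ ∑ k, sbW N k * ((2 * B) ^ n * ε) := by
      refine (Finset.abs_sum_le_sum_abs _ _).trans (Finset.sum_le_sum fun k _ => ?_)
      rw [abs_mul]
      exact mul_le_mul (sbL_le N k t ht) (h2 k) (abs_nonneg _) (sbW_nonneg N k)
    rw [← Finset.sum_mul] at h3
    have hB1 : 1 ≤ B := by linarith
    have h4 : 1 ≤ (2 * B) ^ n := one_le_pow₀ (by linarith)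
    have h5 : (∑ k, sbW N k) * ((2 * B) ^ n * ε) ≤ B * ((2 * B) ^ n * ε) := by
      gcongr; linarith
    have h6 : B * ε ≤ B * ((2 * B) ^ n * ε) := by
      gcongr
      exact le_mul_of_one_le_left hε h4
    calc _ ≤ B * ((2 * B) ^ n * ε) + B * ((2 * B) ^ n * ε) := by linarith
      _ = (2 * B) ^ (n+1) * ε := by ring

lemma SBWt.abs_le {n : ℕ} {h : (Fin n → ℝ) → ℝ} {A : ℝ} (hh : SBWt h A) (x : Fin n → ℝ)
    (hx : x ∈ Metric.ball (0 : Fin n → ℝ) 1) : ‖h x‖ ≤ A := by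
  obtain ⟨p, hp, hpA, hpx⟩ := hh
  have hxn : ‖x‖ ≤ 1 := (mem_ball_zero_iff.1 hx).le
  have hb : ∀ m, ‖p m (fun _ => x)‖ ≤ ‖p m‖ := fun m => by
    refine (ContinuousMultilinearMap.le_opNorm _ _).trans ?_
    refine mul_le_of_le_one_right (norm_nonneg _) ?_
    simpa using pow_le_one₀ (norm_nonneg x) hxn
  rw [← (hpx x hx).tsum_eq]
  exact (tsum_of_norm_bounded hp.hasSum hb).trans hpA

lemma SBWt.basis {n : ℕ} (N : ℕ) (β : Fin n → Fin (N+1)) (s : Finset (Fin n)) :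
    SBWt (fun x => ∏ i ∈ s, (sbL N (β i)).eval (x i)) (∏ i ∈ s, sbW N (β i)) := by
  induction s using Finset.induction_on with
  | empty => simpa using SBWt.one
  | insert a s ha ih =>
    simp only [Finset.prod_insert ha]
    simp only [sbL_eval N (β a)]
    exact SBWt.prod_affine _ a _ _ ih

lemma sb_diff (n N : ℕ) (g : (Fin n → ℝ) → ℝ) (x : Fin n → ℝ) :
    sbP n (N+1) g x - sbP n N g x =
      ∑ β : Fin n → Fin (N+1+1), (g (fun i => sbNode (N+1) (β i)) -
        sbP n N g (fun i => sbNode (N+1) (β i))) * ∏ i, (sbL (N+1) (β i)).eval (x i) := by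
  simp only [sub_mul, Finset.sum_sub_distrib]
  congr 1
  simp only [sbP, Finset.sum_mul]
  rw [Finset.sum_comm]
  refine Finset.sum_congr rfl fun γ _ => ?_
  simp only [mul_assoc, ← Finset.mul_sum, ← Finset.prod_mul_distrib]
  congr 1
  rw [← Fintype.prod_sum (fun (i : Fin n) (k : Fin (N+1+1)) =>
    (sbL N (γ i)).eval (sbNode (N+1) k) * (sbL (N+1) k).eval (x i))]
  refine Finset.prod_congr rfl fun i _ => ?_
  exact (sb_repro (N+1) _ ((sbL_deg N (γ i)).trans (Nat.le_succ N)) (x i)).symm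

lemma sb_zero (n : ℕ) (g : (Fin n → ℝ) → ℝ) (x : Fin n → ℝ) : sbP n 0 g x = sbP n 0 g 0 := by
  have h : ∀ (k : Fin (0+1)) (t : ℝ), (sbL 0 k).eval t = 1 := by
    intro k t
    rw [sbL_eval]
    refine Finset.prod_eq_one fun j hj => ?_
    exact absurd (Fin.ext (by omega)) (Finset.ne_of_mem_erase hj)
  simp only [sbP, h]

lemma sb_analytic (n : ℕ) (g : (Fin n → ℝ) → ℝ) (ρ M : ℝ) (hρ : ρ = ((32:ℝ) ^ (2 * n))⁻¹ * 2⁻¹)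
    (hM : 0 ≤ M) (h : ∀ i, SBAp g (Metric.closedBall 0 1) i ρ M) :
    AnalyticOnNhd ℝ g (Metric.ball 0 1) := by
  have hρ0 : 0 ≤ ρ := by rw [hρ]; positivity
  set A : ℕ → ℝ := fun N => (M * 32 ^ (4 * n)) * (2⁻¹ : ℝ) ^ N with hA
  have hAsum : Summable A := (summable_geometric_of_lt_one (by norm_num) (by norm_num)).mul_left _
  set D : ℕ → ℝ := fun N => ((32:ℝ) ^ (N+2)) ^ n * (M * ρ ^ N) with hD
  have hD0 : ∀ N, 0 ≤ D N := fun N => by positivity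
  have hDA : ∀ N, D N * ((32:ℝ) ^ (N+2)) ^ n = A N := fun N => by
    simp only [hD, hA, hρ, mul_pow, inv_pow]
    have e : ((32:ℝ) ^ (N+2)) ^ n * ((32:ℝ) ^ (N+2)) ^ n = 32 ^ (4 * n) * (32 ^ (2 * n)) ^ N := by
      rw [← pow_mul, ← pow_mul, ← pow_add, ← pow_add]; congr 1; ring
    have h0 : ((32:ℝ) ^ (2 * n)) ^ N ≠ 0 := by positivity
    calc _ = (((32:ℝ) ^ (N+2)) ^ n * ((32:ℝ) ^ (N+2)) ^ n) * M * ((((32:ℝ) ^ (2 * n)) ^ N)⁻¹ * (2 ^ N)⁻¹) := by ring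
      _ = _ := by rw [e]; field_simp
  have hΛ : ∀ N, 0 ≤ ∑ k, sbW N k := fun N => Finset.sum_nonneg fun k _ => sbW_nonneg N k
  have herr : ∀ N, ∀ x ∈ Metric.closedBall (0 : Fin n → ℝ) 1, |g x - sbP n N g x| ≤ D N := by
    intro N x hx
    refine (sb_error N ρ M hρ0 hM n g h x hx).trans ?_
    simp only [hD]
    have h1 := sbW_sum N
    have h2 : (1:ℝ) ≤ 32 ^ (N+1) := one_le_pow₀ (by norm_num)
    have h3 := hΛ N
    gcongr
    calc 2 * (1 + ∑ k, sbW N k) ≤ 4 * 32 ^ (N+1) := by linarith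
      _ ≤ 32 * 32 ^ (N+1) := by gcongr; norm_num
      _ = 32 ^ (N+2) := by ring
  have hw : ∀ N, SBWt (fun x => sbP n (N+1) g x - sbP n N g x) (A N) := by
    intro N
    simp only [sb_diff]
    have := SBWt.sum (Finset.univ : Finset (Fin n → Fin (N+1+1)))
      (fun β _ => (SBWt.basis (N+1) β Finset.univ).smul (g (fun i => sbNode (N+1) (β i)) -
        sbP n N g (fun i => sbNode (N+1) (β i))))
    refine this.mono ?_
    calc _ ≤ ∑ β : Fin n → Fin (N+1+1), D N * ∏ i, sbW (N+1) (β i) := by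
          refine Finset.sum_le_sum fun β _ => ?_
          refine mul_le_mul_of_nonneg_right ?_ (Finset.prod_nonneg fun i _ => sbW_nonneg _ _)
          refine herr N _ ?_
          rw [mem_closedBall_zero_iff, pi_norm_le_iff_of_nonneg zero_le_one]
          exact fun i => sbNode_abs _ _
      _ = D N * (∑ k, sbW (N+1) k) ^ n := by
          rw [← Finset.mul_sum]
          congr 1
          rw [← Fintype.prod_sum (fun (_ : Fin n) (k : Fin (N+1+1)) => sbW (N+1) k)]
          simp
      _ ≤ D N * ((32:ℝ) ^ (N+2)) ^ n := by
          have := sbW_sum (N+1)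
          have h3 := hΛ (N+1)
          have h4 := hD0 N
          gcongr
      _ = A N := hDA N
  have key : AnalyticOnNhd ℝ (fun x => g x - sbP n 0 g x) (Metric.ball 0 1) := by
    refine SBWt.analytic_tsum hw hAsum _ fun x hx => ?_
    have hs : Summable fun k => sbP n (k+1) g x - sbP n k g x :=
      Summable.of_norm_bounded hAsum fun k => (hw k).abs_le x hx
    rw [hs.hasSum_iff_tendsto_nat]
    simp only [Finset.sum_range_sub (fun k => sbP n k g x)]
    refine Tendsto.sub_const ?_ _
    have h1 : Tendsto (fun N => g x - sbP n N g x) atTop (𝓝 0) := by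
      refine squeeze_zero_norm (fun N => ?_) hAsum.tendsto_atTop_zero
      refine (herr N x (Metric.ball_subset_closedBall hx)).trans ?_
      rw [← hDA N]
      exact le_mul_of_one_le_right (hD0 N) (one_le_pow₀ (one_le_pow₀ (by norm_num)))
    have h2 := (tendsto_const_nhds (x := g x)).sub h1
    simpa using h2
  have e : g = fun x => (g x - sbP n 0 g x) + sbP n 0 g 0 := by
    funext x; rw [sb_zero n g x]; ring
  rw [e]
  exact fun x hx => (key x hx).add analyticAt_const

lemma sb_final (n : ℕ) (f : (Fin n → ℝ) → ℝ) (W : Set (Fin n → ℝ)) (hW : IsOpen W)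
    (hne : W.Nonempty) (ρ M : ℝ) (hρ : ρ = ((32:ℝ) ^ (2 * n))⁻¹ * 2⁻¹)
    (hM : 0 ≤ M) (h : ∀ i, SBAp f W i ρ M) :
    ∃ U₀ ⊆ W, U₀.Nonempty ∧ IsOpen U₀ ∧ AnalyticOnNhd ℝ f U₀ := by
  obtain ⟨c, hc⟩ := hne
  obtain ⟨δ, hδ, hδW⟩ := Metric.nhds_basis_closedBall.mem_iff.1 (hW.mem_nhds hc)
  have hmem : ∀ x ∈ Metric.closedBall (0 : Fin n → ℝ) 1, c + δ • x ∈ W := fun x hx => by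
    apply hδW
    rw [mem_closedBall_iff_norm, add_sub_cancel_left, norm_smul, Real.norm_of_nonneg hδ.le]
    exact mul_le_of_le_one_right hδ.le (mem_closedBall_zero_iff.1 hx)
  have hA := sb_analytic n (fun y => f (c + δ • y)) ρ M hρ hM (by
    intro i x hx N
    obtain ⟨p, hp, hpt⟩ := h i (c + δ • x) (hmem x hx) N
    refine ⟨p.comp (Polynomial.C δ * Polynomial.X + Polynomial.C (c i)), ?_, ?_⟩
    · refine Polynomial.natDegree_comp_le.trans ?_
      calc _ ≤ N * 1 := Nat.mul_le_mul hp Polynomial.natDegree_linear_le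
        _ = N := mul_one N
    · intro t ht
      have e : c + δ • Function.update x i t = Function.update (c + δ • x) i (δ * t + c i) := by
        funext j
        by_cases hj : j = i
        · subst hj; simp [add_comm]
        · simp [hj]
      have h1 := hmem _ ht
      rw [e] at h1
      simpa [e] using hpt _ h1)
  refine ⟨Metric.ball c δ, Metric.ball_subset_closedBall.trans hδW, ⟨c, Metric.mem_ball_self hδ⟩,
    Metric.isOpen_ball, ?_⟩
  intro y hy
  have e : f = (fun y => f (c + δ • y)) ∘ (fun y => δ⁻¹ • (y - c)) := by
    funext z
    simp [smul_smul, hδ.ne']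
  rw [e]
  have h1 : AnalyticAt ℝ (fun y : Fin n → ℝ => δ⁻¹ • (y - c)) y := by fun_prop
  refine AnalyticAt.comp (hA _ ?_) h1
  rw [mem_ball_zero_iff, norm_smul, norm_inv, Real.norm_of_nonneg hδ.le, inv_mul_lt_iff₀ hδ, mul_one]
  exact mem_ball_iff_norm.1 hy


lemma sb_baire {X : Type*} [TopologicalSpace X] [BaireSpace X] (V : Set X) (hV : IsOpen V)
    (hne : V.Nonempty) (F : ℕ → Set X) (hF : V ⊆ ⋃ k, F k) :
    ∃ k, ∃ W ⊆ V, IsOpen W ∧ W.Nonempty ∧ W ⊆ closure (F k) := by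
  have hd := dense_iUnion_interior_of_closed (ι := Option ℕ)
    (f := fun o => o.elim Vᶜ (fun k => closure (F k)))
    (by rintro (_ | k); · exact hV.isClosed_compl
        · exact isClosed_closure)
    (by
      refine eq_univ_of_forall fun x => ?_
      by_cases hx : x ∈ V
      · obtain ⟨k, hk⟩ := mem_iUnion.1 (hF hx)
        exact mem_iUnion.2 ⟨some k, subset_closure hk⟩
      · exact mem_iUnion.2 ⟨none, hx⟩)
  obtain ⟨x, hxV, hx⟩ := hd.inter_open_nonempty V hV hne
  obtain ⟨o, ho⟩ := mem_iUnion.1 hx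
  cases o with
  | none => exact absurd hxV (interior_subset ho)
  | some k =>
    exact ⟨k, V ∩ interior (closure (F k)), inter_subset_left, hV.inter isOpen_interior,
      ⟨x, hxV, ho⟩, inter_subset_right.trans interior_subset⟩

lemma sb_coeff (h : ℝ → ℝ) (c ρ : ℝ) (hρ : 0 < ρ) (ha : AnalyticAt ℝ h c) :
    ∃ k : ℕ, ∃ a : ℕ → ℝ, (∀ m, |a m| ≤ (k:ℝ) ^ (m+1)) ∧ ∀ N : ℕ, ∀ t, |t - c| < 1 / (k+1) →
      |h t - ∑ m ∈ Finset.range N, a m * (t - c) ^ m| ≤ k * ρ ^ N := by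
  obtain ⟨p, r, hp⟩ := ha
  obtain ⟨r', hr0, hr⟩ := ENNReal.lt_iff_exists_nnreal_btwn.1 hp.r_pos
  have hr0' : (0:ℝ) < r' := by exact_mod_cast hr0
  obtain ⟨b, hb, C, hC, happ⟩ := hp.uniform_geometric_approx' hr
  obtain ⟨C', hC', hcoef⟩ := p.norm_mul_pow_le_of_lt_radius (hr.trans_le hp.r_le)
  obtain ⟨k, hk⟩ := exists_nat_ge (max (max C C') (max (1 / r') (max (1 / (ρ * r')) 1)))
  simp only [max_le_iff] at hk
  obtain ⟨⟨hk1, hk2⟩, hk3, hk4, hk5⟩ := hk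
  have hk0 : (0:ℝ) < k := by linarith
  refine ⟨k, fun m => p.coeff m, fun m => ?_, fun N t ht => ?_⟩
  · have h1 := hcoef m
    have h2 : |p.coeff m| = ‖p m‖ := by
      rw [← Real.norm_eq_abs]
      exact (FormalMultilinearSeries.norm_apply_eq_norm_coef).symm
    rw [h2]
    have h3 : 1 ≤ (k:ℝ) * r' := by rwa [div_le_iff₀ hr0'] at hk3
    calc ‖p m‖ ≤ ‖p m‖ * ((k:ℝ) * r') ^ m := le_mul_of_one_le_right (norm_nonneg _) (one_le_pow₀ h3)
      _ = (‖p m‖ * r' ^ m) * k ^ m := by ring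
      _ ≤ C' * k ^ m := by gcongr
      _ ≤ k * k ^ m := by gcongr
      _ = k ^ (m+1) := by ring
  · have h3 : 1 ≤ (k:ℝ) * r' := by rwa [div_le_iff₀ hr0'] at hk3
    have h4 : 1 ≤ (k:ℝ) * (ρ * r') := by rwa [div_le_iff₀ (by positivity)] at hk4
    rw [lt_div_iff₀ (by positivity)] at ht
    have h5 : |t - c| < r' := by
      have := abs_nonneg (t - c)
      by_contra hcon
      push Not at hcon
      nlinarith
    have h6 : |t - c| ≤ ρ * r' := by
      have := abs_nonneg (t - c)
      by_contra hcon
      push Not at hcon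
      nlinarith
    have := happ (t - c) (by rw [mem_ball_zero_iff]; exact h5) N
    rw [add_sub_cancel, FormalMultilinearSeries.partialSum] at this
    have e : ∑ m ∈ Finset.range N, p.coeff m * (t - c) ^ m =
        ∑ m ∈ Finset.range N, (p m) fun _ => t - c := by
      refine Finset.sum_congr rfl fun m _ => ?_
      rw [FormalMultilinearSeries.apply_eq_pow_smul_coeff, smul_eq_mul, mul_comm]
    rw [e]
    refine this.trans ?_
    have h7 : b * (‖t - c‖ / r') ≤ ρ := by
      have h8 : ‖t - c‖ / r' ≤ ρ := by rw [div_le_iff₀ hr0']; exact h6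
      have h9 : 0 ≤ ‖t - c‖ / r' := by positivity
      nlinarith [hb.1, hb.2]
    have h10 : 0 ≤ b * (‖t - c‖ / r') := mul_nonneg hb.1.le (by positivity)
    gcongr

lemma sb_uniform {X : Type*} [MetricSpace X] [BaireSpace X] (F : X → ℝ → ℝ) (B : Set X)
    (hB : IsOpen B) (hBne : B.Nonempty) (J : Set ℝ) (hJ : IsOpen J) (hJne : J.Nonempty)
    (E : Set ℝ) (hE : J ⊆ closure E) (hcont : ∀ t ∈ E, ContinuousOn (fun x => F x t) B)
    (han : ∀ x ∈ B, ∀ t ∈ J, AnalyticAt ℝ (F x) t) (ρ : ℝ) (hρ : 0 < ρ) :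
    ∃ B' ⊆ B, IsOpen B' ∧ B'.Nonempty ∧ ∃ J' ⊆ J, IsOpen J' ∧ J'.Nonempty ∧ ∃ M : ℝ, 0 ≤ M ∧
      ∀ x ∈ B', ∀ N : ℕ, ∃ p : Polynomial ℝ, p.natDegree ≤ N ∧
        ∀ t ∈ J', |F x t - p.eval t| ≤ M * ρ ^ N := by
  obtain ⟨c, hc⟩ := hJne
  let S : ℕ → Set X := fun k => {x | x ∈ B ∧ ∃ a : ℕ → ℝ, (∀ m, |a m| ≤ (k:ℝ) ^ (m+1)) ∧
    ∀ N : ℕ, ∀ t ∈ E, |t - c| < 1 / (k+1) →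
      |F x t - ∑ m ∈ Finset.range N, a m * (t - c) ^ m| ≤ k * ρ ^ N}
  obtain ⟨k, B', hB'B, hB'o, hB'ne, hB'c⟩ := sb_baire B hB hBne S (by
    intro x hx
    obtain ⟨k, a, h1, h2⟩ := sb_coeff (F x) c ρ hρ (han x hx c hc)
    exact mem_iUnion.2 ⟨k, hx, a, h1, fun N t _ ht => h2 N t ht⟩)
  have hk0 : (0:ℝ) < 1 / ((k:ℝ)+1) := by positivity
  have hball : ∀ t, t ∈ Metric.ball c (1 / ((k:ℝ)+1)) ↔ |t - c| < 1 / ((k:ℝ)+1) := fun t => by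
    rw [Metric.mem_ball, Real.dist_eq]
  refine ⟨B', hB'B, hB'o, hB'ne, J ∩ Metric.ball c (1 / ((k:ℝ)+1)), inter_subset_left,
    hJ.inter Metric.isOpen_ball, ⟨c, hc, Metric.mem_ball_self hk0⟩, k, by positivity, ?_⟩
  intro x hx
  obtain ⟨u, huS, hux⟩ := mem_closure_iff_seq_limit.1 (hB'c hx)
  choose huB a ha1 ha2 using huS
  have hK : IsCompact (Set.pi univ (fun m : ℕ => Icc (-((k:ℝ) ^ (m+1))) ((k:ℝ) ^ (m+1)))) :=
    isCompact_univ_pi fun m => isCompact_Icc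
  obtain ⟨A, hA, φ, hφ, hlim⟩ := hK.tendsto_subseq (x := a)
    (fun j m _ => abs_le.1 (ha1 j m))
  have hlim' : ∀ m, Tendsto (fun j => a (φ j) m) atTop (𝓝 (A m)) := fun m =>
    (tendsto_pi_nhds.1 hlim) m
  have hxB := hB'B hx
  -- inequality on the dense set
  have hin : ∀ N : ℕ, ∀ t ∈ E, |t - c| < 1 / ((k:ℝ)+1) →
      |F x t - ∑ m ∈ Finset.range N, A m * (t - c) ^ m| ≤ k * ρ ^ N := by
    intro N t htE ht
    have h1 : Tendsto (fun j => F (u (φ j)) t) atTop (𝓝 (F x t)) := by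
      have h2 := (hcont t htE).continuousAt (hB.mem_nhds hxB)
      exact h2.tendsto.comp (hux.comp hφ.tendsto_atTop)
    have h3 : Tendsto (fun j => |F (u (φ j)) t - ∑ m ∈ Finset.range N, a (φ j) m * (t - c) ^ m|)
        atTop (𝓝 |F x t - ∑ m ∈ Finset.range N, A m * (t - c) ^ m|) :=
      (h1.sub (tendsto_finsetSum _ fun m _ => (hlim' m).mul_const _)).abs
    exact le_of_tendsto h3 (Eventually.of_forall fun j => ha2 (φ j) N t htE ht)
  intro N
  refine ⟨∑ m ∈ Finset.range N, Polynomial.C (A m) * (Polynomial.X - Polynomial.C c) ^ m, ?_, ?_⟩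
  · refine Polynomial.natDegree_sum_le_of_forall_le _ _ fun m hm => ?_
    refine (Polynomial.natDegree_C_mul_le _ _).trans ?_
    rw [Polynomial.natDegree_pow, Polynomial.natDegree_X_sub_C, mul_one]
    exact (Finset.mem_range.1 hm).le
  · intro t ht
    have hcl : t ∈ closure (E ∩ (J ∩ Metric.ball c (1 / ((k:ℝ)+1)))) := by
      rw [inter_comm]
      exact (hJ.inter Metric.isOpen_ball).inter_closure ⟨ht, hE ht.1⟩
    obtain ⟨v, hv, hvt⟩ := mem_closure_iff_seq_limit.1 hcl
    have h1 : Tendsto (fun j => F x (v j)) atTop (𝓝 (F x t)) :=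
      (han x hxB t ht.1).continuousAt.tendsto.comp hvt
    have h3 : Tendsto (fun j => |F x (v j) - ∑ m ∈ Finset.range N, A m * (v j - c) ^ m|)
        atTop (𝓝 |F x t - ∑ m ∈ Finset.range N, A m * (t - c) ^ m|) :=
      (h1.sub (tendsto_finsetSum _ fun m _ => ((hvt.sub_const c).pow m).const_mul _)).abs
    have h4 := le_of_tendsto h3 (Eventually.of_forall fun j =>
      hin N (v j) (hv j).1 ((hball _).1 (hv j).2.2))
    simpa [Polynomial.eval_finsetSum] using h4

/-- separate analyticity -/
def SBSep {n : ℕ} (f : (Fin n → ℝ) → ℝ) (U : Set (Fin n → ℝ)) : Prop :=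
  ∀ x ∈ U, ∀ i, AnalyticAt ℝ (fun s => f (Function.update x i s)) (x i)

/-- the theorem in dimension `n` -/
def SBThm (n : ℕ) : Prop := ∀ (f : (Fin n → ℝ) → ℝ) (U : Set (Fin n → ℝ)), IsOpen U → U.Nonempty →
  SBSep f U → ∃ U₀ ⊆ U, U₀.Nonempty ∧ IsOpen U₀ ∧ AnalyticOnNhd ℝ f U₀

lemma sb_step (n : ℕ) (ih : SBThm n) (f : (Fin (n+1) → ℝ) → ℝ) (U : Set (Fin (n+1) → ℝ))
    (hU : IsOpen U) (hne : U.Nonempty) (hf : SBSep f U) (i : Fin (n+1)) (ρ : ℝ) (hρ : 0 < ρ) :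
    ∃ W ⊆ U, IsOpen W ∧ W.Nonempty ∧ ∃ M : ℝ, 0 ≤ M ∧ SBAp f W i ρ M := by
  obtain ⟨x₀, hx₀⟩ := hne
  let ins : ℝ × (Fin n → ℝ) → (Fin (n+1) → ℝ) := fun q => i.insertNth (α := fun _ => ℝ) q.1 q.2
  have hins : Continuous ins := Continuous.finInsertNth i continuous_fst continuous_snd
  have hmem0 : (x₀ i, i.removeNth x₀) ∈ ins ⁻¹' U := by
    simp only [ins, mem_preimage, Fin.insertNth_self_removeNth]; exact hx₀
  obtain ⟨J, Q, hJ, hQ, hJx, hQx, hJQ⟩ := isOpen_prod_iff.1 (hU.preimage hins) _ _ hmem0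
  have hJQ' : ∀ t ∈ J, ∀ y ∈ Q, ins (t, y) ∈ U := fun t ht y hy => hJQ ⟨ht, hy⟩
  have hslice : ∀ t ∈ J, ∃ V ⊆ Q, V.Nonempty ∧ IsOpen V ∧
      AnalyticOnNhd ℝ (fun y => f (ins (t, y))) V := by
    intro t ht
    refine ih _ Q hQ ⟨_, hQx⟩ fun y hy j => ?_
    have := hf _ (hJQ' t ht y hy) (i.succAbove j)
    simpa [ins] using this
  obtain ⟨bs, hbsc, hbse, hbs⟩ := TopologicalSpace.exists_countable_basis (Fin n → ℝ)
  have : ∃ e : ℕ → Set (Fin n → ℝ), bs ⊆ range e := by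

    exact (countable_iff_exists_subset_range).1 hbsc
  obtain ⟨e, he⟩ := this
  obtain ⟨k, J₁, hJ₁J, hJ₁o, hJ₁ne, hJ₁c⟩ := sb_baire J hJ ⟨_, hJx⟩
    (fun k => {t | e k ⊆ Q ∧ IsOpen (e k) ∧ (e k).Nonempty ∧
      ContinuousOn (fun y => f (ins (t, y))) (e k)}) (by
      intro t ht
      obtain ⟨V, hVQ, ⟨v, hv⟩, hVo, hVa⟩ := hslice t ht
      obtain ⟨b, hb, hvb, hbV⟩ := hbs.exists_subset_of_mem_open hv hVo
      obtain ⟨k, rfl⟩ := he hb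
      exact mem_iUnion.2 ⟨k, hbV.trans hVQ, hbs.isOpen hb, ⟨v, hvb⟩, hVa.continuousOn.mono hbV⟩)
  obtain ⟨t₁, ht₁⟩ := hJ₁ne
  obtain ⟨t₂, heQ, heo, hene, -⟩ := closure_nonempty_iff.1 ⟨t₁, hJ₁c ht₁⟩
  obtain ⟨B', hB'B, hB'o, hB'ne, J', hJ'J, hJ'o, hJ'ne, M, hM, happ⟩ :=
    sb_uniform (fun y t => f (ins (t, y))) (e k) heo hene J₁ hJ₁o ⟨t₁, ht₁⟩ _ hJ₁c
      (fun t ht => ht.2.2.2) (by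
        intro y hy t ht
        have := hf _ (hJQ' t (hJ₁J ht) y (heQ hy)) i
        simpa [ins] using this) ρ hρ
  have hrem : Continuous (fun x : Fin (n+1) → ℝ => i.removeNth x) := by
    unfold Fin.removeNth; fun_prop
  refine ⟨{x | x i ∈ J' ∧ i.removeNth x ∈ B'}, ?_, ?_, ?_, M, hM, ?_⟩
  · rintro x ⟨h1, h2⟩
    have := hJQ' _ (hJ₁J (hJ'J h1)) _ (heQ (hB'B h2))
    simpa [ins] using this
  · exact (hJ'o.preimage (continuous_apply i)).inter (hB'o.preimage hrem)
  · obtain ⟨t, ht⟩ := hJ'ne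
    obtain ⟨y, hy⟩ := hB'ne
    exact ⟨ins (t, y), by simpa [ins] using ht, by simpa [ins] using hy⟩
  · rintro x ⟨h1, h2⟩ N
    obtain ⟨p, hp, hpt⟩ := happ _ h2 N
    refine ⟨p, hp, fun t ht => ?_⟩
    have := hpt t (by simpa using ht.1)
    simpa [ins] using this

lemma sb_all (n : ℕ) (ih : SBThm n) (f : (Fin (n+1) → ℝ) → ℝ) (U : Set (Fin (n+1) → ℝ))
    (hU : IsOpen U) (hne : U.Nonempty) (hf : SBSep f U) (ρ : ℝ) (hρ : 0 < ρ)
    (s : Finset (Fin (n+1))) :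
    ∃ W ⊆ U, IsOpen W ∧ W.Nonempty ∧ ∃ M : ℝ, 0 ≤ M ∧ ∀ i ∈ s, SBAp f W i ρ M := by
  induction s using Finset.induction_on with
  | empty => exact ⟨U, subset_rfl, hU, hne, 0, le_rfl, by simp⟩
  | insert a s ha ihs =>
    obtain ⟨W, hWU, hWo, hWne, M, hM, hW⟩ := ihs
    obtain ⟨W', hW'W, hW'o, hW'ne, M', hM', hW'⟩ := sb_step n ih f W hWo hWne
      (fun x hx => hf x (hWU hx)) a ρ hρ
    refine ⟨W', hW'W.trans hWU, hW'o, hW'ne, max M M', le_max_of_le_left hM, ?_⟩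
    intro i hi x hx N
    rcases Finset.mem_insert.1 hi with rfl | hi
    · obtain ⟨p, hp, hpt⟩ := hW' x hx N
      exact ⟨p, hp, fun t ht => (hpt t ht).trans (by gcongr; exact le_max_right _ _)⟩
    · obtain ⟨p, hp, hpt⟩ := hW i hi x (hW'W hx) N
      exact ⟨p, hp, fun t ht => (hpt t (hW'W ht)).trans (by gcongr; exact le_max_left _ _)⟩

lemma sb_thm (n : ℕ) : SBThm n := by
  induction n with
  | zero =>
    intro f U hU hne _
    refine ⟨U, subset_rfl, hne, hU, fun x _ => ?_⟩
    have : f = fun _ => f 0 := funext fun y => by rw [Subsingleton.elim y 0]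
    rw [this]; exact analyticAt_const
  | succ n ih =>
    intro f U hU hne hf
    obtain ⟨W, hWU, hWo, hWne, M, hM, hW⟩ := sb_all n ih f U hU hne hf
      (((32:ℝ) ^ (2 * (n+1)))⁻¹ * 2⁻¹) (by positivity) Finset.univ
    obtain ⟨U₀, h1, h2⟩ := sb_final (n+1) f W hWo hWne _ M rfl hM (fun i => hW i (Finset.mem_univ i))
    exact ⟨U₀, h1.trans hWU, h2⟩

/-- **Siciak–Błocki theorem (Theorem 3.1).** If `f : U → ℝ`, defined on a nonempty open
set `U ⊆ ℝⁿ`, is real-analytic on every open interval contained in `U` and parallel to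
one of the coordinate axes, then `f` is real-analytic on some nonempty open `U₀ ⊆ U`. -/
theorem siciak_blocki_separately_analytic_on_lines
    (n : ℕ) (U : Set (Fin n → ℝ)) (hU : IsOpen U) (hne : U.Nonempty)
    (f : (Fin n → ℝ) → ℝ)
    (hlines : ∀ x ∈ U, ∀ i : Fin n,
      AnalyticOn ℝ (fun t : ℝ => f (x + t • (Pi.single i 1 : Fin n → ℝ)))
        {t : ℝ | x + t • (Pi.single i 1 : Fin n → ℝ) ∈ U}) :
    ∃ U₀ : Set (Fin n → ℝ), U₀ ⊆ U ∧ U₀.Nonempty ∧ IsOpen U₀ ∧ AnalyticOn ℝ f U₀ := by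
  have hsep : SBSep f U := by
    intro x hx i
    have hc : Continuous fun t : ℝ => x + t • (Pi.single i 1 : Fin n → ℝ) := by fun_prop
    have ho := hU.preimage hc
    have h1 := (ho.analyticOn_iff_analyticOnNhd.1 (hlines x hx i)) 0 (by simpa using hx)
    have h2 : AnalyticAt ℝ (fun s : ℝ => s - x i) (x i) := by fun_prop
    have h3 := AnalyticAt.fun_comp (g := fun t : ℝ => f (x + t • (Pi.single i 1 : Fin n → ℝ)))
      (f := fun s : ℝ => s - x i) (x := x i) (by simpa using h1) h2
    convert! h3 using 1
    funext s
    congr 1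
    funext j
    by_cases hj : j = i
    · subst hj; simp
    · simp [hj]
  obtain ⟨U₀, h1, h2, h3, h4⟩ := sb_thm n f U hU hne hsep
  exact ⟨U₀, h1, h2, h3, h4.analyticOn⟩
end

section
/- Let n ≥ 2, let U ⊆ ℝ^n be a nonempty connected open set, and let f : U → ℝ. Then the following are equivalent: (a) f is regular on U; (b) for all a, v, w ∈ ℝ^n with v, w linearly independent and every (s₀,t₀) ∈ ℝ² with a + s₀·v + t₀·w ∈ U, there exist two-variable real polynomials p, q with q(s₀,t₀) ≠ 0 such that f(a + s·v + t·w) = p(s,t)/q(s,t) for every (s,t) lying in the connected component of {(s,t) ∈ ℝ² : a + s·v + t·w ∈ U} containing (s₀,t₀) and satisfying q(s,t) ≠ 0. (Theorem 8.1.) -/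
open MvPolynomial

/-- `f` is regular on `W ⊆ ℝⁿ`: at every point of `W` it is represented by a quotient of
real polynomials whose denominator does not vanish at that point. -/
def IsRegularOnReal (n : ℕ) (W : Set (Fin n → ℝ)) (f : (Fin n → ℝ) → ℝ) : Prop :=
  ∀ x ∈ W, ∃ p q : MvPolynomial (Fin n) ℝ, eval x q ≠ 0 ∧
    ∀ y ∈ W, eval y q ≠ 0 → f y = eval y p / eval y q

theorem bezout_aux {R : Type} [CommRing R] [IsDomain R] [UniqueFactorizationMonoid R]
    (p q : Polynomial R) (h : IsRelPrime p q) (hq : q ≠ 0) :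
    ∃ a b : Polynomial R, ∃ r : R, r ≠ 0 ∧ a * p + b * q = Polynomial.C r := by
  classical
  obtain ⟨inst⟩ : Nonempty (NormalizedGCDMonoid R) := by
    let s : StrongNormalizationMonoid R := UniqueFactorizationMonoid.strongNormalizationMonoid
    exact ⟨UniqueFactorizationMonoid.toNormalizedGCDMonoid R⟩
  let K := FractionRing R
  have inj : Function.Injective (Polynomial.map (algebraMap R K)) :=
    Polynomial.map_injective _ (IsFractionRing.injective R K)
  have hcop : IsCoprime (p.map (algebraMap R K)) (q.map (algebraMap R K)) := by
    rw [← EuclideanDomain.gcd_isUnit_iff]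
    set d := EuclideanDomain.gcd (p.map (algebraMap R K)) (q.map (algebraMap R K)) with hd
    have hd0 : d ≠ 0 := by
      intro h0
      rw [hd, EuclideanDomain.gcd_eq_zero_iff] at h0
      exact hq (inj (by simpa using h0.2))
    have hdp : d ∣ p.map (algebraMap R K) := EuclideanDomain.gcd_dvd_left _ _
    have hdq : d ∣ q.map (algebraMap R K) := EuclideanDomain.gcd_dvd_right _ _
    obtain ⟨c, hc, hcd⟩ := IsLocalization.integerNormalization_spec (nonZeroDivisors R) d
    set N := IsLocalization.integerNormalization (nonZeroDivisors R) d
    have hdvd : N.primPart.map (algebraMap R K) ∣ d := by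
      have h1 : N.primPart.map (algebraMap R K) ∣ Polynomial.C (algebraMap R K c) * d := by
        have : Polynomial.C (algebraMap R K c) * d = N.map (algebraMap R K) := by
          rw [hcd, Algebra.smul_def, Polynomial.algebraMap_apply]
        rw [this]
        exact Polynomial.map_dvd _ N.primPart_dvd
      have hu : IsUnit (Polynomial.C (algebraMap R K c)) := by
        rw [Polynomial.isUnit_C, isUnit_iff_ne_zero]
        exact IsFractionRing.to_map_ne_zero_of_mem_nonZeroDivisors hc
      exact (hu.dvd_mul_left).1 h1
    have hprim := N.isPrimitive_primPart
    have e1 := hprim.dvd_of_fraction_map_dvd_fraction_map (hdvd.trans hdp)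
    have e2 := hprim.dvd_of_fraction_map_dvd_fraction_map (hdvd.trans hdq)
    exact Polynomial.isUnit_or_eq_zero_of_isUnit_integerNormalization_primPart hd0 (h e1 e2)
  obtain ⟨u, v, huv⟩ := hcop
  obtain ⟨c, hc, hcu⟩ := IsLocalization.integerNormalization_spec (nonZeroDivisors R) u
  obtain ⟨c', hc', hcv⟩ := IsLocalization.integerNormalization_spec (nonZeroDivisors R) v
  refine ⟨Polynomial.C c' * IsLocalization.integerNormalization (nonZeroDivisors R) u,
    Polynomial.C c * IsLocalization.integerNormalization (nonZeroDivisors R) v, c * c',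
    mul_ne_zero (nonZeroDivisors.ne_zero hc) (nonZeroDivisors.ne_zero hc'), inj ?_⟩
  rw [Polynomial.map_add, Polynomial.map_mul, Polynomial.map_mul, Polynomial.map_mul,
    Polynomial.map_mul, hcu, hcv, Algebra.smul_def, Algebra.smul_def,
    Polynomial.algebraMap_apply, Polynomial.algebraMap_apply]
  simp only [Polynomial.map_C, map_mul, Polynomial.map_mul]
  linear_combination Polynomial.C (algebraMap R K c) * Polynomial.C (algebraMap R K c') * huv

/-- restriction of a polynomial to the parametrized line `t ↦ z + t u`. -/
noncomputable def lineP {k : ℕ} (z u : Fin k → ℝ) (P : MvPolynomial (Fin k) ℝ) : Polynomial ℝ :=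
  aeval (fun i => Polynomial.C (z i) + Polynomial.C (u i) * Polynomial.X) P

theorem eval_lineP {k : ℕ} (z u : Fin k → ℝ) (P : MvPolynomial (Fin k) ℝ) (t : ℝ) :
    (lineP z u P).eval t = eval (z + t • u) P := by
  unfold lineP
  induction P using MvPolynomial.induction_on with
  | C a => simp
  | add p q hp hq => simp [hp, hq]
  | mul_X p i hp => simp [hp]; left; ring

/-- regular along lines -/
def LReg {k : ℕ} (B : Set (Fin k → ℝ)) (f : (Fin k → ℝ) → ℝ) : Prop :=
  ∀ z ∈ B, ∀ u : Fin k → ℝ, ∃ p q : Polynomial ℝ, q.eval 0 ≠ 0 ∧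
    ∀ t : ℝ, z + t • u ∈ B → q.eval t ≠ 0 → f (z + t • u) = p.eval t / q.eval t

theorem LReg.extend {k : ℕ} {B : Set (Fin k → ℝ)} {f : (Fin k → ℝ) → ℝ} (h : LReg B f)
    {z : Fin k → ℝ} (hz : z ∈ B) (u : Fin k → ℝ) (P Q : MvPolynomial (Fin k) ℝ)
    (T : Set ℝ) (hT : T.Infinite)
    (hTB : ∀ t ∈ T, z + t • u ∈ B)
    (hTe : ∀ t ∈ T, f (z + t • u) * eval (z + t • u) Q = eval (z + t • u) P) :
    f z * eval z Q = eval z P := by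
  obtain ⟨p, q, hq, hpq⟩ := h z hz u
  have hq0 : q ≠ 0 := by rintro rfl; simp at hq
  have key : q * (p * lineP z u Q - q * lineP z u P) = 0 := by
    apply Polynomial.eq_zero_of_infinite_isRoot
    refine hT.mono fun t ht => ?_
    simp only [Set.mem_ofPred_eq, Polynomial.IsRoot, Polynomial.eval_mul, Polynomial.eval_sub,
      eval_lineP]
    by_cases hqt : q.eval t = 0
    · simp [hqt]
    · have h1 := hpq t (hTB t ht) hqt
      rw [← hTe t ht, h1]
      field_simp
      ring
  have key2 := (mul_eq_zero.1 key).resolve_left hq0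
  have h0 := congrArg (Polynomial.eval 0) key2
  simp only [Polynomial.eval_mul, Polynomial.eval_sub, eval_lineP, zero_smul, add_zero,
    Polynomial.eval_zero] at h0
  have h1 := hpq 0 (by simpa using hz) hq
  simp only [zero_smul, add_zero] at h1
  rw [h1]
  field_simp
  linarith

theorem infinite_small {k : ℕ} {B : Set (Fin k → ℝ)} (hB : IsOpen B) {z : Fin k → ℝ} (hz : z ∈ B)
    (u : Fin k → ℝ) (g : Polynomial ℝ) (hg : g ≠ 0) :
    {t : ℝ | z + t • u ∈ B ∧ g.eval t ≠ 0}.Infinite := by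
  have hopen : IsOpen {t : ℝ | z + t • u ∈ B} := by
    apply hB.preimage; fun_prop
  have h1 : {t : ℝ | z + t • u ∈ B}.Infinite := by
    apply infinite_of_mem_nhds (0 : ℝ)
    exact hopen.mem_nhds (by simpa using hz)
  have h2 : {t : ℝ | g.eval t = 0}.Finite := by
    have := g.roots.toFinset.finite_toSet
    refine this.subset fun t ht => ?_
    simpa [hg] using ht
  refine (h1.sdiff h2).mono ?_
  rintro t ⟨a, b⟩
  exact ⟨a, b⟩

theorem LReg.cancel {k : ℕ} {B : Set (Fin k → ℝ)} (hB : IsOpen B)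
    {f : (Fin k → ℝ) → ℝ} (h : LReg B f) (P Q g : MvPolynomial (Fin k) ℝ) (hg : g ≠ 0)
    (he : ∀ y ∈ B, eval y g * (f y * eval y Q - eval y P) = 0) :
    ∀ y ∈ B, f y * eval y Q = eval y P := by
  intro z hz
  obtain ⟨y, hy⟩ : ∃ y, eval y g ≠ 0 := by
    by_contra! hcon
    exact hg (MvPolynomial.funext fun y => by simpa using hcon y)
  have hgl : lineP z (y - z) g ≠ 0 := by
    intro h0
    have := eval_lineP z (y - z) g 1
    rw [h0] at this
    simp at this
    exact hy this.symm
  refine h.extend hz (y - z) P Q _ (infinite_small hB hz (y - z) _ hgl) (fun t ht => ht.1) ?_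
  rintro t ⟨ht1, ht2⟩
  rw [eval_lineP] at ht2
  have := (mul_eq_zero.1 (he _ ht1)).resolve_left ht2
  linarith

theorem eq_of_ball {k : ℕ} {c : Fin k → ℝ} {B : Set (Fin k → ℝ)} (hB : IsOpen B) (hc : c ∈ B)
    (P Q : MvPolynomial (Fin k) ℝ) (h : ∀ y ∈ B, eval y P = eval y Q) : P = Q := by
  obtain ⟨r, hr, hrB⟩ := Metric.isOpen_iff.1 hB c hc
  refine MvPolynomial.funext_set (fun i => Metric.ball (c i) r) (fun i => ?_) fun y hy => h y (hrB ?_)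
  · exact infinite_of_mem_nhds (c i) (Metric.ball_mem_nhds _ hr)
  · rw [ball_pi _ hr]; exact hy

theorem kernel_aux {ι κ : Type} [Fintype ι] [Fintype κ] [DecidableEq κ]
    (M : Matrix ι κ (Polynomial ℝ)) (Y : Set ℝ) (hY : Y.Infinite)
    (h : ∀ y ∈ Y, ∃ v : κ → ℝ, v ≠ 0 ∧ ∀ i, ∑ j, (M i j).eval y * v j = 0) :
    ∃ c : κ → Polynomial ℝ, c ≠ 0 ∧ ∀ y i, ∑ j, (M i j).eval y * (c j).eval y = 0 := by
  have hdet : (M.transpose * M).det = 0 := by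
    apply Polynomial.eq_zero_of_infinite_isRoot
    refine hY.mono fun y hy => ?_
    obtain ⟨v, hv, hMv⟩ := h y hy
    have e1 : (Polynomial.evalRingHom y) (M.transpose * M).det
        = ((M.map (Polynomial.evalRingHom y)).transpose * (M.map (Polynomial.evalRingHom y))).det := by
      rw [RingHom.map_det]
      rw [RingHom.mapMatrix_apply, Matrix.map_mul, Matrix.transpose_map]
    change (Polynomial.evalRingHom y) (M.transpose * M).det = 0
    rw [e1, ← Matrix.exists_mulVec_eq_zero_iff]
    refine ⟨v, hv, ?_⟩
    rw [← Matrix.mulVec_mulVec]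
    have : (M.map (Polynomial.evalRingHom y)).mulVec v = 0 := by
      ext i
      simpa [Matrix.mulVec, dotProduct] using hMv i
    rw [this, Matrix.mulVec_zero]
  obtain ⟨c, hc, hMc⟩ := Matrix.exists_mulVec_eq_zero_iff.2 hdet
  refine ⟨c, hc, fun y => ?_⟩
  have h1 : dotProduct (M.mulVec c) (M.mulVec c) = 0 := by
    have := congrArg (dotProduct c) hMc
    rw [← Matrix.mulVec_mulVec, Matrix.dotProduct_mulVec, Matrix.vecMul_transpose,
      dotProduct_zero] at this
    exact this
  have h2 : ∑ i, (∑ j, (M i j).eval y * (c j).eval y) * (∑ j, (M i j).eval y * (c j).eval y) = 0 := by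
    have := congrArg (Polynomial.eval y) h1
    simpa [dotProduct, Matrix.mulVec, Polynomial.eval_finsetSum] using this
  intro i
  rw [Finset.sum_eq_zero_iff_of_nonneg (fun i _ => mul_self_nonneg _)] at h2
  exact mul_self_eq_zero.1 (h2 i (Finset.mem_univ i))

noncomputable def emF {k e : ℕ} (m : Fin k → Fin (e + 1)) : Fin k →₀ ℕ :=
  Finsupp.equivFunOnFinite.symm (fun i => (m i : ℕ))

theorem emF_inj {k e : ℕ} : Function.Injective (emF (k := k) (e := e)) := by
  intro m m' h
  funext i
  have := DFunLike.congr_fun h i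
  exact Fin.ext this

noncomputable def polV {k e : ℕ} (v : (Fin k → Fin (e + 1)) → ℝ) : MvPolynomial (Fin k) ℝ :=
  ∑ m, monomial (emF m) (v m)

theorem coeff_polV {k e : ℕ} (v : (Fin k → Fin (e + 1)) → ℝ) (m) :
    coeff (emF m) (polV v) = v m := by
  classical
  simp [polV, coeff_sum, coeff_monomial, emF_inj.eq_iff]

theorem degreeOf_polV {k e : ℕ} (v : (Fin k → Fin (e + 1)) → ℝ) (i : Fin k) :
    degreeOf i (polV v) ≤ e := by
  classical
  unfold polV
  refine (degreeOf_sum_le _ _ _).trans (Finset.sup_le fun m _ => ?_)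
  rw [degreeOf_le_iff]
  intro d hd
  have := support_monomial_subset hd
  rw [Finset.mem_singleton] at this
  subst this
  have := (m i).2
  change (m i : ℕ) ≤ e
  omega

theorem eq_polV {k e : ℕ} (p : MvPolynomial (Fin k) ℝ) (hp : ∀ i, degreeOf i p ≤ e) :
    p = polV (fun m : Fin k → Fin (e + 1) => coeff (emF m) p) := by
  classical
  ext d
  by_cases hd : ∀ i, d i ≤ e
  · let m : Fin k → Fin (e + 1) := fun i => ⟨d i, Nat.lt_succ_of_le (hd i)⟩
    have hm : emF m = d := by ext i; rfl
    rw [← hm, coeff_polV]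
  · push Not at hd
    obtain ⟨i, hi⟩ := hd
    have h1 : ∀ q : MvPolynomial (Fin k) ℝ, degreeOf i q ≤ e → coeff d q = 0 := by
      intro q hq
      by_contra hne
      have := (degreeOf_le_iff.1 hq) d (mem_support_iff.2 hne)
      omega
    rw [h1 _ (hp i), h1 _ (degreeOf_polV _ i)]

theorem eval_polV {k e : ℕ} (v : (Fin k → Fin (e + 1)) → ℝ) (x : Fin k → ℝ) :
    eval x (polV v) = ∑ m, v m * eval x (monomial (emF m) 1) := by
  simp [polV, eval_monomial]

noncomputable def bigP {k e : ℕ} (c : (Fin k → Fin (e + 1)) → Polynomial ℝ) :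
    MvPolynomial (Fin (k + 1)) ℝ :=
  ∑ m, (Polynomial.aeval (X 0 : MvPolynomial (Fin (k + 1)) ℝ) (c m)) *
    rename Fin.succ (monomial (emF m) (1 : ℝ))

theorem eval_bigP {k e : ℕ} (c : (Fin k → Fin (e + 1)) → Polynomial ℝ) (y : ℝ) (x : Fin k → ℝ) :
    eval (Fin.cons y x : Fin (k + 1) → ℝ) (bigP c) = eval x (polV (fun m => (c m).eval y)) := by
  rw [eval_polV, bigP, map_sum]
  refine Finset.sum_congr rfl fun m _ => ?_
  rw [map_mul, eval_rename]
  congr 1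
  have : ∀ p : Polynomial ℝ, eval (Fin.cons y x : Fin (k + 1) → ℝ)
      (Polynomial.aeval (X 0 : MvPolynomial (Fin (k + 1)) ℝ) p) = p.eval y := by
    intro p
    induction p using Polynomial.induction_on' with
    | add p q hp hq => simp [hp, hq]
    | monomial n a => simp [Polynomial.aeval_monomial, algebraMap_eq]
  exact this _

theorem cons_mem_ball {k : ℕ} {c : Fin (k + 1) → ℝ} {r : ℝ} (hr : 0 < r) (y : ℝ) (x : Fin k → ℝ) :
    (Fin.cons y x : Fin (k + 1) → ℝ) ∈ Metric.ball c r ↔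
      y ∈ Metric.ball (c 0) r ∧ x ∈ Metric.ball (Fin.tail c) r := by
  simp only [ball_pi _ hr, Set.mem_univ_pi]
  rw [Fin.forall_fin_succ]
  simp [Fin.tail]

theorem cons_add_smul {k : ℕ} (y s t : ℝ) (x u : Fin k → ℝ) :
    (Fin.cons y x : Fin (k + 1) → ℝ) + t • (Fin.cons s u : Fin (k + 1) → ℝ)
      = Fin.cons (y + t * s) (x + t • u) := by
  funext i
  refine Fin.cases ?_ (fun j => ?_) i <;> simp

theorem LReg.slice {k : ℕ} {c : Fin (k + 1) → ℝ} {r : ℝ} (hr : 0 < r)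
    {f : (Fin (k + 1) → ℝ) → ℝ} (h : LReg (Metric.ball c r) f) {y : ℝ}
    (hy : y ∈ Metric.ball (c 0) r) :
    LReg (Metric.ball (Fin.tail c) r) (fun x => f (Fin.cons y x)) := by
  intro z hz u
  obtain ⟨p, q, hq, hpq⟩ := h (Fin.cons y z) ((cons_mem_ball hr _ _).2 ⟨hy, hz⟩) (Fin.cons 0 u)
  refine ⟨p, q, hq, fun t ht hqt => ?_⟩
  have := hpq t
  rw [cons_add_smul, mul_zero, add_zero, cons_mem_ball hr] at this
  exact this ⟨hy, ht⟩ hqt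

theorem LReg.vert {k : ℕ} {c : Fin (k + 1) → ℝ} {r : ℝ} (hr : 0 < r)
    {f : (Fin (k + 1) → ℝ) → ℝ} (h : LReg (Metric.ball c r) f) (x : Fin k → ℝ)
    (hx : x ∈ Metric.ball (Fin.tail c) r) :
    ∃ a b : Polynomial ℝ, b ≠ 0 ∧ ∀ y ∈ Metric.ball (c 0) r, b.eval y ≠ 0 →
      f (Fin.cons y x) * b.eval y = a.eval y := by
  obtain ⟨p, q, hq, hpq⟩ := h (Fin.cons (c 0) x)
    ((cons_mem_ball hr _ _).2 ⟨Metric.mem_ball_self hr, hx⟩) (Fin.cons 1 0)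
  refine ⟨p.comp (Polynomial.X - Polynomial.C (c 0)), q.comp (Polynomial.X - Polynomial.C (c 0)),
    ?_, fun y hy hby => ?_⟩
  · intro h0
    have := congrArg (Polynomial.eval (c 0)) h0
    simp at this
    exact hq this
  · simp only [Polynomial.eval_comp, Polynomial.eval_sub, Polynomial.eval_X, Polynomial.eval_C]
      at hby ⊢
    have := hpq (y - c 0)
    rw [cons_add_smul, mul_one, smul_zero, add_zero, cons_mem_ball hr] at this
    rw [add_sub_cancel] at this
    rw [this ⟨hy, hx⟩ hby]
    field_simp

theorem local_rational : ∀ (k : ℕ) (c : Fin k → ℝ) (r : ℝ), 0 < r → ∀ f : (Fin k → ℝ) → ℝ,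
    LReg (Metric.ball c r) f → ∃ P Q : MvPolynomial (Fin k) ℝ, Q ≠ 0 ∧
      ∀ y ∈ Metric.ball c r, f y * eval y Q = eval y P := by
  intro k
  induction k with
  | zero =>
    intro c r hr f h
    refine ⟨C (f c), 1, one_ne_zero, fun y hy => ?_⟩
    rw [Subsingleton.elim y c]; simp
  | succ k ih =>
    intro c r hr f h
    classical
    let B : ℕ → Set ℝ := fun e => {y | y ∈ Metric.ball (c 0) r ∧
      ∃ p q : MvPolynomial (Fin k) ℝ, (∀ i, degreeOf i p ≤ e) ∧ (∀ i, degreeOf i q ≤ e) ∧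
        q ≠ 0 ∧ ∀ x ∈ Metric.ball (Fin.tail c) r, f (Fin.cons y x) * eval x q = eval x p}
    obtain ⟨e, he⟩ : ∃ e, (B e).Infinite := by
      by_contra! hcon
      have hsub : Metric.ball (c 0) r ⊆ ⋃ e, B e := by
        intro y hy
        obtain ⟨p, q, hq, hpq⟩ := ih (Fin.tail c) r hr _ (h.slice hr hy)
        rw [Set.mem_iUnion]
        refine ⟨max p.totalDegree q.totalDegree, hy, p, q, fun i => ?_, fun i => ?_, hq, hpq⟩
        · exact (degreeOf_le_totalDegree p i).trans (le_max_left _ _)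
        · exact (degreeOf_le_totalDegree q i).trans (le_max_right _ _)
      have hc : (Metric.ball (c 0) r).Countable :=
        (Set.countable_iUnion fun e => (hcon e).countable).mono hsub
      rw [Real.ball_eq_Ioo, Cardinal.Real.Ioo_countable_iff] at hc
      linarith
    have hgrid : ∀ i : Fin k, ∃ S : Finset ℝ, (S : Set ℝ) ⊆ Metric.ball (Fin.tail c i) r ∧
        S.card = 2 * e + 1 := fun i =>
      (infinite_of_mem_nhds (Fin.tail c i) (Metric.ball_mem_nhds _ hr)).exists_subset_card_eq _
    choose S hS hcard using hgrid
    let G : Finset (Fin k → ℝ) := Fintype.piFinset S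
    have hG : ∀ x ∈ G, x ∈ Metric.ball (Fin.tail c) r := by
      intro x hx
      rw [ball_pi _ hr, Set.mem_univ_pi]
      exact fun i => hS i (Fintype.mem_piFinset.1 hx i)
    have hvert : ∀ x : G, ∃ a b : Polynomial ℝ, b ≠ 0 ∧ ∀ y ∈ Metric.ball (c 0) r, b.eval y ≠ 0 →
      f (Fin.cons y x.1) * b.eval y = a.eval y := fun x => h.vert hr x.1 (hG x.1 x.2)
    choose a b hb hab using hvert
    let Y : Set ℝ := B e \ ⋃ x : G, {y | (b x).eval y = 0}
    have hY : Y.Infinite := by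
      refine he.sdiff (Set.finite_iUnion fun x => ?_)
      refine (b x).roots.toFinset.finite_toSet.subset fun t ht => ?_
      simpa [hb x] using ht
    have hYb : ∀ y ∈ Y, ∀ x : G, (b x).eval y ≠ 0 := by
      intro y hy x h0
      exact hy.2 (Set.mem_iUnion.2 ⟨x, h0⟩)
    let Sx := Fin k → Fin (e + 1)
    let M : Matrix G (Sx ⊕ Sx) (Polynomial ℝ) := fun x j =>
      Sum.elim (fun m => b x * Polynomial.C (eval x.1 (monomial (emF m) 1)))
        (fun m => - a x * Polynomial.C (eval x.1 (monomial (emF m) 1))) j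
    have hM : ∀ (y : ℝ) (x : G) (v : Sx ⊕ Sx → ℝ), ∑ j, (M x j).eval y * v j =
        (b x).eval y * eval x.1 (polV fun m => v (Sum.inl m)) -
          (a x).eval y * eval x.1 (polV fun m => v (Sum.inr m)) := by
      intro y x v
      rw [Fintype.sum_sum_type, eval_polV, eval_polV, Finset.mul_sum, Finset.mul_sum,
        sub_eq_add_neg, ← Finset.sum_neg_distrib]
      congr 1
      · refine Finset.sum_congr rfl fun m _ => ?_
        simp only [M, Sum.elim_inl, Polynomial.eval_mul, Polynomial.eval_C]
        ring
      · refine Finset.sum_congr rfl fun m _ => ?_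
        simp only [M, Sum.elim_inr, Polynomial.eval_mul, Polynomial.eval_C, Polynomial.eval_neg]
        ring
    obtain ⟨cc, hcc, hker⟩ := kernel_aux M Y hY (by
      intro y hy
      obtain ⟨hyI, p, q, hp, hq, hq0, hpq⟩ := hy.1
      refine ⟨Sum.elim (fun m => coeff (emF m) p) (fun m => coeff (emF m) q), ?_, fun x => ?_⟩
      · intro h0
        apply hq0
        rw [eq_polV q hq]
        have : (fun m : Sx => coeff (emF m) q) = fun _ => 0 := by
          funext m
          exact congrFun h0 (Sum.inr m)
        change polV (fun m : Sx => coeff (emF m) q) = 0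
        rw [this]
        simp [polV]
      · rw [hM]
        simp only [Sum.elim_inl, Sum.elim_inr]
        rw [← eq_polV p hp, ← eq_polV q hq, ← hpq x.1 (hG _ x.2), ← hab x y hyI (hYb y hy x)]
        ring)
    let cl : Sx → Polynomial ℝ := fun m => cc (Sum.inl m)
    let cr : Sx → Polynomial ℝ := fun m => cc (Sum.inr m)
    have hslice : ∀ y ∈ Y, ∀ x ∈ Metric.ball (Fin.tail c) r,
        f (Fin.cons y x) * eval x (polV fun m => (cr m).eval y)
          = eval x (polV fun m => (cl m).eval y) := by
      intro y hy
      obtain ⟨hyI, p, q, hp, hq, hq0, hpq⟩ := hy.1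
      have hz : (polV fun m => (cl m).eval y) * q - (polV fun m => (cr m).eval y) * p = 0 := by
        refine eq_zero_of_eval_zero_at_prod_finset _ S (fun i => ?_) fun x hx => ?_
        · rw [hcard]
          refine Nat.lt_succ_of_le ((degreeOf_sub_le _ _ _).trans (max_le ?_ ?_))
          · refine (degreeOf_mul_le _ _ _).trans ?_
            have := degreeOf_polV (fun m => (cl m).eval y) i
            have := hq i
            omega
          · refine (degreeOf_mul_le _ _ _).trans ?_
            have := degreeOf_polV (fun m => (cr m).eval y) i
            have := hp i
            omega
        · have hxG : x ∈ G := Fintype.mem_piFinset.2 hx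
          have h1 := hker y ⟨x, hxG⟩
          rw [hM y ⟨x, hxG⟩ (fun j => (cc j).eval y), ← hab ⟨x, hxG⟩ y hyI (hYb y hy _)] at h1
          have h2 : eval x (polV fun m => (cl m).eval y)
              = f (Fin.cons y x) * eval x (polV fun m => (cr m).eval y) := by
            apply mul_left_cancel₀ (hYb y hy ⟨x, hxG⟩)
            linear_combination h1
          rw [map_sub, map_mul, map_mul, h2, ← hpq x (hG x hxG)]
          ring
      refine (h.slice hr hyI).cancel Metric.isOpen_ball _ _ q hq0 fun x hx => ?_
      have h3 := congrArg (eval x) hz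
      rw [map_sub, map_mul, map_mul, ← hpq x hx, map_zero] at h3
      linear_combination -h3
    have hmain : ∀ y ∈ Metric.ball c r, f y * eval y (bigP cr) = eval y (bigP cl) := by
      intro z hz
      obtain ⟨y0, x, rfl⟩ : ∃ y x, z = Fin.cons y x := ⟨z 0, Fin.tail z, (Fin.cons_self_tail z).symm⟩
      have hx := ((cons_mem_ball hr _ _).1 hz).2
      refine h.extend hz (Fin.cons 1 0) _ _ ((fun y => y - y0) '' Y)
        (hY.image (sub_left_injective.injOn)) ?_ ?_
      · rintro _ ⟨y, hy, rfl⟩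
        simp only [cons_add_smul, mul_one, smul_zero, add_zero, add_sub_cancel]
        exact (cons_mem_ball hr _ _).2 ⟨hy.1.1, hx⟩
      · rintro _ ⟨y, hy, rfl⟩
        simp only [cons_add_smul, mul_one, smul_zero, add_zero, add_sub_cancel]
        rw [eval_bigP, eval_bigP]
        exact hslice y hy x hx
    have hzero : ∀ c' : Sx → Polynomial ℝ, bigP c' = 0 → ∀ m, c' m = 0 := by
      intro c' h0 m
      apply Polynomial.funext
      intro y
      have : polV (fun m => (c' m).eval y) = 0 := by
        apply MvPolynomial.funext
        intro x
        rw [← eval_bigP, h0]; simp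
      rw [← coeff_polV (fun m => (c' m).eval y) m, this]; simp
    refine ⟨bigP cl, bigP cr, fun hQ => hcc ?_, hmain⟩
    have hP : bigP cl = 0 := by
      refine eq_of_ball Metric.isOpen_ball (Metric.mem_ball_self hr (x := c)) _ _ fun y hy => ?_
      rw [← hmain y hy, hQ]; simp
    funext j
    rcases j with m | m
    · exact hzero cl hP m
    · exact hzero cr hQ m

/-- the condition on planes -/
def PlaneReg (n : ℕ) (U : Set (Fin n → ℝ)) (f : (Fin n → ℝ) → ℝ) : Prop :=
  ∀ a v w : Fin n → ℝ, LinearIndependent ℝ ![v, w] →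
        ∀ s₀ t₀ : ℝ, a + s₀ • v + t₀ • w ∈ U →
          ∃ p q : MvPolynomial (Fin 2) ℝ, eval ![s₀, t₀] q ≠ 0 ∧
            ∀ s t : ℝ,
              (s, t) ∈ connectedComponentIn
                {st : ℝ × ℝ | a + st.1 • v + st.2 • w ∈ U} (s₀, t₀) →
              eval ![s, t] q ≠ 0 →
              f (a + s • v + t • w) = eval ![s, t] p / eval ![s, t] q

theorem PlaneReg.convex {n : ℕ} {U : Set (Fin n → ℝ)} {f : (Fin n → ℝ) → ℝ}
    (h : PlaneReg n U f) {B : Set (Fin n → ℝ)} (hB : Convex ℝ B) (hBU : B ⊆ U)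
    (a v w : Fin n → ℝ) (hvw : LinearIndependent ℝ ![v, w]) (ha : a ∈ B) :
    ∃ p q : MvPolynomial (Fin 2) ℝ, eval ![0, 0] q ≠ 0 ∧
      ∀ s t : ℝ, a + s • v + t • w ∈ B → eval ![s, t] q ≠ 0 →
        f (a + s • v + t • w) = eval ![s, t] p / eval ![s, t] q := by
  obtain ⟨p, q, hq, hpq⟩ := h a v w hvw 0 0 (by simpa using hBU ha)
  refine ⟨p, q, hq, fun s t hst => hpq s t ?_⟩
  have hconv : Convex ℝ {st : ℝ × ℝ | a + st.1 • v + st.2 • w ∈ B} := by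
    intro x hx y hy α β hα hβ hαβ
    have := hB hx hy hα hβ hαβ
    change a + (α • x + β • y).1 • v + (α • x + β • y).2 • w ∈ B
    convert this using 1
    have hα' : α = 1 - β := by linarith
    subst hα'
    funext i
    simp
    ring
  refine hconv.isPreconnected.subset_connectedComponentIn (x := ((0 : ℝ), (0 : ℝ))) ?_ ?_ ?_
  · change a + (0 : ℝ) • v + (0 : ℝ) • w ∈ B
    simpa using ha
  · intro st hst
    exact hBU hst
  · exact hst

theorem PlaneReg.lreg {n : ℕ} (hn : 2 ≤ n) {U : Set (Fin n → ℝ)} {f : (Fin n → ℝ) → ℝ}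
    (h : PlaneReg n U f) {B : Set (Fin n → ℝ)} (hB : Convex ℝ B) (hBU : B ⊆ U) : LReg B f := by
  intro z hz u
  by_cases hu : u = 0
  · subst hu
    exact ⟨Polynomial.C (f z), 1, by simp, by simp⟩
  obtain ⟨w, hw⟩ := exists_linearIndependent_pair_of_one_lt_finrank (R := ℝ)
    (M := Fin n → ℝ) (by simp; omega) hu
  obtain ⟨p, q, hq, hpq⟩ := h.convex hB hBU z u w hw hz
  have key : ∀ (P : MvPolynomial (Fin 2) ℝ) (t : ℝ),
      (lineP ![0, 0] ![1, 0] P).eval t = eval ![t, 0] P := by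
    intro P t
    rw [eval_lineP]
    congr 2
    simp
  refine ⟨lineP ![0, 0] ![1, 0] p, lineP ![0, 0] ![1, 0] q, ?_, fun t ht hqt => ?_⟩
  · rw [key]; exact hq
  · rw [key] at hqt
    rw [key, key]
    have := hpq t 0
    rw [zero_smul, add_zero] at this
    exact this ht hqt

noncomputable def affP {n : ℕ} (A : (Fin n → ℝ) →ₗ[ℝ] (Fin n → ℝ)) (x : Fin n → ℝ) :
    MvPolynomial (Fin n) ℝ →ₐ[ℝ] MvPolynomial (Fin n) ℝ :=
  aeval (fun i => C (x i) + ∑ j, C (A (Pi.single j 1) i) * X j)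

theorem eval_affP {n : ℕ} (A : (Fin n → ℝ) →ₗ[ℝ] (Fin n → ℝ)) (x y : Fin n → ℝ)
    (P : MvPolynomial (Fin n) ℝ) : eval y (affP A x P) = eval (x + A y) P := by
  unfold affP
  induction P using MvPolynomial.induction_on with
  | C a => simp
  | add p q hp hq => rw [map_add, map_add, hp, hq, map_add]
  | mul_X p i hp =>
    rw [map_mul, map_mul, hp, aeval_X, map_mul, eval_X]
    congr 1
    rw [map_add, eval_C, map_sum, Pi.add_apply]
    congr 1
    conv_rhs => rw [LinearMap.pi_apply_eq_sum_univ A y]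
    rw [Finset.sum_apply]
    refine Finset.sum_congr rfl fun j _ => ?_
    have : (fun j' : Fin n => if j = j' then (1 : ℝ) else 0) = Pi.single j 1 := by
      funext j'
      simp [Pi.single_apply, eq_comm]
    rw [this]
    simp [mul_comm]

noncomputable def affE {n : ℕ} (A : (Fin n → ℝ) ≃ₗ[ℝ] (Fin n → ℝ)) (x : Fin n → ℝ) :
    MvPolynomial (Fin n) ℝ ≃ₐ[ℝ] MvPolynomial (Fin n) ℝ :=
  AlgEquiv.ofAlgHom (affP A.toLinearMap x) (affP A.symm.toLinearMap (-(A.symm x)))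
    (by
      refine AlgHom.ext fun P => MvPolynomial.funext fun y => ?_
      simp [eval_affP])
    (by
      refine AlgHom.ext fun P => MvPolynomial.funext fun y => ?_
      simp [eval_affP])


theorem eval_aeval_X0 (g : Polynomial ℝ) (z : Fin 2 → ℝ) :
    eval z (Polynomial.aeval (X 0 : MvPolynomial (Fin 2) ℝ) g) = g.eval (z 0) := by
  induction g using Polynomial.induction_on' with
  | add p q hp hq => simp [hp, hq]
  | monomial n a => simp [Polynomial.aeval_monomial, algebraMap_eq]

theorem pole_two (a b P Q p q : MvPolynomial (Fin 2) ℝ) (R : Polynomial ℝ) (hR : R ≠ 0)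
    (hbez : a * P + b * Q = Polynomial.aeval (X 0) R) (hpQ : p * Q = q * P)
    (hq : eval ![0, 0] q ≠ 0) (hQ : eval ![0, 0] Q = 0) (hQ1 : eval ![0, 1] Q ≠ 0) : False := by
  obtain ⟨R0, hRR0, hR0n⟩ := R.exists_eq_pow_rootMultiplicity_mul_and_not_dvd hR 0
  generalize R.rootMultiplicity 0 = m at hRR0
  rw [Polynomial.C_0, sub_zero] at hRR0 hR0n
  have hbez' : a * P + b * Q = X 0 ^ m * Polynomial.aeval (X 0) R0 := by
    rw [hbez, hRR0]
    simp
  have hfin : Q * (a * p + b * q) = X 0 ^ m * (Polynomial.aeval (X 0) R0 * q) := by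
    linear_combination q * hbez' + a * hpQ
  have hX : ¬ (X 0 : MvPolynomial (Fin 2) ℝ) ∣ Q := by
    rintro ⟨g, hg⟩
    apply hQ1
    rw [hg]
    simp
  obtain ⟨c', hc'⟩ := (X_prime (R := ℝ) (i := (0 : Fin 2))).pow_dvd_of_dvd_mul_left m hX
    (Dvd.intro _ hfin.symm)
  rw [hc', mul_left_comm] at hfin
  have hfin2 := mul_left_cancel₀ (pow_ne_zero m (X_ne_zero (R := ℝ) (0 : Fin 2))) hfin
  have hev := congrArg (eval ![0, 0]) hfin2
  rw [map_mul, map_mul, hQ, eval_aeval_X0, zero_mul, eq_comm, mul_eq_zero] at hev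
  rcases hev with h1 | h1
  · apply hR0n
    rw [Polynomial.X_dvd_iff, Polynomial.coeff_zero_eq_eval_zero]
    exact h1
  · exact hq h1

theorem bezout_mv {k : ℕ} (A : (Fin (k + 1) → ℝ) ≃ₗ[ℝ] (Fin (k + 1) → ℝ)) (x : Fin (k + 1) → ℝ)
    (P Q : MvPolynomial (Fin (k + 1)) ℝ) (hrel : IsRelPrime P Q) (hQ0 : Q ≠ 0) :
    ∃ (a' b' : MvPolynomial (Fin (k + 1)) ℝ) (ρ : MvPolynomial (Fin k) ℝ), ρ ≠ 0 ∧
      ∀ (t : ℝ) (s : Fin k → ℝ),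
      eval (Fin.cons t s : Fin (k + 1) → ℝ) a' * eval (x + A (Fin.cons t s)) P +
      eval (Fin.cons t s : Fin (k + 1) → ℝ) b' * eval (x + A (Fin.cons t s)) Q = eval s ρ := by
  obtain ⟨Ψ, hΨ⟩ : ∃ Ψ : MvPolynomial (Fin (k + 1)) ℝ ≃ₐ[ℝ] Polynomial (MvPolynomial (Fin k) ℝ),
      ∀ G, Ψ G = finSuccEquiv ℝ k (affP A.toLinearMap x G) :=
    ⟨(affE A x).trans (finSuccEquiv ℝ k), fun G => rfl⟩
  have hrel' : IsRelPrime (Ψ P) (Ψ Q) := by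
    intro d h1 h2
    have h1' := map_dvd Ψ.symm h1
    have h2' := map_dvd Ψ.symm h2
    rw [AlgEquiv.symm_apply_apply] at h1' h2'
    have := (hrel h1' h2').map Ψ
    rwa [AlgEquiv.apply_symm_apply] at this
  obtain ⟨a, b, ρ, hρ, hab⟩ := bezout_aux (Ψ P) (Ψ Q) hrel'
    (fun h0 => hQ0 (Ψ.injective (by rw [h0, map_zero])))
  obtain ⟨a', rfl⟩ := (finSuccEquiv ℝ k).surjective a
  obtain ⟨b', rfl⟩ := (finSuccEquiv ℝ k).surjective b
  refine ⟨a', b', ρ, hρ, fun t s => ?_⟩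
  have e1 := congrArg (fun g => Polynomial.eval t (Polynomial.map (eval s) g)) hab
  simp only [Polynomial.map_add, Polynomial.map_mul, Polynomial.eval_add, Polynomial.eval_mul,
    Polynomial.map_C, Polynomial.eval_C] at e1
  rw [← e1, hΨ, hΨ, ← eval_eq_eval_mv_eval', ← eval_eq_eval_mv_eval',
    ← eval_eq_eval_mv_eval', ← eval_eq_eval_mv_eval', eval_affP, eval_affP]
  rfl

theorem sigma_mv {k : ℕ} (v' : Fin k → ℝ) (G : MvPolynomial (Fin (k + 1)) ℝ) :
    ∃ H : MvPolynomial (Fin 2) ℝ, ∀ z : Fin 2 → ℝ,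
      eval z H = eval (Fin.cons (z 1) (z 0 • v') : Fin (k + 1) → ℝ) G := by
  refine ⟨aeval (Fin.cons (X 1) (fun j => C (v' j) * X 0) :
    Fin (k + 1) → MvPolynomial (Fin 2) ℝ) G, fun z => ?_⟩
  induction G using MvPolynomial.induction_on with
  | C a => simp
  | add p q hp hq => rw [map_add, map_add, hp, hq, map_add]
  | mul_X p i hp =>
    rw [map_mul, map_mul, hp, map_mul, eval_X]
    congr 1
    refine Fin.cases ?_ (fun j => ?_) i <;> simp [mul_comm]

theorem no_pole {k : ℕ} {U : Set (Fin (k + 1) → ℝ)} {f : (Fin (k + 1) → ℝ) → ℝ}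
    (h : PlaneReg (k + 1) U f) {x : Fin (k + 1) → ℝ} {B : Set (Fin (k + 1) → ℝ)}
    (hB : Convex ℝ B) (hBo : IsOpen B) (hBU : B ⊆ U) (hx : x ∈ B)
    (P Q : MvPolynomial (Fin (k + 1)) ℝ) (hrel : IsRelPrime P Q) (hQ0 : Q ≠ 0)
    (hPQ : ∀ y ∈ B, f y * eval y Q = eval y P) : eval x Q ≠ 0 := by
  intro hQx
  have hPx : eval x P = 0 := by rw [← hPQ x hx, hQx, mul_zero]
  obtain ⟨y, hy⟩ : ∃ y, eval y Q ≠ 0 := by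
    by_contra! hcon
    exact hQ0 (MvPolynomial.funext fun y => by simpa using hcon y)
  have hyx : y - x ≠ 0 := by
    intro h0
    rw [sub_eq_zero] at h0
    exact hy (h0 ▸ hQx)
  have he0 : (Fin.cons 1 0 : Fin (k + 1) → ℝ) ≠ 0 := by
    intro h0
    have := congrFun h0 0
    simp at this
  obtain ⟨A', hA'⟩ := SeparatingDual.exists_continuousLinearEquiv_apply_eq (R := ℝ) he0 hyx
  obtain ⟨A, hA⟩ : ∃ A : (Fin (k + 1) → ℝ) ≃ₗ[ℝ] (Fin (k + 1) → ℝ), A (Fin.cons 1 0) = y - x :=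
    ⟨A'.toLinearEquiv, hA'⟩
  obtain ⟨a', b', ρ, hρ, hid⟩ := bezout_mv A x P Q hrel hQ0
  obtain ⟨v', hv'⟩ : ∃ v', eval v' ρ ≠ 0 := by
    by_contra! hcon
    exact hρ (MvPolynomial.funext fun y => by simpa using hcon y)
  have hv0 : v' ≠ 0 := by
    rintro rfl
    apply hv'
    rw [← hid 0 0]
    have : (Fin.cons 0 0 : Fin (k + 1) → ℝ) = 0 := by
      funext i; refine Fin.cases ?_ (fun j => ?_) i <;> simp
    rw [this]
    simp [hPx, hQx]
  obtain ⟨v, hv⟩ : ∃ v, v = A (Fin.cons 0 v') := ⟨_, rfl⟩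
  obtain ⟨w, hw⟩ : ∃ w, w = A (Fin.cons 1 0) := ⟨_, rfl⟩
  have hcons : ∀ s t : ℝ, A (Fin.cons t (s • v')) = s • v + t • w := by
    intro s t
    rw [hv, hw, ← map_smul, ← map_smul, ← map_add]
    congr 1
    funext i; refine Fin.cases ?_ (fun j => ?_) i <;> simp
  have hli : LinearIndependent ℝ ![v, w] := by
    rw [LinearIndependent.pair_iff]
    intro s t hst
    rw [← hcons, map_eq_zero_iff A A.injective] at hst
    have h1 : t = 0 := by simpa using congrFun hst 0
    have h2 : s • v' = 0 := by
      funext j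
      simpa using congrFun hst j.succ
    exact ⟨(smul_eq_zero.1 h2).resolve_right hv0, h1⟩
  obtain ⟨p, q, hq, hpq⟩ := h.convex hB hBU x v w hli hx
  obtain ⟨P2, hP2'⟩ := sigma_mv v' (affP A.toLinearMap x P)
  obtain ⟨Q2, hQ2'⟩ := sigma_mv v' (affP A.toLinearMap x Q)
  obtain ⟨a2, ha2⟩ := sigma_mv v' a'
  obtain ⟨b2, hb2⟩ := sigma_mv v' b'
  have hP2 : ∀ z : Fin 2 → ℝ, eval z P2 = eval (x + z 0 • v + z 1 • w) P := by
    intro z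
    rw [hP2', eval_affP, add_assoc, ← hcons]; rfl
  have hQ2 : ∀ z : Fin 2 → ℝ, eval z Q2 = eval (x + z 0 • v + z 1 • w) Q := by
    intro z
    rw [hQ2', eval_affP, add_assoc, ← hcons]; rfl
  have hR0 : lineP 0 v' ρ ≠ 0 := by
    intro h0
    apply hv'
    have := eval_lineP 0 v' ρ 1
    rw [zero_add, one_smul] at this
    rw [← this, h0]
    simp
  have hbez : a2 * P2 + b2 * Q2 = Polynomial.aeval (X 0) (lineP 0 v' ρ) := by
    apply MvPolynomial.funext
    intro z
    rw [eval_aeval_X0, eval_lineP, zero_add, ← hid (z 1), map_add, map_mul, map_mul, ha2, hb2,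
      hP2, hQ2, hcons, add_assoc]
  have hq0 : q ≠ 0 := by rintro rfl; simp at hq
  have hpQ : p * Q2 = q * P2 := by
    have : q * (p * Q2 - q * P2) = 0 := by
      have hop : IsOpen {z : Fin 2 → ℝ | x + z 0 • v + z 1 • w ∈ B} := by
        apply hBo.preimage
        fun_prop
      refine eq_of_ball hop (c := 0) (by change _ ∈ B; simpa using hx) _ _ fun z hz => ?_
      have hzz : ![z 0, z 1] = z := by
        funext i; fin_cases i <;> rfl
      have h1 := hpq (z 0) (z 1) hz
      rw [hzz] at h1
      have h2 := hPQ _ hz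
      rw [← hP2, ← hQ2] at h2
      simp only [map_mul, map_sub, map_zero]
      by_cases hqz : eval z q = 0
      · simp [hqz]
      · have h3 := h1 hqz
        rw [← h2, h3]
        field_simp
        ring
    have := (mul_eq_zero.1 this).resolve_left hq0
    exact sub_eq_zero.1 this
  refine pole_two a2 b2 P2 Q2 p q _ hR0 hbez hpQ hq ?_ ?_
  · rw [hQ2]
    simpa using hQx
  · rw [hQ2]
    simpa [hw, hA] using hy

theorem PlaneReg.regular {n : ℕ} (hn : 2 ≤ n) {U : Set (Fin n → ℝ)} (hU : IsOpen U)
    (hconn : IsConnected U) {f : (Fin n → ℝ) → ℝ} (h : PlaneReg n U f) :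
    IsRegularOnReal n U f := by
  obtain ⟨k, rfl⟩ : ∃ k, n = k + 1 := ⟨n - 1, by omega⟩
  have hloc : ∀ x ∈ U, ∃ r > 0, Metric.ball x r ⊆ U ∧ ∃ P Q : MvPolynomial (Fin (k + 1)) ℝ,
      IsRelPrime P Q ∧ Q ≠ 0 ∧ ∀ y ∈ Metric.ball x r, f y * eval y Q = eval y P := by
    intro x hx
    obtain ⟨r, hr, hrU⟩ := Metric.isOpen_iff.1 hU x hx
    have hl := h.lreg hn (convex_ball x r) hrU
    obtain ⟨P, Q, hQ, hPQ⟩ := local_rational _ x r hr f hl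
    obtain ⟨P', Q', g, hrel, rfl, rfl⟩ := UniqueFactorizationMonoid.exists_reduced_factors' P Q hQ
    refine ⟨r, hr, hrU, P', Q', hrel, right_ne_zero_of_mul hQ, ?_⟩
    refine hl.cancel Metric.isOpen_ball P' Q' g (left_ne_zero_of_mul hQ) fun y hy => ?_
    have := hPQ y hy
    rw [map_mul, map_mul] at this
    linear_combination this
  obtain ⟨x0, hx0⟩ := hconn.nonempty
  obtain ⟨r0, hr0, hrU0, P, Q, hrel, hQ, hPQ⟩ := hloc x0 hx0
  let S : Set (Fin (k + 1) → ℝ) := interior {y | f y * eval y Q = eval y P}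
  have hS0 : x0 ∈ S :=
    mem_interior.2 ⟨_, fun y hy => hPQ y hy, Metric.isOpen_ball, Metric.mem_ball_self hr0⟩
  have hUS : U ⊆ S := by
    refine hconn.isPreconnected.subset_of_closure_inter_subset isOpen_interior ⟨x0, hx0, hS0⟩ ?_
    rintro x ⟨hxS, hxU⟩
    obtain ⟨r, hr, hrU, P', Q', hrel', hQ', hPQ'⟩ := hloc x hxU
    obtain ⟨y, hyb, hyS⟩ := mem_closure_iff.1 hxS _ Metric.isOpen_ball (Metric.mem_ball_self hr)
    have heq : P' * Q = P * Q' := by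
      refine eq_of_ball (Metric.isOpen_ball.inter isOpen_interior) ⟨hyb, hyS⟩ _ _ ?_
      rintro z ⟨hz1, hz2⟩
      have h1 := hPQ' z hz1
      have h2 : f z * eval z Q = eval z P := by
        have h3 := interior_subset hz2
        exact h3
      rw [map_mul, map_mul, ← h1, ← h2]
      ring
    refine mem_interior.2 ⟨Metric.ball x r, ?_, Metric.isOpen_ball, Metric.mem_ball_self hr⟩
    refine (h.lreg hn (convex_ball x r) hrU).cancel Metric.isOpen_ball P Q Q' hQ' fun z hz => ?_
    have h1 := hPQ' z hz
    have h2 := congrArg (eval z) heq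
    rw [map_mul, map_mul, ← h1] at h2
    linear_combination h2
  have hall : ∀ y ∈ U, f y * eval y Q = eval y P := by
    intro y hy
    have h2 := interior_subset (hUS hy)
    exact h2
  intro x hx
  obtain ⟨r, hr, hrU⟩ := Metric.isOpen_iff.1 hU x hx
  refine ⟨P, Q, no_pole h (convex_ball x r) Metric.isOpen_ball hrU (Metric.mem_ball_self hr)
    P Q hrel hQ (fun y hy => hall y (hrU hy)), fun y hy hqy => ?_⟩
  rw [← hall y hy]
  field_simp

theorem IsRegularOnReal.plane {n : ℕ} {U : Set (Fin n → ℝ)} {f : (Fin n → ℝ) → ℝ}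
    (h : IsRegularOnReal n U f) : PlaneReg n U f := by
  intro a v w _ s₀ t₀ hst
  obtain ⟨p, q, hq, hpq⟩ := h _ hst
  let σ : MvPolynomial (Fin n) ℝ →ₐ[ℝ] MvPolynomial (Fin 2) ℝ :=
    aeval (fun i => C (a i) + X 0 * C (v i) + X 1 * C (w i))
  have hσ : ∀ (G : MvPolynomial (Fin n) ℝ) (s t : ℝ),
      eval ![s, t] (σ G) = eval (a + s • v + t • w) G := by
    intro G s t
    induction G using MvPolynomial.induction_on with
    | C a => simp [σ]
    | add p q hp hq => simp [hp, hq]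
    | mul_X p i hp =>
      rw [map_mul, map_mul, hp, map_mul, eval_X]
      congr 1
      simp [σ]
  refine ⟨σ p, σ q, by rwa [hσ], fun s t hc hqst => ?_⟩
  rw [hσ] at hqst
  rw [hσ, hσ]
  have := connectedComponentIn_subset _ _ hc
  exact hpq _ this hqst

/-- **Theorem 8.1.** A function on a connected open set `U ⊆ ℝⁿ`, `n ≥ 2`, is regular if
and only if its restriction to each connected component of the intersection of `U` with
any 2-dimensional affine plane is regular. -/
theorem regular_iff_regular_on_planes
    (n : ℕ) (hn : 2 ≤ n) (U : Set (Fin n → ℝ)) (hU : IsOpen U) (hne : U.Nonempty)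
    (hconn : IsConnected U) (f : (Fin n → ℝ) → ℝ) :
    IsRegularOnReal n U f ↔
      ∀ a v w : Fin n → ℝ, LinearIndependent ℝ ![v, w] →
        ∀ s₀ t₀ : ℝ, a + s₀ • v + t₀ • w ∈ U →
          ∃ p q : MvPolynomial (Fin 2) ℝ, eval ![s₀, t₀] q ≠ 0 ∧
            ∀ s t : ℝ,
              (s, t) ∈ connectedComponentIn
                {st : ℝ × ℝ | a + st.1 • v + st.2 • w ∈ U} (s₀, t₀) →
              eval ![s, t] q ≠ 0 →
              f (a + s • v + t • w) = eval ![s, t] p / eval ![s, t] q :=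
  ⟨fun h => h.plane, fun h => PlaneReg.regular hn hU hconn h⟩
end

section
/- Let U ⊆ ℂ^n be a nonempty connected open set and let f : U → ℂ be a function (no continuity or holomorphy assumed). Assume that for every index i, every point a ∈ U, every connected open set A ⊆ {z ∈ ℂ : a(i↦z) ∈ U} that is homeomorphic to the open unit disc, and every z₀ ∈ A, there exist one-variable complex polynomials p, q with q(z₀) ≠ 0 such that f(a(i↦z)) = p(z)/q(z) for every z ∈ A with q(z) ≠ 0; here a(i↦z) denotes the point obtained from a by replacing its i-th coordinate by z. Then f is regular on U. (Theorem 9.2 in the case where every factor is the affine line.) -/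
open MvPolynomial

lemma aux_line {n : ℕ} (h : MvPolynomial (Fin n) ℂ) (w : Fin n → ℂ) (i : Fin n) :
    ∃ p : Polynomial ℂ, ∀ t, p.eval t = eval (Function.update w i t) h := by
  refine ⟨aeval (Function.update (fun j => Polynomial.C (w j)) i Polynomial.X) h, fun t => ?_⟩
  have : (Polynomial.evalRingHom t).comp
      ((aeval (Function.update (fun j => Polynomial.C (w j)) i Polynomial.X) :
        MvPolynomial (Fin n) ℂ →ₐ[ℂ] Polynomial ℂ) : MvPolynomial (Fin n) ℂ →+* Polynomial ℂ)
      = eval (Function.update w i t) := by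
    apply MvPolynomial.ringHom_ext
    · intro r; simp
    · intro j
      by_cases hj : j = i
      · subst hj; simp
      · simp [hj]
  exact congrArg (fun φ => φ h) this

lemma aux_zero_of_ball {n : ℕ} (h : MvPolynomial (Fin n) ℂ) (c : Fin n → ℂ) (r : ℝ) (hr : 0 < r)
    (h0 : ∀ x ∈ Metric.ball c r, eval x h = 0) : h = 0 := by
  refine MvPolynomial.funext_set (fun i => Metric.ball (c i) r) (fun i => ?_) (fun x hx => ?_)
  · exact infinite_of_mem_nhds (c i) (Metric.ball_mem_nhds _ hr)
  · rw [map_zero]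
    apply h0
    rw [ball_pi _ hr]; exact hx

lemma aux_zero_of_open {n : ℕ} (h : MvPolynomial (Fin n) ℂ) (V : Set (Fin n → ℂ)) (hV : IsOpen V)
    (hne : V.Nonempty) (h0 : ∀ x ∈ V, eval x h = 0) : h = 0 := by
  obtain ⟨c, hc⟩ := hne
  obtain ⟨r, hr, hb⟩ := Metric.isOpen_iff.1 hV c hc
  exact aux_zero_of_ball h c r hr fun x hx => h0 x (hb hx)

lemma aux_poly_ev (p : Polynomial ℂ) (hp : p ≠ 0) (z : ℂ) :
    ∀ᶠ t in nhdsWithin z {z}ᶜ, p.eval t ≠ 0 := by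
  have hf : (p.roots.toFinset : Set ℂ).Finite := Finset.finite_toSet _
  have : ((p.roots.toFinset : Set ℂ) \ {z})ᶜ ∈ nhds z :=
    (hf.subset Set.sdiff_subset).isClosed.isOpen_compl.mem_nhds (by simp)
  filter_upwards [nhdsWithin_le_nhds this, self_mem_nhdsWithin] with t ht htz h0
  apply ht
  simp_all

lemma aux_dense {n : ℕ} (U : Set (Fin n → ℂ)) (hU : IsOpen U) (g : (Fin n → ℂ) → ℂ)
    (hg : ∀ i, ∀ a ∈ U, ContinuousAt (fun z => g (Function.update a i z)) (a i))
    (h : MvPolynomial (Fin n) ℂ) (hh : h ≠ 0) (hz : ∀ y ∈ U, eval y h * g y = 0) :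
    ∀ y ∈ U, g y = 0 := by
  have key : ∀ S : Finset (Fin n), ∀ y ∈ U, ∀ w : Fin n → ℂ, (∀ j ∉ S, w j = y j) →
      eval w h ≠ 0 → g y = 0 := by
    intro S
    induction S using Finset.induction_on with
    | empty =>
      intro y hy w hw hne
      have : w = y := funext fun j => hw j (by simp)
      subst this
      exact (mul_eq_zero.1 (hz _ hy)).resolve_left hne
    | insert i S hi ih =>
      intro y hy w hw hne
      obtain ⟨p, hp⟩ := aux_line h w i
      have hp0 : p ≠ 0 := by
        rintro rfl
        apply hne
        have := hp (w i)
        simpa using this.symm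
      have hcu : Continuous fun t : ℂ => Function.update y i t :=
        continuous_const.update i continuous_id
      have hev : ∀ᶠ t in nhds (y i), Function.update y i t ∈ U :=
        hcu.continuousAt.eventually (by simpa using hU.mem_nhds hy)
      have h1 : ∀ᶠ t in nhdsWithin (y i) {y i}ᶜ, g (Function.update y i t) = 0 := by
        filter_upwards [aux_poly_ev p hp0 (y i), nhdsWithin_le_nhds hev] with t ht1 ht2
        refine ih _ ht2 (Function.update w i t) ?_ (by rwa [← hp])
        intro j hj
        by_cases hji : j = i
        · subst hji; simp
        · simp only [Function.update_of_ne hji]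
          exact hw j (by simp [hji, hj])
      have h2 := (hg i y hy).tendsto.mono_left (nhdsWithin_le_nhds (s := {y i}ᶜ))
      have h3 := tendsto_nhds_unique (h2.congr' h1) tendsto_const_nhds
      simpa using h3
  intro y hy
  have : ∃ w, eval w h ≠ 0 := by
    by_contra hcon
    push Not at hcon
    exact hh (MvPolynomial.funext fun x => by simp [hcon x])
  obtain ⟨w, hw⟩ := this
  exact key Finset.univ y hy w (by simp) hw

lemma aux_linalg {R ι m : Type*} [CommRing R] [IsDomain R] [Fintype m] [DecidableEq m]
    (w : ι → m → R) (hw : ∀ t : m → ι, Matrix.det (Matrix.of fun j => w (t j)) = 0) :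
    ∃ u : m → R, u ≠ 0 ∧ ∀ i, ∑ j, u j * w i j = 0 := by
  let K := FractionRing R
  let W : ι → m → K := fun i j => algebraMap R K (w i j)
  have hlt : Submodule.span K (Set.range W) < ⊤ := by
    rw [lt_top_iff_ne_top]
    intro htop
    let b := Module.Basis.ofSpan htop.ge
    have hfin := Module.Finite.finite_basis b
    let e : _ ≃ m := (b.indexEquiv (Pi.basisFun K m))
    let b' := b.reindex e
    have hb' : ∀ j, ∃ i, W i = b' j := fun j => by
      have := Module.Basis.ofSpan_subset htop.ge
      exact this ⟨e.symm j, by simp [b', b]⟩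
    choose t ht using hb'
    have hd := hw t
    have h1 : IsUnit ((Pi.basisFun K m).det b') := (Pi.basisFun K m).isUnit_det b'
    apply h1.ne_zero
    rw [Pi.basisFun_det_apply]
    have h2 := congrArg (algebraMap R K) hd
    rw [RingHom.map_det, map_zero] at h2
    rw [← h2]
    congr 1
    ext i j
    simp [← ht, W]
  obtain ⟨φ, hφ, hle⟩ := Submodule.exists_le_ker_of_lt_top _ hlt
  obtain ⟨b, hb⟩ := IsLocalization.exist_integer_multiples_of_finite (nonZeroDivisors R)
    (fun j => φ (Pi.single j 1))
  choose u hu using hb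
  have hsum : ∀ v : m → K, φ v = ∑ j, φ (Pi.single j 1) * v j := fun v => by
    conv_lhs => rw [← Finset.univ_sum_single v]
    rw [map_sum]
    refine Finset.sum_congr rfl fun j _ => ?_
    rw [← mul_one (v j), ← smul_eq_mul (v j) 1, Pi.single_smul', map_smul]
    simp [mul_comm]
  have hb0 : algebraMap R K b ≠ 0 :=
    IsLocalization.to_map_ne_zero_of_mem_nonZeroDivisors K le_rfl b.2
  refine ⟨u, ?_, fun i => ?_⟩
  · rintro rfl
    apply hφ
    ext v
    have : φ (Pi.single v 1) = 0 := by
      have := hu v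
      rw [Algebra.smul_def] at this
      simpa [hb0] using this.symm
    simpa using this
  · apply FaithfulSMul.algebraMap_injective R K
    have h1 : φ (W i) = 0 := hle (Submodule.subset_span ⟨i, rfl⟩)
    rw [hsum] at h1
    rw [map_sum, map_zero]
    simp_rw [map_mul, hu, Algebra.smul_def, mul_assoc]
    rw [← Finset.mul_sum, h1, mul_zero]

lemma aux_baire {n : ℕ} (c : Fin n → ℂ) (r : ℝ) (hr : 0 < r) (E : ℕ → Set (Fin n → ℂ))
    (hE : ∀ s ∈ Metric.ball c r, ∃ d, s ∈ E d) :
    ∃ d, ∀ h : MvPolynomial (Fin n) ℂ, (∀ s ∈ E d, eval s h = 0) → h = 0 := by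
  by_contra hcon
  push Not at hcon
  choose h hh h0 using hcon
  have hd : Dense (⋂ d, {x | eval x (h d) ≠ 0}) := by
    apply dense_iInter_of_isOpen
    · intro d
      exact isOpen_ne_fun (MvPolynomial.continuous_eval _) continuous_const
    · intro d
      rw [dense_iff_inter_open]
      intro V hV hne
      by_contra hc
      apply h0 d
      apply aux_zero_of_open _ V hV hne
      intro x hx
      by_contra hx0
      exact hc ⟨x, hx, hx0⟩
  obtain ⟨x, hx, hx'⟩ := hd.inter_open_nonempty _ Metric.isOpen_ball ⟨c, Metric.mem_ball_self hr⟩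
  obtain ⟨d, hxd⟩ := hE x hx
  exact Set.mem_iInter.1 hx' d (hh d x hxd)

lemma aux_cons_mem {n : ℕ} (c : Fin (n+1) → ℂ) (r : ℝ) (hr : 0 < r) (t : ℂ) (s : Fin n → ℂ) :
    (Fin.cons t s : Fin (n+1) → ℂ) ∈ Metric.ball c r ↔
      t ∈ Metric.ball (c 0) r ∧ s ∈ Metric.ball (fun j => c j.succ) r := by
  rw [ball_pi _ hr, ball_pi _ hr]
  simp [Set.mem_pi, Fin.forall_fin_succ]

noncomputable def auxPoly {n d : ℕ} (u : Fin d → MvPolynomial (Fin n) ℂ) :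
    MvPolynomial (Fin (n+1)) ℂ :=
  (finSuccEquiv ℂ n).symm (∑ k : Fin d, Polynomial.monomial (k : ℕ) (u k))

lemma auxPoly_eval {n d : ℕ} (u : Fin d → MvPolynomial (Fin n) ℂ) (t : ℂ) (s : Fin n → ℂ) :
    eval (Fin.cons t s : Fin (n+1) → ℂ) (auxPoly u) = ∑ k : Fin d, eval s (u k) * t ^ (k : ℕ) := by
  rw [eval_eq_eval_mv_eval', auxPoly, AlgEquiv.apply_symm_apply]
  simp [Polynomial.map_sum, Polynomial.eval_finsetSum]

lemma auxPoly_zero {n d : ℕ} (u : Fin d → MvPolynomial (Fin n) ℂ) (h : auxPoly u = 0) :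
    u = 0 := by
  rw [auxPoly, EmbeddingLike.map_eq_zero_iff] at h
  ext1 j
  have := congrArg (fun p => Polynomial.coeff p (j : ℕ)) h
  simpa [Polynomial.finsetSum_coeff, Polynomial.coeff_monomial, Fin.val_inj] using this

lemma aux_box : ∀ (n : ℕ) (c : Fin n → ℂ) (r : ℝ) (_ : 0 < r) (f : (Fin n → ℂ) → ℂ)
    (_ : ∀ i, ∀ a ∈ Metric.ball c r, ContinuousAt (fun z => f (Function.update a i z)) (a i))
    (_ : ∀ i, ∀ a ∈ Metric.ball c r, ∃ p q : Polynomial ℂ, q ≠ 0 ∧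
      ∀ z ∈ Metric.ball (c i) r, q.eval z * f (Function.update a i z) = p.eval z),
    ∃ P Q : MvPolynomial (Fin n) ℂ, Q ≠ 0 ∧ ∀ y ∈ Metric.ball c r, eval y Q * f y = eval y P := by
  intro n
  induction n with
  | zero =>
    intro c r hr f _ _
    refine ⟨C (f c), 1, one_ne_zero, fun y _ => ?_⟩
    rw [Subsingleton.elim y c]; simp
  | succ n ih =>
    intro c r hr f hcont hrat
    set c' : Fin n → ℂ := fun j => c j.succ with hc'
    have hslice : ∀ t : Metric.ball (c 0) r, ∃ P Q : MvPolynomial (Fin n) ℂ, Q ≠ 0 ∧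
        ∀ s ∈ Metric.ball c' r, eval s Q * f (Fin.cons t.1 s) = eval s P := by
      intro t
      apply ih c' r hr (fun s => f (Fin.cons t.1 s))
      · intro i a ha
        have := hcont i.succ (Fin.cons t.1 a) ((aux_cons_mem c r hr _ _).2 ⟨t.2, ha⟩)
        simpa [Fin.cons_update] using this
      · intro i a ha
        have := hrat i.succ (Fin.cons t.1 a) ((aux_cons_mem c r hr _ _).2 ⟨t.2, ha⟩)
        simpa [Fin.cons_update] using this
    choose P Q hQ hPQ using hslice
    let E : ℕ → Set (Fin n → ℂ) := fun d => {s | s ∈ Metric.ball c' r ∧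
      ∃ u : Fin d ⊕ Fin d → ℂ, u ≠ 0 ∧ ∀ t ∈ Metric.ball (c 0) r,
        (∑ k : Fin d, u (Sum.inl k) * t ^ (k : ℕ)) * f (Fin.cons t s) +
          ∑ k : Fin d, u (Sum.inr k) * t ^ (k : ℕ) = 0}
    obtain ⟨d, hd⟩ := aux_baire c' r hr E (by
      intro s hs
      obtain ⟨p, q, hq, hpq⟩ := hrat 0 (Fin.cons (c 0) s)
        ((aux_cons_mem c r hr _ _).2 ⟨Metric.mem_ball_self hr, hs⟩)
      refine ⟨max p.natDegree q.natDegree + 1, hs,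
        Sum.elim (fun k => q.coeff k) (fun k => - p.coeff k), ?_, ?_⟩
      · intro h0
        apply hq
        have := congrFun h0 (Sum.inl ⟨q.natDegree, by omega⟩)
        simpa using this
      · intro t ht
        have := hpq t ht
        rw [Fin.update_cons_zero,
          Polynomial.eval_eq_sum_range' (n := max p.natDegree q.natDegree + 1) (by omega) t,
          Polynomial.eval_eq_sum_range' (n := max p.natDegree q.natDegree + 1) (by omega) t,
          ← Fin.sum_univ_eq_sum_range (fun i => q.coeff i * t ^ i),
          ← Fin.sum_univ_eq_sum_range (fun i => p.coeff i * t ^ i)] at this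
        simp [this])
    let w : Metric.ball (c 0) r → Fin d ⊕ Fin d → MvPolynomial (Fin n) ℂ := fun t =>
      Sum.elim (fun k => C (t.1 ^ (k : ℕ)) * P t) (fun k => C (t.1 ^ (k : ℕ)) * Q t)
    obtain ⟨u, hu0, hu⟩ := aux_linalg w (by
      intro t
      apply hd
      rintro s ⟨hs, v, hv0, hv⟩
      rw [RingHom.map_det]
      apply Matrix.exists_mulVec_eq_zero_iff.1
      refine ⟨v, hv0, ?_⟩
      ext j
      have h1 := hv (t j) (t j).2
      have h2 := hPQ (t j) s hs
      simp only [Matrix.mulVec, dotProduct, Fintype.sum_sum_type, RingHom.mapMatrix_apply,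
        Matrix.map_apply, Matrix.of_apply, w, Sum.elim_inl, Sum.elim_inr, map_mul, eval_C,
        Pi.zero_apply, ← h2]
      calc _ = eval s (Q (t j)) * ((∑ k : Fin d, v (Sum.inl k) * (t j).1 ^ (k : ℕ)) *
            f (Fin.cons (t j).1 s) + ∑ k : Fin d, v (Sum.inr k) * (t j).1 ^ (k : ℕ)) := by
            rw [mul_add, Finset.sum_mul, Finset.mul_sum, Finset.mul_sum]
            congr 1 <;> exact Finset.sum_congr rfl fun k _ => by ring
        _ = 0 := by rw [h1, mul_zero])
    set A := auxPoly (fun k => u (Sum.inl k)) with hA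
    set B := auxPoly (fun k => u (Sum.inr k)) with hB
    have hAB : ∀ t ∈ Metric.ball (c 0) r, ∀ s ∈ Metric.ball c' r,
        eval (Fin.cons t s : Fin (n+1) → ℂ) A * f (Fin.cons t s)
          + eval (Fin.cons t s : Fin (n+1) → ℂ) B = 0 := by
      intro t ht
      refine aux_dense (Metric.ball c' r) Metric.isOpen_ball
        (fun s => eval (Fin.cons t s : Fin (n+1) → ℂ) A * f (Fin.cons t s)
          + eval (Fin.cons t s : Fin (n+1) → ℂ) B) ?_ (Q ⟨t, ht⟩) (hQ _) ?_
      · intro i a ha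
        have h1 := hcont i.succ (Fin.cons t a) ((aux_cons_mem c r hr _ _).2 ⟨ht, ha⟩)
        have hc : Continuous fun z : ℂ => Function.update (Fin.cons t a : Fin (n+1) → ℂ) i.succ z :=
          continuous_const.update _ continuous_id
        simp only [Fin.cons_update]
        refine ContinuousAt.add (ContinuousAt.mul ?_ (by simpa using h1)) ?_
        · exact ((MvPolynomial.continuous_eval A).comp hc).continuousAt
        · exact ((MvPolynomial.continuous_eval B).comp hc).continuousAt
      · intro s hs
        have h1 := congrArg (eval s) (hu ⟨t, ht⟩)
        have h2 := hPQ ⟨t, ht⟩ s hs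
        simp only [Fintype.sum_sum_type, w, Sum.elim_inl, Sum.elim_inr, map_add, map_sum, map_mul,
          eval_C, map_zero, ← h2] at h1
        rw [hA, hB, auxPoly_eval, auxPoly_eval, ← h1]
        rw [mul_add, Finset.sum_mul, Finset.mul_sum, Finset.mul_sum]
        congr 1 <;> exact Finset.sum_congr rfl fun k _ => by ring
    have hAB' : ∀ y ∈ Metric.ball c r, eval y A * f y + eval y B = 0 := by
      intro y hy
      rw [← Fin.cons_self_tail y] at hy ⊢
      obtain ⟨h1, h2⟩ := (aux_cons_mem c r hr _ _).1 hy
      exact hAB _ h1 _ h2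
    refine ⟨-B, A, ?_, fun y hy => ?_⟩
    · intro hA0
      have hB0 : B = 0 := aux_zero_of_ball B c r hr fun y hy => by
        have := hAB' y hy
        simpa [hA0] using this
      apply hu0
      have e1 := auxPoly_zero _ hA0
      have e2 := auxPoly_zero _ hB0
      ext1 j
      rcases j with j | j
      · exact congrFun e1 j
      · exact congrFun e2 j
    · rw [map_neg]; exact eq_neg_of_add_eq_zero_left (hAB' y hy)

lemma aux_isCoprime {R : Type*} [CommRing R] [IsDomain R] [UniqueFactorizationMonoid R]
    (q p : Polynomial R) (hq : Irreducible q) (hdeg : q.natDegree ≠ 0) (hqp : ¬ q ∣ p) :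
    ∃ a b : Polynomial R, ∃ r : R, r ≠ 0 ∧ a * q + b * p = Polynomial.C r := by
  classical
  let K := FractionRing R
  let _ : NormalizedGCDMonoid R := Classical.choice inferInstance
  have hprim : q.IsPrimitive := hq.isPrimitive hdeg
  have h1 : Irreducible (q.map (algebraMap R K)) :=
    (hprim.irreducible_iff_irreducible_map_fraction_map (K := K)).1 hq
  have h2 : ¬ q.map (algebraMap R K) ∣ p.map (algebraMap R K) := fun h =>
    hqp ((hprim.dvd_iff_fraction_map_dvd_fraction_map (K := K)).2 h)
  obtain ⟨a, b, hab⟩ := (h1.coprime_iff_not_dvd).2 h2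
  obtain ⟨x, hx⟩ := IsLocalization.integerNormalization_map_to_map (nonZeroDivisors R) a
  obtain ⟨y, hy⟩ := IsLocalization.integerNormalization_map_to_map (nonZeroDivisors R) b
  refine ⟨Polynomial.C (y : R) * IsLocalization.integerNormalization (nonZeroDivisors R) a,
    Polynomial.C (x : R) * IsLocalization.integerNormalization (nonZeroDivisors R) b, x * y,
    nonZeroDivisors.ne_zero (x * y).2, ?_⟩
  apply Polynomial.map_injective _ (FaithfulSMul.algebraMap_injective R K)
  simp only [Polynomial.map_add, Polynomial.map_mul, hx, hy, Polynomial.map_C]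
  have hs : ∀ (z : R) (g : Polynomial K), z • g = Polynomial.C (algebraMap R K z) * g := by
    intro z g
    rw [← algebraMap_smul K z g, Polynomial.smul_eq_C_mul]
  rw [hs, hs]
  have : Polynomial.C (algebraMap R K (x * y)) =
      Polynomial.C (algebraMap R K x) * Polynomial.C (algebraMap R K y)
        * (a * q.map (algebraMap R K) + b * p.map (algebraMap R K)) := by
    rw [hab]; simp
  rw [this]
  ring

lemma aux_irred_zero {n : ℕ} (q P : MvPolynomial (Fin (n+1)) ℂ) (hq : Irreducible q)
    (hqP : ¬ q ∣ P) (V : Set (Fin (n+1) → ℂ)) (hV : IsOpen V) (t0 t1 : ℂ) (s0 : Fin n → ℂ)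
    (hmem : (Fin.cons t0 s0 : Fin (n+1) → ℂ) ∈ V)
    (h0 : eval (Fin.cons t0 s0 : Fin (n+1) → ℂ) q = 0)
    (h1 : eval (Fin.cons t1 s0 : Fin (n+1) → ℂ) q ≠ 0)
    (hP : ∀ y ∈ V, eval y q = 0 → eval y P = 0) : False := by
  have hconsc : Continuous fun x : ℂ × (Fin n → ℂ) => (Fin.cons x.1 x.2 : Fin (n+1) → ℂ) := by
    fun_prop
  let q' := finSuccEquiv ℂ n q
  let P' := finSuccEquiv ℂ n P
  have hq' : Irreducible q' := (MulEquiv.irreducible_iff (finSuccEquiv ℂ n)).2 hq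
  have hqP' : ¬ q' ∣ P' := fun h => hqP ((map_dvd_iff (finSuccEquiv ℂ n)).1 h)
  have hdeg : q'.natDegree ≠ 0 := by
    intro hd
    rw [eval_eq_eval_mv_eval'] at h0 h1
    obtain ⟨a, ha⟩ := Polynomial.natDegree_eq_zero.1 hd
    have ha' : finSuccEquiv ℂ n q = Polynomial.C a := ha.symm
    rw [ha'] at h0 h1
    simp at h0 h1
    exact h1 h0
  obtain ⟨a, b, ρ, hρ, hab⟩ := aux_isCoprime q' P' hq' hdeg hqP'
  -- choose a radius
  let p0 := Polynomial.map (eval s0) (finSuccEquiv ℂ n q)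
  have hp0 : p0 ≠ 0 := by
    intro h
    rw [eval_eq_eval_mv_eval'] at h1
    apply h1
    change Polynomial.eval t1 p0 = 0
    rw [h]; simp
  obtain ⟨ε, hε, hball⟩ := Metric.isOpen_iff.1 hV _ hmem
  have hev := aux_poly_ev p0 hp0 t0
  rw [eventually_nhdsWithin_iff, Metric.eventually_nhds_iff] at hev
  obtain ⟨δ, hδ, hδ0⟩ := hev
  let r := min (ε/2) (δ/2)
  have hr : 0 < r := by positivity
  have hrε : r < ε := lt_of_le_of_lt (min_le_left _ _) (by linarith)
  have hrδ : r < δ := lt_of_le_of_lt (min_le_right _ _) (by linarith)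
  let F : ℂ × (Fin n → ℂ) → ℂ := fun x => eval (Fin.cons x.1 x.2 : Fin (n+1) → ℂ) q
  have hF : Continuous F := (MvPolynomial.continuous_eval q).comp hconsc
  have hFp : ∀ t s, F (t, s) = (Polynomial.map (eval s) (finSuccEquiv ℂ n q)).eval t :=
    fun t s => eval_eq_eval_mv_eval' s t q
  have hsph : ∀ z ∈ Metric.sphere t0 r, F (z, s0) ≠ 0 := by
    intro z hz
    rw [hFp]
    rw [mem_sphere_iff_norm] at hz
    refine hδ0 (by rw [dist_eq_norm, hz]; exact hrδ) ?_
    rintro rfl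
    simp at hz
    linarith
  obtain ⟨z1, hz1, hmin⟩ := (isCompact_sphere t0 r).exists_isMinOn
    (NormedSpace.sphere_nonempty.2 hr.le)
    (f := fun z => ‖F (z, s0)‖) (by fun_prop)
  set m := ‖F (z1, s0)‖ with hm
  have hmpos : 0 < m := norm_pos_iff.2 (hsph z1 hz1)
  -- tube lemma
  have hopen : IsOpen {x : (Fin n → ℂ) × ℂ | m / 2 < ‖F (x.2, x.1)‖} :=
    isOpen_lt continuous_const (by fun_prop)
  have htube : ∀ᶠ s in nhds s0, ∀ z ∈ Metric.sphere t0 r, m / 2 < ‖F (z, s)‖ := by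
    refine (isCompact_sphere t0 r).eventually_forall_of_forall_eventually ?_
    intro z hz
    have : m / 2 < ‖F (z, s0)‖ := lt_of_lt_of_le (by linarith) (hmin hz)
    exact hopen.mem_nhds this
  have hsmall : ∀ᶠ s in nhds s0, ‖F (t0, s)‖ < m / 8 := by
    have hc : Continuous fun s => ‖F (t0, s)‖ := by fun_prop
    refine hc.continuousAt.eventually_lt continuousAt_const ?_
    have : F (t0, s0) = 0 := h0
    rw [this]; simp; positivity
  have hs : ∀ᶠ s in nhds s0, dist s s0 < ε := Metric.eventually_nhds_iff.2 ⟨ε, hε, fun _ h => h⟩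
  have hall := htube.and (hsmall.and hs)
  obtain ⟨η, hη, hηall⟩ := Metric.eventually_nhds_iff.1 hall
  apply hρ
  refine aux_zero_of_ball ρ s0 η hη fun s hsη => ?_
  obtain ⟨g1, g2, g3⟩ := hηall hsη
  have hroot : ∃ z ∈ Metric.closedBall t0 r, F (z, s) = 0 := by
    have hdiff : Differentiable ℂ fun z => F (z, s) := by
      simp_rw [hFp]
      exact Polynomial.differentiable _
    have hlow : ∀ z ∈ Metric.sphere t0 r, m / 4 ≤ ‖F (z, s) - F (t0, s)‖ := by
      intro z hz
      have := g1 z hz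
      have := norm_sub_norm_le (F (z, s)) (F (t0, s))
      linarith
    by_cases hfr : ∃ᶠ z in nhds t0, F (z, s) ≠ F (t0, s)
    · have := hdiff.diffContOnCl.ball_subset_image_closedBall hr hlow hfr
      have h0m : (0 : ℂ) ∈ Metric.ball (F (t0, s)) (m / 4 / 2) := by
        rw [Metric.mem_ball, dist_zero_left]; linarith
      obtain ⟨z, hz, hz0⟩ := this h0m
      exact ⟨z, hz, hz0⟩
    · exfalso
      have hfr' : ∀ᶠ z in nhds t0, F (z, s) = F (t0, s) :=
        (Filter.not_frequently.1 hfr).mono fun z hz => not_not.1 hz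
      have hpoly : Polynomial.map (eval s) (finSuccEquiv ℂ n q) = Polynomial.C (F (t0, s)) := by
        refine Polynomial.eq_of_infinite_eval_eq _ _ ?_
        refine (infinite_of_mem_nhds t0 hfr').mono ?_
        intro z hz
        have hz' : F (z, s) = F (t0, s) := hz
        rw [Set.mem_ofPred_eq, ← hFp, hz', Polynomial.eval_C]
      have e1 := hlow z1 hz1
      rw [hFp z1 s, hpoly] at e1
      simp at e1
      linarith
  obtain ⟨z, hz, hz0⟩ := hroot
  have hzV : (Fin.cons z s : Fin (n+1) → ℂ) ∈ V := by
    apply hball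
    refine (aux_cons_mem _ ε hε _ _).2 ⟨?_, ?_⟩
    · simpa using lt_of_le_of_lt (Metric.mem_closedBall.1 hz) hrε
    · simpa using g3
  have hPz := hP _ hzV hz0
  have hq0 : (Polynomial.map (eval s) q').eval z = 0 := by rw [← hFp]; exact hz0
  rw [eval_eq_eval_mv_eval'] at hPz
  have := congrArg (fun p => (Polynomial.map (eval s) p).eval z) hab
  simp only [Polynomial.map_add, Polynomial.map_mul, Polynomial.eval_add, Polynomial.eval_mul,
    Polynomial.map_C, Polynomial.eval_C, hq0, mul_zero, zero_add] at this
  rw [← this]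
  exact mul_eq_zero_of_right _ hPz

lemma aux_irred_zero' {n : ℕ} (q P : MvPolynomial (Fin n) ℂ) (hq : Irreducible q)
    (hqP : ¬ q ∣ P) (V : Set (Fin n → ℂ)) (hV : IsOpen V) (i : Fin n) (t1 : ℂ) (y : Fin n → ℂ)
    (hmem : y ∈ V) (h0 : eval y q = 0) (h1 : eval (Function.update y i t1) q ≠ 0)
    (hP : ∀ y ∈ V, eval y q = 0 → eval y P = 0) : False := by
  cases n with
  | zero => exact i.elim0
  | succ n =>
    let e : Equiv.Perm (Fin (n+1)) := Equiv.swap 0 i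
    have hee : ∀ z : Fin (n+1) → ℂ, (z ∘ e) ∘ e = z := fun z => by
      ext j; simp [e]
    have hup : (Fin.cons t1 (Fin.tail (y ∘ e)) : Fin (n+1) → ℂ) = Function.update y i t1 ∘ e := by
      have : (Fin.cons t1 (Fin.tail (y ∘ e)) : Fin (n+1) → ℂ) = Function.update (y ∘ e) 0 t1 := by
        conv_rhs => rw [← Fin.cons_self_tail (y ∘ e), Fin.update_cons_zero]
      rw [this]
      have := Function.update_comp_equiv y e.symm i t1
      ext j
      by_cases hj : j = 0
      · subst hj; simp [e]
      · have : e j ≠ i := by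
          intro h
          apply hj
          apply e.injective
          rw [h]; simp [e]
        simp [hj, this]
    refine aux_irred_zero (rename e q) (rename e P) ?_ ?_ ((fun z => z ∘ e) ⁻¹' V)
      (hV.preimage (by fun_prop)) ((y ∘ e) 0) t1 (Fin.tail (y ∘ e)) ?_ ?_ ?_ ?_
    · exact (MulEquiv.irreducible_iff (renameEquiv ℂ e)).2 hq
    · exact fun h => hqP ((map_dvd_iff (renameEquiv ℂ e)).1 h)
    · rw [Fin.cons_self_tail, Set.mem_preimage, hee]; exact hmem
    · rw [Fin.cons_self_tail, eval_rename, hee]; exact h0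
    · rw [hup, eval_rename, hee]; exact h1
    · intro z hz hz0
      rw [eval_rename] at hz0 ⊢
      exact hP _ hz hz0

lemma aux_irred_factor {n : ℕ} (x : Fin n → ℂ) (Q : MvPolynomial (Fin n) ℂ) : Q ≠ 0 →
    eval x Q = 0 → ∃ q, Irreducible q ∧ q ∣ Q ∧ eval x q = 0 := by
  refine WfDvdMonoid.induction_on_irreducible Q (by simp) ?_ ?_
  · intro u hu _ h
    exact absurd h (hu.map (eval x)).ne_zero
  · intro a i ha hi ih _ h
    rw [map_mul, mul_eq_zero] at h
    rcases h with h | h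
    · exact ⟨i, hi, dvd_mul_right _ _, h⟩
    · obtain ⟨q, h1, h2, h3⟩ := ih ha h
      exact ⟨q, h1, h2.mul_left _, h3⟩

lemma aux_nonvanish {n : ℕ} (P Q : MvPolynomial (Fin n) ℂ) (hQ : Q ≠ 0) (hPQ : IsRelPrime P Q)
    (U : Set (Fin n → ℂ)) (hU : IsOpen U) (f : (Fin n → ℂ) → ℂ)
    (hf : ∀ y ∈ U, eval y Q * f y = eval y P) (x : Fin n → ℂ) (hx : x ∈ U) : eval x Q ≠ 0 := by
  classical
  intro hx0
  obtain ⟨q, hq, hqQ, hqx⟩ := aux_irred_factor x Q hQ hx0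
  have hqP : ¬ q ∣ P := fun h => hq.not_isUnit (hPQ h hqQ)
  have hP : ∀ y ∈ U, eval y q = 0 → eval y P = 0 := by
    intro y hy hy0
    obtain ⟨k, rfl⟩ := hqQ
    rw [← hf y hy, map_mul, hy0]; simp
  obtain ⟨ε, hε, hball⟩ := Metric.isOpen_iff.1 hU x hx
  apply hq.ne_zero
  refine aux_zero_of_ball q x ε hε fun w hw => ?_
  have hmem : ∀ S : Finset (Fin n), S.piecewise w x ∈ Metric.ball x ε := by
    intro S
    rw [ball_pi _ hε] at hw ⊢
    intro j _
    by_cases hj : j ∈ S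
    · simpa [hj] using hw j trivial
    · simpa [hj] using hε
  have key : ∀ S : Finset (Fin n), eval (S.piecewise w x) q = 0 := by
    intro S
    induction S using Finset.induction_on with
    | empty => simpa using hqx
    | insert i S hi ih =>
      rw [Finset.piecewise_insert]
      by_contra hne
      exact aux_irred_zero' q P hq hqP U hU i _ _ (hball (hmem S)) ih hne hP
  simpa using key Finset.univ

lemma aux_ball_homeo (c : ℂ) (r : ℝ) (hr : 0 < r) :
    Nonempty (Metric.ball c r ≃ₜ Metric.ball (0 : ℂ) 1) :=
  ⟨(OpenPartialHomeomorph.unitBallBall c r hr).toHomeomorphSourceTarget.symm⟩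

theorem regular_of_separately_regular_on_arcs_complex
    (n : ℕ) (U : Set (Fin n → ℂ)) (hU : IsOpen U) (hne : U.Nonempty)
    (hconn : IsConnected U) (f : (Fin n → ℂ) → ℂ)
    (harc : ∀ (i : Fin n) (a : Fin n → ℂ), a ∈ U →
      ∀ A : Set ℂ, A ⊆ {z : ℂ | Function.update a i z ∈ U} → IsOpen A → IsConnected A →
        Nonempty (A ≃ₜ (Metric.ball (0 : ℂ) 1)) →
        ∀ z₀ ∈ A, ∃ p q : Polynomial ℂ, q.eval z₀ ≠ 0 ∧
          ∀ z ∈ A, q.eval z ≠ 0 → f (Function.update a i z) = p.eval z / q.eval z) :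
    ∀ x ∈ U, ∃ p q : MvPolynomial (Fin n) ℂ, eval x q ≠ 0 ∧
      ∀ y ∈ U, eval y q ≠ 0 → f y = eval y p / eval y q := by
  have hupc : ∀ (a : Fin n → ℂ) (i : Fin n), Continuous fun z : ℂ => Function.update a i z :=
    fun a i => continuous_const.update i continuous_id
  have hdisc : ∀ (i : Fin n) (a : Fin n → ℂ), a ∈ U → ∀ (c : ℂ) (r : ℝ), 0 < r →
      (∀ z ∈ Metric.ball c r, Function.update a i z ∈ U) → ∀ z₀ ∈ Metric.ball c r,
      ∃ p q : Polynomial ℂ, q.eval z₀ ≠ 0 ∧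
          ∀ z ∈ Metric.ball c r, q.eval z ≠ 0 →
            f (Function.update a i z) = p.eval z / q.eval z := by
    intro i a ha c r hr hsub
    exact harc i a ha _ hsub Metric.isOpen_ball (Metric.isConnected_ball hr) (aux_ball_homeo c r hr)
  have hcont : ∀ i, ∀ a ∈ U, ContinuousAt (fun z => f (Function.update a i z)) (a i) := by
    intro i a ha
    have hev : {z | Function.update a i z ∈ U} ∈ nhds (a i) :=
      (hupc a i).continuousAt.eventually (by simpa using hU.mem_nhds ha)
    obtain ⟨r, hr, hb⟩ := Metric.mem_nhds_iff.1 hev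
    obtain ⟨p, q, hq, hpq⟩ := hdisc i a ha (a i) r hr hb (a i) (Metric.mem_ball_self hr)
    have h1 : ContinuousAt (fun z => p.eval z / q.eval z) (a i) :=
      p.continuous.continuousAt.div q.continuous.continuousAt hq
    refine h1.congr ?_
    filter_upwards [Metric.ball_mem_nhds (a i) hr, q.continuous.continuousAt.eventually_ne hq]
      with z hz hz'
    exact (hpq z hz hz').symm
  have hcomb : ∀ (P Q : MvPolynomial (Fin n) ℂ), ∀ i, ∀ a ∈ U,
      ContinuousAt (fun z => eval (Function.update a i z) Q * f (Function.update a i z)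
        - eval (Function.update a i z) P) (a i) := by
    intro P Q i a ha
    have h1 := ((MvPolynomial.continuous_eval Q).comp (hupc a i)).continuousAt (x := a i)
    have h2 := ((MvPolynomial.continuous_eval P).comp (hupc a i)).continuousAt (x := a i)
    exact (h1.mul (hcont i a ha)).sub h2
  -- local statement
  have hloc : ∀ x ∈ U, ∃ r > 0, Metric.ball x r ⊆ U ∧ ∃ P Q : MvPolynomial (Fin n) ℂ, Q ≠ 0 ∧
      ∀ y ∈ Metric.ball x r, eval y Q * f y = eval y P := by
    intro x hx
    obtain ⟨r, hr, hb⟩ := Metric.isOpen_iff.1 hU x hx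
    refine ⟨r, hr, hb, aux_box n x r hr f (fun i a ha => hcont i a (hb ha)) ?_⟩
    intro i a ha
    have hsub : ∀ z ∈ Metric.ball (x i) r, Function.update a i z ∈ Metric.ball x r := by
      intro z hz
      rw [ball_pi _ hr] at ha ⊢
      intro j _
      by_cases hj : j = i
      · subst hj; simpa using hz
      · simpa [hj] using ha j trivial
    have hai : a i ∈ Metric.ball (x i) r := by
      rw [ball_pi _ hr] at ha; exact ha i trivial
    obtain ⟨p, q, hq, hpq⟩ := hdisc i a (hb ha) (x i) r hr (fun z hz => hb (hsub z hz)) (a i) hai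
    have hq0 : q ≠ 0 := by rintro rfl; simp at hq
    refine ⟨p, q, hq0, fun z hz => ?_⟩
    have hc := hcont i _ (hb (hsub z hz))
    simp only [Function.update_idem, Function.update_self] at hc
    have hc2 : ContinuousAt (fun z => q.eval z * f (Function.update a i z) - p.eval z) z :=
      (q.continuous.continuousAt.mul hc).sub p.continuous.continuousAt
    have hev : ∀ᶠ t in nhdsWithin z {z}ᶜ,
        q.eval t * f (Function.update a i t) - p.eval t = 0 := by
      filter_upwards [aux_poly_ev q hq0 z,
        nhdsWithin_le_nhds (Metric.isOpen_ball.mem_nhds hz)] with t ht1 ht2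
      rw [hpq t ht2 ht1]; field_simp; ring
    have h2 := hc2.tendsto.mono_left (nhdsWithin_le_nhds (s := {z}ᶜ))
    have h3 := tendsto_nhds_unique (h2.congr' hev) tendsto_const_nhds
    exact sub_eq_zero.1 h3.symm.symm
  obtain ⟨x0, hx0⟩ := hne
  obtain ⟨r0, hr0, hb0, P0, Q0, hQ0, hPQ0⟩ := hloc x0 hx0
  -- globalization
  let S : Set (Fin n → ℂ) := interior {y | eval y Q0 * f y = eval y P0}
  have hSsub : S ⊆ {y | eval y Q0 * f y = eval y P0} := interior_subset
  have hS : U ⊆ S := by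
    refine hconn.isPreconnected.subset_of_closure_inter_subset isOpen_interior ⟨x0, hx0, ?_⟩ ?_
    · exact mem_interior.2 ⟨_, hPQ0, Metric.isOpen_ball, Metric.mem_ball_self hr0⟩
    · rintro x ⟨hxS, hxU⟩
      obtain ⟨r, hr, hb, P, Q, hQ, hPQ⟩ := hloc x hxU
      obtain ⟨y, hyb, hyS⟩ := mem_closure_iff.1 hxS _ Metric.isOpen_ball (Metric.mem_ball_self hr)
      have hid : Q0 * P - Q * P0 = 0 := by
        refine aux_zero_of_open _ (Metric.ball x r ∩ S)
          (Metric.isOpen_ball.inter isOpen_interior) ⟨y, hyb, hyS⟩ ?_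
        rintro z ⟨hz1, hz2⟩
        have e1 := hPQ z hz1
        have e2 : eval z Q0 * f z = eval z P0 := hSsub hz2
        rw [map_sub, map_mul, map_mul, ← e1, ← e2]; ring
      have := aux_dense (Metric.ball x r) Metric.isOpen_ball
        (fun z => eval z Q0 * f z - eval z P0)
        (fun i a ha => hcomb P0 Q0 i a (hb ha)) Q hQ (by
          intro z hz
          have e1 := hPQ z hz
          have e2 := congrArg (eval z) hid
          simp only [map_sub, map_mul, map_zero] at e2
          rw [mul_sub, ← e2, ← e1]; ring)
      exact mem_interior.2 ⟨_, fun z hz => sub_eq_zero.1 (this z hz), Metric.isOpen_ball,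
        Metric.mem_ball_self hr⟩
  obtain ⟨P, Q, h, hrel, hP, hQ⟩ := UniqueFactorizationMonoid.exists_reduced_factors' P0 Q0 hQ0
  have hh0 : h ≠ 0 := by rintro rfl; simp at hQ; exact hQ0 hQ.symm
  have hQne : Q ≠ 0 := by rintro rfl; simp at hQ; exact hQ0 hQ.symm
  have hfin : ∀ y ∈ U, eval y Q * f y = eval y P := by
    intro y hy
    refine sub_eq_zero.1 (aux_dense U hU (fun z => eval z Q * f z - eval z P)
      (hcomb P Q) h hh0 ?_ y hy)
    intro z hz
    have e2 : eval z Q0 * f z = eval z P0 := hSsub (hS hz)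
    rw [← hP, ← hQ, map_mul, map_mul] at e2
    linear_combination e2
  intro x hx
  refine ⟨P, Q, aux_nonvanish P Q hQne hrel U hU f hfin x hx, fun y hy hyQ => ?_⟩
  rw [eq_div_iff hyQ, mul_comm]; exact hfin y hy
end

section
/- Let V ⊆ ℂ^m and W ⊆ ℂ^n be nonempty connected open sets and let f : V × W → ℂ be a holomorphic (complex-differentiable) function such that: (1) for each point x ∈ V the function y ↦ f(x,y) is regular on W, and (2) for each point y ∈ W the function x ↦ f(x,y) is regular on V. Then f is regular on V × W, i.e., regular at every point of V × W with respect to complex polynomials in m + n variables. (Proposition 9.3 in the case of affine spaces.) -/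
open MvPolynomial

theorem aux_zero {ι : Type*} [Fintype ι] (U : Set (ι → ℂ)) (hU : IsOpen U) (hne : U.Nonempty)
    (Q : MvPolynomial ι ℂ) (h : ∀ x ∈ U, eval x Q = 0) : Q = 0 := by
  obtain ⟨z, hz⟩ := hne
  obtain ⟨ε, hε, hb⟩ := Metric.isOpen_iff.1 hU z hz
  apply MvPolynomial.funext_set (fun i => Metric.ball (z i) ε)
  · intro i
    exact infinite_of_mem_nhds (z i) (Metric.ball_mem_nhds _ hε)
  · intro x hx
    rw [map_zero]
    apply h
    apply hb
    rw [← ball_pi _ hε] at hx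
    exact hx

theorem aux_dense_s5 {ι : Type*} [Fintype ι] (U : Set (ι → ℂ)) (hU : IsOpen U)
    (φ : (ι → ℂ) → ℂ) (hφ : ContinuousOn φ U) (Q : MvPolynomial ι ℂ) (hQ : Q ≠ 0)
    (h : ∀ x ∈ U, eval x Q * φ x = 0) : ∀ x ∈ U, φ x = 0 := by
  intro x hx
  by_contra hne
  apply hQ
  have hO : IsOpen (U ∩ φ ⁻¹' {0}ᶜ) := hφ.isOpen_inter_preimage hU isOpen_compl_singleton
  apply aux_zero _ hO ⟨x, hx, hne⟩
  rintro y ⟨hy, hy'⟩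
  exact (mul_eq_zero.1 (h y hy)).resolve_right hy'

noncomputable def auxT {ι : Type*} (e : ι → ℂ) :
    MvPolynomial ι ℂ →ₐ[ℂ] Polynomial (MvPolynomial ι ℂ) :=
  aeval (fun i => Polynomial.C (X i) + Polynomial.C (C (e i)) * Polynomial.X)

noncomputable def auxS {ι : Type*} (e : ι → ℂ) :
    Polynomial (MvPolynomial ι ℂ) →+* Polynomial (MvPolynomial ι ℂ) :=
  Polynomial.eval₂RingHom (auxT e).toRingHom Polynomial.X

theorem auxS_comp {ι : Type*} (e : ι → ℂ) : (auxS e).comp (auxS (-e)) = RingHom.id _ := by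
  apply Polynomial.ringHom_ext'
  · apply MvPolynomial.ringHom_ext
    · intro r
      simp [auxS, auxT, MvPolynomial.algebraMap_eq, Polynomial.algebraMap_apply]
    · intro i
      simp [auxS, auxT, Polynomial.algebraMap_apply, MvPolynomial.algebraMap_eq]
      ring
  · simp [auxS]

theorem auxT_prime {ι : Type*} (e : ι → ℂ) (b : MvPolynomial ι ℂ) (hb : Prime b) :
    Prime (auxT e b) := by
  let E : Polynomial (MvPolynomial ι ℂ) ≃+* Polynomial (MvPolynomial ι ℂ) :=
    RingEquiv.ofRingHom (auxS e) (auxS (-e)) (auxS_comp e)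
      (by simpa using auxS_comp (-e))
  have h1 : Prime (Polynomial.C b) := Polynomial.prime_C_iff.2 hb
  have h2 := (MulEquiv.prime_iff E).2 h1
  have h3 : E (Polynomial.C b) = auxT e b := by
    simp [E, auxS]
  rwa [h3] at h2

theorem auxT_eval {ι : Type*} (e : ι → ℂ) (b : MvPolynomial ι ℂ) (x : ι → ℂ) (s : ℂ) :
    ((auxT e b).map (eval x)).eval s = eval (fun i => x i + e i * s) b := by
  have : (((Polynomial.evalRingHom s).comp (Polynomial.mapRingHom (eval x))).comp
      (auxT e).toRingHom) = eval (fun i => x i + e i * s) := by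
    apply MvPolynomial.ringHom_ext
    · intro r
      simp [auxT, Polynomial.algebraMap_apply, MvPolynomial.algebraMap_eq]
    · intro i
      simp [auxT]
  exact congrArg (fun g => g b) this

theorem auxT_eval0 {ι : Type*} (e : ι → ℂ) (b : MvPolynomial ι ℂ) :
    (auxT e b).eval 0 = b := by
  have : ((Polynomial.evalRingHom 0).comp (auxT e).toRingHom) = RingHom.id _ := by
    apply MvPolynomial.ringHom_ext
    · intro r
      simp [auxT, Polynomial.algebraMap_apply, MvPolynomial.algebraMap_eq]
    · intro i
      simp [auxT]
  exact congrArg (fun g => g b) this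

theorem auxT_prod {ι : Type*} (e : ι → ℂ) (α : ι → ℕ) (S : Finset ι) :
    (∏ i ∈ S, (Polynomial.C (X i) + Polynomial.C (C (e i)) * Polynomial.X :
      Polynomial (MvPolynomial ι ℂ)) ^ α i).natDegree ≤ ∑ i ∈ S, α i ∧
    (∏ i ∈ S, (Polynomial.C (X i) + Polynomial.C (C (e i)) * Polynomial.X :
      Polynomial (MvPolynomial ι ℂ)) ^ α i).coeff (∑ i ∈ S, α i) = C (∏ i ∈ S, e i ^ α i) := by
  classical
  have h1 : ∀ i, (Polynomial.C (X i) + Polynomial.C (C (e i)) * Polynomial.X :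
      Polynomial (MvPolynomial ι ℂ)).natDegree ≤ 1 := by
    intro i
    compute_degree
  induction S using Finset.induction_on with
  | empty => simp
  | insert a S ha ih =>
    rw [Finset.prod_insert ha, Finset.sum_insert ha, Finset.prod_insert ha]
    have h2 := Polynomial.natDegree_pow_le_of_le (α a) (h1 a)
    rw [mul_one] at h2
    refine ⟨Polynomial.natDegree_mul_le_of_le h2 ih.1, ?_⟩
    rw [Polynomial.coeff_mul_add_eq_of_natDegree_le h2 ih.1, ih.2]
    have := Polynomial.coeff_pow_of_natDegree_le (m := α a) (h1 a)
    rw [mul_one] at this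
    rw [this]
    simp

theorem auxT_lead {ι : Type*} [Fintype ι] (e : ι → ℂ) (b : MvPolynomial ι ℂ) :
    (auxT e b).natDegree ≤ b.totalDegree ∧
    (auxT e b).coeff b.totalDegree = C (eval e (homogeneousComponent b.totalDegree b)) := by
  have key : auxT e b = ∑ α ∈ b.support, Polynomial.C (C (coeff α b)) *
      ∏ i, (Polynomial.C (X i) + Polynomial.C (C (e i)) * Polynomial.X :
      Polynomial (MvPolynomial ι ℂ)) ^ α i := by
    simp [auxT, aeval_eq_eval₂Hom, eval₂_eq', Polynomial.algebraMap_apply,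
      MvPolynomial.algebraMap_eq]
  have hdeg : ∀ α ∈ b.support, ∑ i, α i ≤ b.totalDegree := by
    intro α hα
    have := le_totalDegree hα
    rwa [Finsupp.sum_fintype _ _ (by simp)] at this
  rw [key]
  constructor
  · apply Polynomial.natDegree_sum_le_of_forall_le
    intro α hα
    refine (Polynomial.natDegree_C_mul_le _ _).trans ((auxT_prod e α _).1.trans (hdeg α hα))
  · rw [Polynomial.finsetSum_coeff, homogeneousComponent_apply, map_sum, map_sum,
      Finset.sum_filter]
    apply Finset.sum_congr rfl
    intro α hα
    have hd : Finsupp.degree α = ∑ i, α i := by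
      rw [Finsupp.degree_eq_sum]
    rw [Polynomial.coeff_C_mul]
    split_ifs with h
    · rw [← h, hd, (auxT_prod e α _).2, eval_monomial, Finsupp.prod_fintype _ _ (by simp)]
      simp
    · rw [Polynomial.coeff_eq_zero_of_natDegree_lt, mul_zero]
      refine lt_of_le_of_lt (auxT_prod e α _).1 (lt_of_le_of_ne (hdeg α hα) ?_)
      rwa [← hd]

theorem aux_dir {ι : Type*} [Fintype ι] (b : MvPolynomial ι ℂ) (hb : b ≠ 0) :
    ∃ e : ι → ℂ, eval e (homogeneousComponent b.totalDegree b) ≠ 0 := by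
  by_contra! h
  have h0 : homogeneousComponent b.totalDegree b = 0 := MvPolynomial.funext (by simpa using h)
  have hs : b.support.Nonempty := support_nonempty.2 hb
  obtain ⟨α, hα, hd⟩ := Finset.exists_mem_eq_sup b.support hs (fun s => s.sum fun _ e => e)
  have h2 := coeff_homogeneousComponent b.totalDegree b α
  rw [h0, if_pos, coeff_zero] at h2
  · exact (mem_support_iff.1 hα) h2.symm
  · rw [Finsupp.degree_eq_sum, totalDegree, hd, Finsupp.sum_fintype _ _ (by simp)]

theorem aux_root (β : Polynomial ℂ) (hm : β.Monic) (ε : ℝ) (hε : 0 < ε)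
    (h : ‖β.eval 0‖ < ε ^ β.natDegree) : ∃ s, ‖s‖ < ε ∧ β.eval s = 0 := by
  by_contra! hc
  have hs := IsAlgClosed.splits β
  have h1 := hs.coeff_zero_eq_prod_roots_of_monic hm
  rw [← Polynomial.coeff_zero_eq_eval_zero, h1, hs.natDegree_eq_card_roots] at h
  have h2 : ∀ M : Multiset ℂ, (∀ s ∈ M, ε ≤ ‖s‖) → ε ^ M.card ≤ ‖M.prod‖ := by
    intro M
    induction M using Multiset.induction_on with
    | empty => simp
    | cons a M ih =>
      intro hM
      have i1 := ih (fun s hs => hM s (Multiset.mem_cons_of_mem hs))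
      have i2 := hM a (Multiset.mem_cons_self _ _)
      rw [Multiset.card_cons, Multiset.prod_cons, norm_mul, pow_succ, mul_comm]
      gcongr
  have h3 := h2 β.roots (by
    intro s hs
    by_contra! hlt
    exact hc s hlt ((Polynomial.mem_roots'.1 hs).2))
  simp at h
  linarith

theorem aux_prime {ι : Type*} [Fintype ι] (U : Set (ι → ℂ)) (hU : IsOpen U) (z : ι → ℂ)
    (hz : z ∈ U) (b p : MvPolynomial ι ℂ) (hb : Prime b) (hbz : eval z b = 0)
    (h : ∀ x ∈ U, eval x b = 0 → eval x p = 0) : b ∣ p := by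
  by_contra hnd
  obtain ⟨e, he⟩ := aux_dir b hb.ne_zero
  set c := eval e (homogeneousComponent b.totalDegree b) with hc
  obtain ⟨hl1, hl2⟩ := auxT_lead e b
  rw [← hc] at hl2
  set B : Polynomial (MvPolynomial ι ℂ) := Polynomial.C (C c⁻¹) * auxT e b with hB
  have hBm : B.Monic := by
    apply Polynomial.monic_of_natDegree_le_of_coeff_eq_one b.totalDegree
    · exact (Polynomial.natDegree_C_mul_le _ _).trans hl1
    · rw [hB, Polynomial.coeff_C_mul, hl2, ← C_mul, inv_mul_cancel₀ he, C_1]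
  have hunit : IsUnit (Polynomial.C (C c⁻¹) : Polynomial (MvPolynomial ι ℂ)) :=
    ((IsUnit.mk0 _ (inv_ne_zero he)).map C).map Polynomial.C
  have hass : Associated (auxT e b) B := by
    rw [hB]
    exact (associated_unit_mul_left _ _ hunit).symm
  have hBp : Prime B := hass.prime_iff.1 (auxT_prime e b hb)
  have hnd' : ¬ B ∣ auxT e p := by
    intro hd
    apply hnd
    have := (Polynomial.evalRingHom 0).map_dvd (hass.dvd.trans hd)
    simpa [auxT_eval0] using this
  -- the elimination
  obtain ⟨r, hr0, u, v, huv⟩ : ∃ r : MvPolynomial ι ℂ, r ≠ 0 ∧ ∃ u v,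
      Polynomial.C r = u * auxT e p + v * B := by
    have : (Ideal.span {B}).IsPrime := (Ideal.span_singleton_prime hBp.ne_zero).2 hBp
    have : Module.Finite (MvPolynomial ι ℂ) (Polynomial (MvPolynomial ι ℂ) ⧸ Ideal.span {B}) :=
      hBm.finite_quotient
    set π := Ideal.Quotient.mk (Ideal.span {B})
    have hx : π (auxT e p) ≠ 0 := by
      rw [Ne, Ideal.Quotient.eq_zero_iff_mem, Ideal.mem_span_singleton]
      exact hnd'
    have := Ideal.comap_ne_bot_of_integral_mem (R := MvPolynomial ι ℂ)
      (S := Polynomial (MvPolynomial ι ℂ) ⧸ Ideal.span {B}) (I := Ideal.span {π (auxT e p)})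
      (x := π (auxT e p)) hx (Ideal.mem_span_singleton_self _) (Algebra.IsIntegral.isIntegral _)
    obtain ⟨r, hr, hr0⟩ := Submodule.exists_mem_ne_zero_of_ne_bot this
    refine ⟨r, hr0, ?_⟩
    rw [Ideal.mem_comap, Ideal.mem_span_singleton'] at hr
    obtain ⟨a, ha⟩ := hr
    obtain ⟨u, rfl⟩ := Ideal.Quotient.mk_surjective a
    have h5 : π (Polynomial.C r - u * auxT e p) = 0 := by
      rw [map_sub, map_mul, ha]
      exact sub_self _
    rw [Ideal.Quotient.eq_zero_iff_mem, Ideal.mem_span_singleton'] at h5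
    obtain ⟨v, hv⟩ := h5
    exact ⟨u, v, by rw [hv]; ring⟩
  apply hr0
  obtain ⟨ρ, hρ, hball⟩ := Metric.isOpen_iff.1 hU z hz
  set ε : ℝ := ρ / 2 / (‖e‖ + 1) with hεdef
  have hε : 0 < ε := by positivity
  have hBe : ∀ x s, (B.map (eval x)).eval s = c⁻¹ * eval (fun i => x i + e i * s) b := by
    intro x s
    rw [hB, Polynomial.map_mul, Polynomial.eval_mul, auxT_eval]
    simp
  have hcont : Continuous fun x : ι → ℂ => ‖c⁻¹ * eval x b‖ :=
    (continuous_const.mul (MvPolynomial.continuous_eval b)).norm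
  have hO : IsOpen (Metric.ball z (ρ / 2) ∩ {x | ‖c⁻¹ * eval x b‖ < ε ^ B.natDegree}) :=
    Metric.isOpen_ball.inter (isOpen_lt hcont continuous_const)
  refine aux_zero _ hO ⟨z, Metric.mem_ball_self (by positivity), ?_⟩ r ?_
  · simp only [Set.mem_ofPred_eq, hbz, mul_zero, norm_zero]
    positivity
  rintro x ⟨hx1, hx2⟩
  obtain ⟨s, hs1, hs2⟩ := aux_root (B.map (eval x)) (hBm.map _) ε hε (by
    rw [hBm.natDegree_map, hBe]
    simpa using hx2)
  have hmem : (fun i => x i + e i * s) ∈ U := by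
    apply hball
    have e1 : (fun i => x i + e i * s) = x + s • e := by
      ext i; simp [mul_comm]
    rw [e1, mem_ball_iff_norm]
    rw [mem_ball_iff_norm] at hx1
    have e2 : ‖s • e‖ ≤ ρ / 2 := by
      rw [norm_smul]
      calc ‖s‖ * ‖e‖ ≤ ε * (‖e‖ + 1) := by gcongr; linarith
        _ = ρ / 2 := by rw [hεdef]; field_simp
    calc ‖x + s • e - z‖ = ‖(x - z) + s • e‖ := by congr 1; abel
      _ ≤ ‖x - z‖ + ‖s • e‖ := norm_add_le _ _
      _ < ρ := by linarith
  have hb0 : eval (fun i => x i + e i * s) b = 0 := by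
    rw [hBe] at hs2
    exact (mul_eq_zero.1 hs2).resolve_left (inv_ne_zero he)
  have hp0 := h _ hmem hb0
  have h6 := congrArg (fun q => (Polynomial.map (eval x) q).eval s) huv
  simp only [Polynomial.map_C, Polynomial.eval_C, Polynomial.map_add, Polynomial.map_mul,
    Polynomial.eval_add, Polynomial.eval_mul, auxT_eval, hp0, hs2, mul_zero, add_zero] at h6
  exact h6

theorem aux_reg {ι : Type*} [Fintype ι] (U : Set (ι → ℂ)) (hU : IsOpen U) (z : ι → ℂ)
    (hz : z ∈ U) (B : MvPolynomial ι ℂ) (hB : B ≠ 0) :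
    ∀ (F : (ι → ℂ) → ℂ), ContinuousOn F U → ∀ A : MvPolynomial ι ℂ,
    (∀ x ∈ U, eval x B * F x = eval x A) →
    ∃ p q : MvPolynomial ι ℂ, eval z q ≠ 0 ∧ ∀ x ∈ U, eval x q * F x = eval x p := by
  induction B using UniqueFactorizationMonoid.induction_on_prime with
  | h₁ => exact absurd rfl hB
  | h₂ B hu => exact fun F _ A h => ⟨A, B, (hu.map (eval z)).ne_zero, h⟩
  | h₃ q' b hq' hb ih =>
    intro F hF A h
    have hcb : ContinuousOn (fun x => eval x b * F x) U :=
      (MvPolynomial.continuous_eval b).continuousOn.mul hF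
    obtain ⟨p, q, hqz, hq⟩ := ih hq' (fun x => eval x b * F x) hcb A (by
      intro x hx
      rw [← h x hx, map_mul]; ring)
    by_cases hbz : eval z b = 0
    · have hdvd : b ∣ p := by
        apply aux_prime U hU z hz b p hb hbz
        intro x hx hx0
        rw [← hq x hx, hx0]; ring
      obtain ⟨p', rfl⟩ := hdvd
      refine ⟨p', q, hqz, fun x hx => ?_⟩
      refine sub_eq_zero.1 (aux_dense_s5 U hU (fun x => eval x q * F x - eval x p') ?_ b hb.ne_zero
        ?_ x hx)
      · exact ((MvPolynomial.continuous_eval q).continuousOn.mul hF).sub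
          (MvPolynomial.continuous_eval p').continuousOn
      · intro y hy
        have := hq y hy
        rw [map_mul] at this
        linear_combination this
    · refine ⟨p, q * b, by rw [map_mul]; exact mul_ne_zero hqz hbz, fun x hx => ?_⟩
      rw [← hq x hx, map_mul]; ring

theorem aux_det_mem {X : Type*} (𝒜 : Subring (X → ℂ)) (k : ℕ) (M : Fin k → Fin k → X → ℂ)
    (hM : ∀ i j, M i j ∈ 𝒜) :
    (fun x => (Matrix.of fun i j => M i j x).det) ∈ 𝒜 := by
  have : (fun x => (Matrix.of fun i j => M i j x).det) =
      ∑ σ : Equiv.Perm (Fin k), (((Equiv.Perm.sign σ : ℤ) : X → ℂ)) * ∏ i, M (σ i) i := by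
    ext x
    simp [Matrix.det_apply', Finset.sum_apply, Finset.prod_apply]
  rw [this]
  exact sum_mem fun σ _ => mul_mem (intCast_mem _ _) (prod_mem fun i _ => hM _ _)

theorem aux_elim {X Y : Type*} [Nonempty X] (𝒜 : Subring (X → ℂ)) (k : ℕ) :
    ∀ (g : Fin k → X → Y → ℂ), (∀ i y, (fun x => g i x y) ∈ 𝒜) →
    (∀ x (y : Fin k → Y), (Matrix.of fun r i => g i x (y r)).det = 0) →
    ∃ c : Fin k → X → ℂ, (∀ i, c i ∈ 𝒜) ∧ (∃ i, c i ≠ 0) ∧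
      ∀ x y, ∑ i, c i x * g i x y = 0 := by
  induction k with
  | zero =>
    intro g _ h
    obtain ⟨x⟩ := ‹Nonempty X›
    have := h x Fin.elim0
    simp at this
  | succ k ih =>
    intro g hg h
    by_cases hz : ∀ x (y : Fin k → Y), (Matrix.of fun r i => g (Fin.succ i) x (y r)).det = 0
    · obtain ⟨c, hc1, ⟨i, hi⟩, hc3⟩ := ih (fun i => g i.succ) (fun i y => hg _ _) hz
      refine ⟨Fin.cons 0 c, ?_, ⟨i.succ, by simpa using hi⟩, ?_⟩
      · intro j
        refine Fin.cases ?_ (fun j => ?_) j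
        · simpa using zero_mem 𝒜
        · simpa using hc1 j
      · intro x y
        rw [Fin.sum_univ_succ]
        simpa using hc3 x y
    · push Not at hz
      obtain ⟨x₀, ys, hne⟩ := hz
      refine ⟨fun j x => (-1) ^ (j : ℕ) *
        (Matrix.of fun r i => g (j.succAbove i) x (ys r)).det, ?_, ⟨0, ?_⟩, ?_⟩
      · intro j
        have h1 : (-1 : X → ℂ) ^ (j : ℕ) ∈ 𝒜 := pow_mem (neg_mem (one_mem _)) _
        exact mul_mem h1 (aux_det_mem 𝒜 k (fun r i x => g (j.succAbove i) x (ys r))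
          (fun r i => hg _ _))
      · intro h0
        have := congrFun h0 x₀
        simp at this
        exact hne this
      · intro x y
        have := h x (Fin.cons y ys)
        rw [Matrix.det_succ_row_zero] at this
        rw [← this]
        apply Finset.sum_congr rfl
        intro j _
        have e1 : (Matrix.of fun r i => g i x ((Fin.cons y ys : Fin (k+1) → Y) r)).submatrix
            Fin.succ j.succAbove = Matrix.of fun r i => g (j.succAbove i) x (ys r) := by
          ext r i
          simp
        rw [e1]
        simp
        ring

theorem aux_dense' {ι : Type*} [Fintype ι] (U : Set (ι → ℂ)) (hU : IsOpen U)
    (φ : U → ℂ) (hφ : Continuous φ) (Q : MvPolynomial ι ℂ) (hQ : Q ≠ 0)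
    (h : ∀ x : U, eval (x : ι → ℂ) Q * φ x = 0) : φ = 0 := by
  ext x
  by_contra hne
  apply hQ
  have hO : IsOpen (Subtype.val '' (φ ⁻¹' {0}ᶜ)) :=
    hU.isOpenMap_subtype_val _ (isOpen_compl_singleton.preimage hφ)
  apply aux_zero _ hO ⟨x, x, hne, rfl⟩
  rintro _ ⟨y, hy, rfl⟩
  exact (mul_eq_zero.1 (h y)).resolve_right hy

/-- Continuous functions on `U` that are generically quotients of polynomials. -/
def auxA {ι : Type*} (U : Set (ι → ℂ)) : Subring (U → ℂ) where
  carrier := {φ | Continuous φ ∧ ∃ Q P : MvPolynomial ι ℂ, Q ≠ 0 ∧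
    ∀ x : U, eval (x : ι → ℂ) Q * φ x = eval (x : ι → ℂ) P}
  mul_mem' := by
    rintro a b ⟨ha, Q, P, hQ, h⟩ ⟨hb, Q', P', hQ', h'⟩
    refine ⟨ha.mul hb, Q * Q', P * P', mul_ne_zero hQ hQ', fun x => ?_⟩
    rw [map_mul, map_mul, ← h, ← h', Pi.mul_apply]; ring
  one_mem' := ⟨continuous_const, 1, 1, one_ne_zero, fun x => by simp⟩
  add_mem' := by
    rintro a b ⟨ha, Q, P, hQ, h⟩ ⟨hb, Q', P', hQ', h'⟩
    refine ⟨ha.add hb, Q * Q', Q' * P + Q * P', mul_ne_zero hQ hQ', fun x => ?_⟩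
    rw [map_mul, map_add, map_mul, map_mul, ← h, ← h', Pi.add_apply]; ring
  zero_mem' := ⟨continuous_const, 1, 0, one_ne_zero, fun x => by simp⟩
  neg_mem' := by
    rintro a ⟨ha, Q, P, hQ, h⟩
    refine ⟨ha.neg, Q, -P, hQ, fun x => ?_⟩
    rw [map_neg, ← h, Pi.neg_apply]; ring

theorem auxA_ident {ι : Type*} [Fintype ι] (U : Set (ι → ℂ)) (hU : IsOpen U)
    (φ : U → ℂ) (hφ : φ ∈ auxA U) (O : Set U) (hO : IsOpen O) (hne : O.Nonempty)
    (h : ∀ x ∈ O, φ x = 0) : φ = 0 := by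
  obtain ⟨hc, Q, P, hQ, hP⟩ := hφ
  apply aux_dense' U hU φ hc Q hQ
  have : P = 0 := by
    apply aux_zero _ (hU.isOpenMap_subtype_val _ hO) (hne.image _)
    rintro _ ⟨y, hy, rfl⟩
    rw [← hP, h y hy, mul_zero]
  intro x
  rw [hP, this, map_zero]

theorem auxA_of_reg {ι : Type*} [Fintype ι] (U : Set (ι → ℂ)) (hU : IsOpen U) (hne : U.Nonempty)
    (φ : (ι → ℂ) → ℂ) (hφ : ContinuousOn φ U)
    (h : ∀ x ∈ U, ∃ p q : MvPolynomial ι ℂ, eval x q ≠ 0 ∧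
      ∀ x' ∈ U, eval x' q ≠ 0 → φ x' = eval x' p / eval x' q) :
    (fun x : U => φ x) ∈ auxA U := by
  obtain ⟨x, hx⟩ := hne
  obtain ⟨p, q, hq, hpq⟩ := h x hx
  have hq0 : q ≠ 0 := by
    rintro rfl
    simp at hq
  refine ⟨hφ.restrict, q, p, hq0, fun y => ?_⟩
  refine sub_eq_zero.1 (aux_dense_s5 U hU (fun x => eval x q * φ x - eval x p) ?_ q hq0
        ?_ y y.2)
  · exact ((MvPolynomial.continuous_eval q).continuousOn.mul hφ).sub
      (MvPolynomial.continuous_eval p).continuousOn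
  · intro w hw
    by_cases h0 : eval w q = 0
    · rw [h0, zero_mul]
    · skip
      rw [hpq w hw h0]
      field_simp
      ring

theorem auxA_common {ι : Type*} (U : Set (ι → ℂ)) (k : ℕ) (c : Fin k → U → ℂ)
    (hc : ∀ i, c i ∈ auxA U) : ∃ (Q : MvPolynomial ι ℂ) (P : Fin k → MvPolynomial ι ℂ), Q ≠ 0 ∧
    ∀ i (x : U), eval (x : ι → ℂ) Q * c i x = eval (x : ι → ℂ) (P i) := by
  choose hcc Q P hQ hP using hc
  refine ⟨∏ i, Q i, fun i => (∏ j ∈ Finset.univ.erase i, Q j) * P i,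
    Finset.prod_ne_zero_iff.2 fun i _ => hQ i, fun i x => ?_⟩
  rw [map_mul, ← hP, ← Finset.mul_prod_erase _ _ (Finset.mem_univ i), map_mul]
  ring

theorem aux_sum_mon {n : ℕ} (S : Finset (Fin n →₀ ℕ)) (p : MvPolynomial (Fin n) ℂ)
    (hS : p.support ⊆ S) (y : Fin n → ℂ) :
    ∑ α : S, eval y (monomial (α : Fin n →₀ ℕ) (1 : ℂ)) * coeff (α : Fin n →₀ ℕ) p = eval y p := by
  rw [Finset.sum_coe_sort S (fun α => eval y (monomial α (1 : ℂ)) * coeff α p),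
    eval_eq, ← Finset.sum_subset hS]
  · apply Finset.sum_congr rfl
    intro α _
    rw [eval_monomial, Finsupp.prod]
    ring
  · intro α _ hα
    rw [notMem_support_iff.1 hα, mul_zero]

theorem aux_indep {m n : ℕ} (S : Finset (Fin n →₀ ℕ)) (P : S → MvPolynomial (Fin m) ℂ)
    (h : ∑ α : S, rename Sum.inl (P α) * rename Sum.inr (monomial (α : Fin n →₀ ℕ) (1 : ℂ)) =
      (0 : MvPolynomial (Fin m ⊕ Fin n) ℂ)) (α : S) : P α = 0 := by
  apply MvPolynomial.funext
  intro x
  have h1 : ∑ α : S, monomial (α : Fin n →₀ ℕ) (eval x (P α)) = 0 := by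
    apply MvPolynomial.funext
    intro y
    have := congrArg (eval (Sum.elim x y)) h
    simp only [map_sum, map_mul, eval_rename, Sum.elim_comp_inl, Sum.elim_comp_inr] at this
    rw [map_sum, map_zero]
    rw [map_zero] at this
    rw [← this]
    apply Finset.sum_congr rfl
    intro β _
    simp [eval_monomial]
  have h2 := congrArg (coeff (α : Fin n →₀ ℕ)) h1
  rw [coeff_sum, Finset.sum_eq_single α] at h2
  · simpa using h2
  · intro β _ hβ
    rw [coeff_monomial, if_neg]
    exact fun hh => hβ (Subtype.ext hh)
  · simp

theorem aux_global (m n : ℕ) (V : Set (Fin m → ℂ)) (W : Set (Fin n → ℂ))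
    (hV : IsOpen V) (hVne : V.Nonempty) (hW : IsOpen W) (hWne : W.Nonempty)
    (f : (Fin m → ℂ) × (Fin n → ℂ) → ℂ)
    (h1 : ∀ x ∈ V, (fun y : W => f (x, y)) ∈ auxA W)
    (h2 : ∀ y ∈ W, (fun x : V => f (x, y)) ∈ auxA V) :
    ∃ A B : MvPolynomial (Fin m ⊕ Fin n) ℂ, B ≠ 0 ∧ ∀ x ∈ V, ∀ y ∈ W,
      eval (Sum.elim x y) B * f (x, y) = eval (Sum.elim x y) A := by
  classical
  have : Nonempty V := hVne.to_subtype
  have : BaireSpace V := hV.baireSpace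
  let g₀ : ∀ S : Finset (Fin n →₀ ℕ), S ⊕ S → V → W → ℂ := fun S =>
    Sum.elim (fun α _ y => eval (y : Fin n → ℂ) (monomial (α : Fin n →₀ ℕ) (1 : ℂ)))
      (fun α x y => f (x, y) * eval (y : Fin n → ℂ) (monomial (α : Fin n →₀ ℕ) (1 : ℂ)))
  let e : ∀ S : Finset (Fin n →₀ ℕ), Fin (Fintype.card (S ⊕ S)) ≃ S ⊕ S :=
    fun S => (Fintype.equivFin _).symm
  let g : ∀ S : Finset (Fin n →₀ ℕ), Fin (Fintype.card (S ⊕ S)) → V → W → ℂ :=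
    fun S i => g₀ S (e S i)
  have hconst : ∀ a : ℂ, (fun _ : V => a) ∈ auxA V := fun a =>
    ⟨continuous_const, 1, C a, one_ne_zero, fun x => by simp⟩
  have hg : ∀ S i y, (fun x => g S i x y) ∈ auxA V := by
    intro S i y
    simp only [g]
    rcases e S i with α | α
    · exact hconst _
    · exact mul_mem (h2 y y.2) (hconst _)
  let D : ∀ S : Finset (Fin n →₀ ℕ), (Fin (Fintype.card (S ⊕ S)) → W) → V → ℂ :=
    fun S y x => (Matrix.of fun r i => g S i x (y r)).det
  have hD : ∀ S y, D S y ∈ auxA V := fun S y =>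
    aux_det_mem (auxA V) _ (fun r i x => g S i x (y r)) (fun r i => hg _ _ _)
  obtain ⟨S, hS⟩ : ∃ S, (interior {x : V | ∀ y, D S y x = 0}).Nonempty := by
    apply nonempty_interior_of_iUnion_of_closed
    · intro S
      simp only [Set.setOf_forall]
      exact isClosed_iInter fun y => isClosed_eq (hD S y).1 continuous_const
    · rw [Set.eq_univ_iff_forall]
      intro x
      obtain ⟨-, q, p, hq, hpq⟩ := h1 x x.2
      rw [Set.mem_iUnion]
      refine ⟨p.support ∪ q.support, ?_⟩
      set S := p.support ∪ q.support with hSdef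
      intro y
      apply Matrix.exists_mulVec_eq_zero_iff.1
      let v₀ : S ⊕ S → ℂ := Sum.elim (fun α => coeff (α : Fin n →₀ ℕ) p)
        (fun α => - coeff (α : Fin n →₀ ℕ) q)
      refine ⟨fun i => v₀ (e S i), ?_, ?_⟩
      · intro h0
        obtain ⟨α, hα⟩ := support_nonempty.2 hq
        have := congrFun h0 ((e S).symm (Sum.inr ⟨α, Finset.mem_union_right _ hα⟩))
        simp [v₀] at this
        exact (mem_support_iff.1 hα) this
      · ext r
        simp only [Matrix.mulVec, dotProduct, Matrix.of_apply, g]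
        rw [(e S).sum_comp (fun i => g₀ S i x (y r) * v₀ i), Fintype.sum_sum_type]
        simp only [g₀, v₀, Sum.elim_inl, Sum.elim_inr, mul_neg, mul_assoc,
          Finset.sum_neg_distrib, ← Finset.mul_sum, Pi.zero_apply]
        rw [aux_sum_mon S p Finset.subset_union_left, aux_sum_mon S q Finset.subset_union_right,
          ← hpq]
        ring
  have hall : ∀ x y, D S y x = 0 := by
    intro x y
    have := auxA_ident V hV (D S y) (hD S y) _ isOpen_interior hS
      (fun x hx => (interior_subset hx : ∀ y, D S y x = 0) y)
    rw [this, Pi.zero_apply]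
  obtain ⟨c, hcA, ⟨i₀, hi₀⟩, hc⟩ := aux_elim (auxA V) _ (g S) (hg S) hall
  obtain ⟨Q, P, hQ, hQP⟩ := auxA_common V _ c hcA
  have hPi : P i₀ ≠ 0 := by
    intro h0
    apply hi₀
    apply aux_dense' V hV _ (hcA i₀).1 Q hQ
    intro x
    rw [hQP, h0, map_zero]
  let A : MvPolynomial (Fin m ⊕ Fin n) ℂ := ∑ α : S, rename Sum.inl (P ((e S).symm (Sum.inl α))) *
    rename Sum.inr (monomial (α : Fin n →₀ ℕ) (1 : ℂ))
  let B : MvPolynomial (Fin m ⊕ Fin n) ℂ := ∑ α : S, rename Sum.inl (P ((e S).symm (Sum.inr α))) *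
    rename Sum.inr (monomial (α : Fin n →₀ ℕ) (1 : ℂ))
  have hAB : ∀ x ∈ V, ∀ y ∈ W, eval (Sum.elim x y) A + eval (Sum.elim x y) B * f (x, y) = 0 := by
    intro x hx y hy
    have h3 := hc ⟨x, hx⟩ ⟨y, hy⟩
    have h4 : ∑ i, eval x (P i) * g S i ⟨x, hx⟩ ⟨y, hy⟩ = 0 := by
      have := congrArg (fun t => eval x Q * t) h3
      simp only [Finset.mul_sum, mul_zero] at this
      rw [← this]
      apply Finset.sum_congr rfl
      intro i _
      rw [← hQP i ⟨x, hx⟩]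
      ring
    rw [← (e S).symm.sum_comp, Fintype.sum_sum_type] at h4
    simp only [g, g₀, Equiv.apply_symm_apply, Sum.elim_inl, Sum.elim_inr] at h4
    rw [← h4]
    simp only [A, B, map_sum, map_mul, eval_rename, Sum.elim_comp_inl, Sum.elim_comp_inr,
      Finset.sum_mul]
    congr 1
    apply Finset.sum_congr rfl
    intro i _
    ring
  refine ⟨-A, B, ?_, ?_⟩
  · intro hB0
    have hA0 : A = 0 := by
      have hO : IsOpen {w : Fin m ⊕ Fin n → ℂ | w ∘ Sum.inl ∈ V ∧ w ∘ Sum.inr ∈ W} :=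
        (hV.preimage (by fun_prop)).inter (hW.preimage (by fun_prop))
      obtain ⟨x, hx⟩ := hVne
      obtain ⟨y, hy⟩ := hWne
      apply aux_zero _ hO ⟨Sum.elim x y, by simpa using hx, by simpa using hy⟩
      rintro w ⟨hw1, hw2⟩
      have := hAB _ hw1 _ hw2
      rwa [hB0, map_zero, zero_mul, add_zero, Sum.elim_comp_inl_inr] at this
    apply hPi
    have e1 : i₀ = (e S).symm (e S i₀) := by simp
    rw [e1]
    rcases e S i₀ with α | α
    · exact aux_indep S (fun α => P ((e S).symm (Sum.inl α))) hA0 α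
    · exact aux_indep S (fun α => P ((e S).symm (Sum.inr α))) hB0 α
  · intro x hx y hy
    rw [map_neg]
    linear_combination hAB x hx y hy


/-- **Proposition 9.3** (case of affine spaces). Let `V ⊆ ℂᵐ`, `W ⊆ ℂⁿ` be nonempty
connected open sets and `f : V × W → ℂ` a holomorphic function that is regular in each
variable separately. Then `f` is regular on `V × W`. -/
theorem separately_regular_holomorphic_is_regular_complex
    (m n : ℕ) (V : Set (Fin m → ℂ)) (W : Set (Fin n → ℂ))
    (hVopen : IsOpen V) (hVne : V.Nonempty) (hVconn : IsConnected V)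
    (hWopen : IsOpen W) (hWne : W.Nonempty) (hWconn : IsConnected W)
    (f : (Fin m → ℂ) × (Fin n → ℂ) → ℂ)
    (hf : DifferentiableOn ℂ f (V ×ˢ W))
    (h1 : ∀ x ∈ V, ∀ y ∈ W, ∃ p q : MvPolynomial (Fin n) ℂ, eval y q ≠ 0 ∧
      ∀ y' ∈ W, eval y' q ≠ 0 → f (x, y') = eval y' p / eval y' q)
    (h2 : ∀ y ∈ W, ∀ x ∈ V, ∃ p q : MvPolynomial (Fin m) ℂ, eval x q ≠ 0 ∧
      ∀ x' ∈ V, eval x' q ≠ 0 → f (x', y) = eval x' p / eval x' q) :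
    ∀ z ∈ V ×ˢ W, ∃ p q : MvPolynomial (Fin m ⊕ Fin n) ℂ,
      eval (Sum.elim z.1 z.2) q ≠ 0 ∧
      ∀ z' ∈ V ×ˢ W, eval (Sum.elim z'.1 z'.2) q ≠ 0 →
        f z' = eval (Sum.elim z'.1 z'.2) p / eval (Sum.elim z'.1 z'.2) q := by
  have hc := hf.continuousOn
  obtain ⟨A, B, hB, hAB⟩ := aux_global m n V W hVopen hVne hWopen hWne f
    (fun x hx => auxA_of_reg W hWopen hWne (fun y => f (x, y))
      (hc.comp (by fun_prop) (fun y hy => ⟨hx, hy⟩)) (h1 x hx))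
    (fun y hy => auxA_of_reg V hVopen hVne (fun x => f (x, y))
      (hc.comp (by fun_prop) (fun x hx => ⟨hx, hy⟩)) (h2 y hy))
  rintro ⟨x, y⟩ ⟨hx, hy⟩
  have hO : IsOpen {w : Fin m ⊕ Fin n → ℂ | w ∘ Sum.inl ∈ V ∧ w ∘ Sum.inr ∈ W} :=
    (hVopen.preimage (by fun_prop)).inter (hWopen.preimage (by fun_prop))
  obtain ⟨p, q, hq, hpq⟩ := aux_reg _ hO (Sum.elim x y)
    ⟨by simpa using hx, by simpa using hy⟩ B hB (fun w => f (w ∘ Sum.inl, w ∘ Sum.inr))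
    (hc.comp (by fun_prop) (fun w hw => ⟨hw.1, hw.2⟩)) A (by
      rintro w ⟨hw1, hw2⟩
      have := hAB _ hw1 _ hw2
      rwa [Sum.elim_comp_inl_inr] at this)
  refine ⟨p, q, hq, ?_⟩
  rintro ⟨x', y'⟩ ⟨hx', hy'⟩ hne
  have := hpq (Sum.elim x' y') ⟨by simpa using hx', by simpa using hy'⟩
  simp only [Sum.elim_comp_inl, Sum.elim_comp_inr] at this
  rw [eq_div_iff hne, ← this]
  ring
end
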